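/- arXiv:2302.03010 — 4 statements merged into one kernel-verified Lean document; each statement's English description precedes it below -/
import Mathlib

section
/- Let μ₁ and ν₁ be σ-finite measures on a measurable space S. If the Poisson point processes PPP(μ₁) and PPP(ν₁) have the same law, then μ₁ = ν₁. More generally, if μ and ν are random measures on a Polish space S and PPP(μ) has the same law as PPP(ν) (as Cox processes), then μ and ν have the same law. -/
open MeasureTheory

/-- `e^{-x}` for `x : ℝ≥0∞`, with `e^{-∞} = 0`. -/
noncomputable def expNeg (x : ENNReal) : ENNReal :=
  if x = ⊤ then 0 else ENNReal.ofReal (Real.exp (-x.toReal))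

/-- `η` is a Cox process (Poisson point process with random intensity) directed by the random
measure `μ`, characterized by its Laplace functional:
`E[exp(-⟨η, f⟩)] = E[exp(-∫ (1 - e^{-f}) dμ)]` for all measurable `f ≥ 0`. -/
def IsCoxProcess {Ω S : Type*} [MeasurableSpace Ω] [MeasurableSpace S]
    (P : Measure Ω) (η μ : Ω → Measure S) : Prop :=
  ∀ f : S → ENNReal, Measurable f →
    ∫⁻ ω, expNeg (∫⁻ x, f x ∂(η ω)) ∂P
      = ∫⁻ ω, expNeg (∫⁻ x, (1 - expNeg (f x)) ∂(μ ω)) ∂P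

/-! A random measure is determined by its Laplace functional `g ↦ 𝔼 e^{-⟨m, g⟩}` on bounded `g`,
because the functions `x ↦ e^{-⟨k, x⟩}` are closed under products and separate the points of
`[0, ∞]^n`, hence determine the joint law of `(m A₁, …, m Aₙ)`. The law of the Cox process
determines the Laplace functional of its directing measure at every `g = 1 - e^{-f}`, that is, at
every `g ≤ 1`. If `g` is bounded, then `t g ≤ 1` for small `t > 0`, and these `t` determine the
value at `t = 1` of the function `t ↦ 𝔼 e^{-t ⟨m, g⟩}`, which is analytic on `(0, ∞)`.
-/

open Filter ProbabilityTheory Set Topology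
open scoped BoundedContinuousFunction ENNReal NNReal

section ExpNeg

lemma expNeg_eq_exp_neg (x : ℝ≥0∞) : expNeg x = EReal.exp (-(x : EReal)) := by
  induction x with
  | top => simp [expNeg]
  | coe r =>
    rw [show (-((r : ℝ≥0∞) : EReal)) = ((-(r : ℝ) : ℝ) : EReal) from rfl, EReal.exp_coe]
    simp [expNeg]

lemma expNeg_top : expNeg ∞ = 0 := by simp [expNeg]

lemma expNeg_zero : expNeg 0 = 1 := by simp [expNeg]

lemma expNeg_ofReal {r : ℝ} (hr : 0 ≤ r) :
    expNeg (ENNReal.ofReal r) = ENNReal.ofReal (Real.exp (-r)) := by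
  simp [expNeg, hr]

lemma expNeg_le_one (x : ℝ≥0∞) : expNeg x ≤ 1 := by
  simp [expNeg_eq_exp_neg, EReal.coe_ennreal_nonneg]

lemma expNeg_ne_top (x : ℝ≥0∞) : expNeg x ≠ ∞ :=
  ne_top_of_le_ne_top ENNReal.one_ne_top (expNeg_le_one x)

lemma continuous_expNeg : Continuous expNeg := by
  simp_rw [funext expNeg_eq_exp_neg]
  exact ENNReal.continuous_exp.comp (continuous_neg.comp continuous_coe_ennreal_ereal)

lemma expNeg_injective : Function.Injective expNeg := fun x y h => by
  simpa [expNeg_eq_exp_neg, EReal.exp_strictMono.injective.eq_iff] using h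

lemma expNeg_add (x y : ℝ≥0∞) : expNeg (x + y) = expNeg x * expNeg y := by
  simp only [expNeg_eq_exp_neg, EReal.coe_ennreal_add, ← EReal.exp_add]
  rw [EReal.neg_add (by simp) (by simp), sub_eq_add_neg]

lemma exists_measurable_one_sub_expNeg_eq {S : Type*} [MeasurableSpace S] {g : S → ℝ≥0∞}
    (hg : Measurable g) (hg_le : ∀ x, g x ≤ 1) :
    ∃ f : S → ℝ≥0∞, Measurable f ∧ (fun x => 1 - expNeg (f x)) = g := by
  refine ⟨fun x => (-ENNReal.log (1 - g x)).toENNReal, by fun_prop, funext fun x => ?_⟩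
  have log_nonpos : ENNReal.log (1 - g x) ≤ 0 := ENNReal.log_le_zero_iff.2 tsub_le_self
  rw [expNeg_eq_exp_neg, EReal.coe_toENNReal (EReal.neg_nonneg.2 log_nonpos), neg_neg,
    ENNReal.exp_log, ENNReal.sub_sub_cancel ENNReal.one_ne_top (hg_le x)]

end ExpNeg

section LaplaceTransform

variable {Ω : Type*} [MeasurableSpace Ω] {P : Measure Ω} [IsFiniteMeasure P] {Z : Ω → ℝ≥0∞}

lemma integrable_exp_mul_neg_toReal (hZ : Measurable Z) {t : ℝ} (ht : 0 ≤ t) :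
    Integrable (fun ω => Real.exp (t * -(Z ω).toReal)) P :=
  integrable_exp_mul_of_le t 0 ht (by fun_prop) (ae_of_all _ fun ω => by simp)

lemma Ioi_subset_interior_integrableExpSet_neg_toReal (hZ : Measurable Z) :
    Ioi 0 ⊆ interior (integrableExpSet (fun ω => -(Z ω).toReal) P) :=
  interior_maximal (fun _ ht => integrable_exp_mul_neg_toReal hZ (le_of_lt ht)) isOpen_Ioi

-- The event `Z = ∞` contributes nothing on the left, whereas `(∞ : ℝ≥0∞).toReal = 0`.
lemma lintegral_expNeg_mul_eq_mgf (hZ : Measurable Z) {t : ℝ} (ht : 0 < t) :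
    ∫⁻ ω, expNeg (ENNReal.ofReal t * Z ω) ∂P
      = ENNReal.ofReal (mgf (fun ω => -(Z ω).toReal) (P.restrict {ω | Z ω ≠ ∞}) t) := by
  have hfin : MeasurableSet {ω | Z ω ≠ ∞} := hZ (measurableSet_singleton ∞).compl
  rw [mgf, ofReal_integral_eq_lintegral_ofReal (integrable_exp_mul_neg_toReal hZ ht.le)
    (ae_of_all _ fun ω => (Real.exp_pos _).le), ← lintegral_indicator hfin]
  refine lintegral_congr fun ω => ?_
  by_cases hω : Z ω = ∞
  · simp [hω, ENNReal.mul_top, ht, expNeg_top]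
  · rw [indicator_of_mem (show ω ∈ {ω | Z ω ≠ ∞} from hω), ← ENNReal.ofReal_toReal hω,
      ← ENNReal.ofReal_mul ht.le, expNeg_ofReal (by positivity),
      ENNReal.toReal_ofReal ENNReal.toReal_nonneg, mul_neg]

lemma lintegral_expNeg_eq_of_eventually_mul {Ω' : Type*} [MeasurableSpace Ω'] {P' : Measure Ω'}
    [IsFiniteMeasure P'] {Z' : Ω' → ℝ≥0∞} (hZ : Measurable Z) (hZ' : Measurable Z')
    (h : ∀ᶠ t : ℝ in 𝓝[>] 0, ∫⁻ ω, expNeg (ENNReal.ofReal t * Z ω) ∂P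
      = ∫⁻ ω, expNeg (ENNReal.ofReal t * Z' ω) ∂P') :
    ∫⁻ ω, expNeg (Z ω) ∂P = ∫⁻ ω, expNeg (Z' ω) ∂P' := by
  obtain ⟨ε, ε_pos, hε⟩ := mem_nhdsGT_iff_exists_Ioo_subset.1 h
  rw [mem_Ioi] at ε_pos
  have mgf_eq : EqOn (mgf (fun ω => -(Z ω).toReal) (P.restrict {ω | Z ω ≠ ∞}))
      (mgf (fun ω => -(Z' ω).toReal) (P'.restrict {ω | Z' ω ≠ ∞})) (Ioi 0) := by
    refine AnalyticOnNhd.eqOn_of_preconnected_of_eventuallyEq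
      (analyticOnNhd_mgf.mono (Ioi_subset_interior_integrableExpSet_neg_toReal hZ))
      (analyticOnNhd_mgf.mono (Ioi_subset_interior_integrableExpSet_neg_toReal hZ'))
      isPreconnected_Ioi (half_pos ε_pos) ?_
    filter_upwards [Ioo_mem_nhds (half_pos ε_pos) (half_lt_self ε_pos)] with t ht
    simpa only [mem_ofPred_eq, lintegral_expNeg_mul_eq_mgf hZ ht.1,
      lintegral_expNeg_mul_eq_mgf hZ' ht.1,
      ENNReal.ofReal_eq_ofReal_iff mgf_nonneg mgf_nonneg] using hε ht
  calc ∫⁻ ω, expNeg (Z ω) ∂P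
      = ENNReal.ofReal (mgf (fun ω => -(Z ω).toReal) (P.restrict {ω | Z ω ≠ ∞}) 1) := by
        simpa using lintegral_expNeg_mul_eq_mgf (P := P) hZ one_pos
    _ = ENNReal.ofReal (mgf (fun ω => -(Z' ω).toReal) (P'.restrict {ω | Z' ω ≠ ∞}) 1) := by
        rw [mgf_eq (mem_Ioi.2 one_pos)]
    _ = ∫⁻ ω, expNeg (Z' ω) ∂P' := by
        simpa using (lintegral_expNeg_mul_eq_mgf (P := P') hZ' one_pos).symm

end LaplaceTransform

section MultiplicativeClass

lemma integral_eq_of_mem_span {E : Type*} [TopologicalSpace E] [MeasurableSpace E]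
    [OpensMeasurableSpace E] {P Q : Measure E} [IsFiniteMeasure P] [IsFiniteMeasure Q]
    {M : Set (E →ᵇ ℝ)} (h : ∀ f ∈ M, ∫ x, f x ∂P = ∫ x, f x ∂Q) {f : E →ᵇ ℝ}
    (hf : f ∈ Submodule.span ℝ M) : ∫ x, f x ∂P = ∫ x, f x ∂Q := by
  induction hf using Submodule.span_induction with
  | mem f hf => exact h f hf
  | zero => simp
  | add f g _ _ hf hg =>
    simp only [BoundedContinuousFunction.add_apply]
    rw [integral_add (f.integrable P) (g.integrable P),
      integral_add (f.integrable Q) (g.integrable Q), hf, hg]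
  | smul c f _ hf =>
    simp only [BoundedContinuousFunction.smul_apply, integral_smul, hf]

lemma ext_of_forall_mem_submonoid_integral_eq {E : Type*} [TopologicalSpace E] [PolishSpace E]
    [MeasurableSpace E] [BorelSpace E] {P Q : Measure E} [IsFiniteMeasure P] [IsFiniteMeasure Q]
    (M : Submonoid (E →ᵇ ℝ)) (separates : ∀ x y, x ≠ y → ∃ f ∈ M, f x ≠ f y)
    (h : ∀ f ∈ M, ∫ x, f x ∂P = ∫ x, f x ∂Q) : P = Q := by
  let A : StarSubalgebra ℝ (E →ᵇ ℝ) := StarAlgebra.adjoin ℝ (M : Set (E →ᵇ ℝ))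
  have star_coe : star (M : Set (E →ᵇ ℝ)) = M := by
    ext f
    rw [Set.mem_star, show star f = f from BoundedContinuousFunction.ext fun x => star_trivial _]
  refine ext_of_forall_mem_subalgebra_integral_eq_of_polish (𝕜 := ℝ) (A := A) ?_ fun f hf => ?_
  · intro x y hxy
    obtain ⟨f, hfM, hf⟩ := separates x y hxy
    exact ⟨f, ⟨f.toContinuousMap, ⟨f, StarAlgebra.subset_adjoin ℝ _ hfM, rfl⟩, rfl⟩, hf⟩
  · refine integral_eq_of_mem_span h ?_
    have hf_span : f ∈ Subalgebra.toSubmodule A.toSubalgebra := hf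
    rwa [StarAlgebra.adjoin_eq_span, star_coe, union_self, Submonoid.closure_eq] at hf_span

end MultiplicativeClass

section FiniteDimensional

variable {ι : Type*} [Fintype ι]

lemma continuous_expNeg_sum_mul (k : ι → ℝ≥0) :
    Continuous fun x : ι → ℝ≥0∞ => expNeg (∑ i, k i * x i) :=
  continuous_expNeg.comp <| continuous_finsetSum _ fun i _ =>
    (ENNReal.continuous_const_mul ENNReal.coe_ne_top).comp (continuous_apply i)

/-- The function `x ↦ e^{-⟨k, x⟩}` on `[0, ∞]^ι`, the test function of the multivariate Laplace
transform. The coefficients are finite since multiplication by `∞` is not continuous. -/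
noncomputable def expNegLinear (k : ι → ℝ≥0) : (ι → ℝ≥0∞) →ᵇ ℝ :=
  BoundedContinuousFunction.mkOfCompact
    ⟨fun x => (expNeg (∑ i, k i * x i)).toReal,
      ENNReal.continuousOn_toReal.comp_continuous (continuous_expNeg_sum_mul k)
        fun _ => expNeg_ne_top _⟩

lemma expNegLinear_apply (k : ι → ℝ≥0) (x : ι → ℝ≥0∞) :
    expNegLinear k x = (expNeg (∑ i, k i * x i)).toReal := rfl

lemma expNegLinear_zero : expNegLinear (0 : ι → ℝ≥0) = 1 := by
  ext x
  simp [expNegLinear_apply, expNeg_zero]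

lemma expNegLinear_add (k l : ι → ℝ≥0) :
    expNegLinear (k + l) = expNegLinear k * expNegLinear l := by
  ext x
  simp [expNegLinear_apply, add_mul, Finset.sum_add_distrib, expNeg_add]

lemma exists_expNegLinear_ne {x y : ι → ℝ≥0∞} (hxy : x ≠ y) :
    ∃ k, expNegLinear k x ≠ expNegLinear k y := by
  classical
  obtain ⟨i, hi⟩ := Function.ne_iff.1 hxy
  refine ⟨Pi.single i 1, fun h => hi (expNeg_injective ?_)⟩
  simpa [expNegLinear_apply, Pi.single_apply, apply_ite, ite_mul,
    ENNReal.toReal_eq_toReal_iff' (expNeg_ne_top _) (expNeg_ne_top _)] using h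

lemma integral_expNegLinear (P : Measure (ι → ℝ≥0∞)) (k : ι → ℝ≥0) :
    ∫ x, expNegLinear k x ∂P = (∫⁻ x, expNeg (∑ i, k i * x i) ∂P).toReal :=
  integral_toReal (continuous_expNeg_sum_mul k).measurable.aemeasurable
    (ae_of_all _ fun _ => (expNeg_ne_top _).lt_top)

lemma ext_of_lintegral_expNeg_sum_mul_eq {P Q : Measure (ι → ℝ≥0∞)} [IsFiniteMeasure P]
    [IsFiniteMeasure Q] (h : ∀ k : ι → ℝ≥0,
      ∫⁻ x, expNeg (∑ i, k i * x i) ∂P = ∫⁻ x, expNeg (∑ i, k i * x i) ∂Q) : P = Q := by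
  let M : Submonoid ((ι → ℝ≥0∞) →ᵇ ℝ) :=
    { carrier := range expNegLinear
      one_mem' := ⟨0, expNegLinear_zero⟩
      mul_mem' := by
        rintro _ _ ⟨k, rfl⟩ ⟨l, rfl⟩
        exact ⟨k + l, expNegLinear_add k l⟩ }
  refine ext_of_forall_mem_submonoid_integral_eq M (fun x y hxy => ?_) ?_
  · obtain ⟨k, hk⟩ := exists_expNegLinear_ne hxy
    exact ⟨expNegLinear k, mem_range_self k, hk⟩
  · rintro _ ⟨k, rfl⟩
    rw [integral_expNegLinear, integral_expNegLinear, h k]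

end FiniteDimensional

section RandomMeasure

variable {S : Type*} [MeasurableSpace S]

/-- The family of all values `(m A)_A` of a measure `m` on measurable sets, which turns a random
measure into a stochastic process indexed by the measurable sets. -/
def measureValues (m : Measure S) : {A : Set S // MeasurableSet A} → ℝ≥0∞ := fun A => m A

lemma measurable_measureValues : Measurable (measureValues (S := S)) :=
  measurable_pi_lambda _ fun A => Measure.measurable_coe A.2

lemma comap_measureValues :
    MeasurableSpace.pi.comap measureValues = (Measure.instMeasurableSpace (α := S)) := by
  simp only [MeasurableSpace.pi, MeasurableSpace.comap_iSup, MeasurableSpace.comap_comp,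
    Measure.instMeasurableSpace, iSup_subtype]
  rfl

lemma ext_of_map_measureValues_eq {Q Q' : Measure (Measure S)}
    (h : Q.map measureValues = Q'.map measureValues) : Q = Q' := by
  ext B hB
  rw [← comap_measureValues] at hB
  obtain ⟨C, hC, rfl⟩ := hB
  rw [← Measure.map_apply measurable_measureValues hC, h,
    Measure.map_apply measurable_measureValues hC]

/-- The Laplace functional `f ↦ 𝔼 e^{-⟨m, f⟩}` of a random measure `m` with law `Q`. -/
noncomputable def laplaceFunctional (Q : Measure (Measure S)) (f : S → ℝ≥0∞) : ℝ≥0∞ :=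
  ∫⁻ m, expNeg (∫⁻ x, f x ∂m) ∂Q

lemma laplaceFunctional_map {Ω : Type*} [MeasurableSpace Ω] {P : Measure Ω} {μ : Ω → Measure S}
    (hμ : AEMeasurable μ P) {f : S → ℝ≥0∞} (hf : Measurable f) :
    laplaceFunctional (P.map μ) f = ∫⁻ ω, expNeg (∫⁻ x, f x ∂(μ ω)) ∂P :=
  lintegral_map' (continuous_expNeg.measurable.comp (Measure.measurable_lintegral hf)).aemeasurable
    hμ

lemma IsCoxProcess.laplaceFunctional_map_eq {Ω : Type*} [MeasurableSpace Ω] {P : Measure Ω}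
    {η μ : Ω → Measure S} (h : IsCoxProcess P η μ) (hη : AEMeasurable η P) (hμ : AEMeasurable μ P)
    {f : S → ℝ≥0∞} (hf : Measurable f) :
    laplaceFunctional (P.map η) f = laplaceFunctional (P.map μ) fun x => 1 - expNeg (f x) := by
  rw [laplaceFunctional_map hη hf, h f hf, laplaceFunctional_map hμ]
  exact measurable_const.sub (continuous_expNeg.measurable.comp hf)

variable {Q Q' : Measure (Measure S)} [IsFiniteMeasure Q] [IsFiniteMeasure Q']

lemma laplaceFunctional_eq_of_forall_le_one
    (h : ∀ g : S → ℝ≥0∞, Measurable g → (∀ x, g x ≤ 1) →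
      laplaceFunctional Q g = laplaceFunctional Q' g)
    {g : S → ℝ≥0∞} (hg : Measurable g) {c : ℝ≥0} (hgc : ∀ x, g x ≤ c) :
    laplaceFunctional Q g = laplaceFunctional Q' g := by
  have small : ∀ᶠ t : ℝ in 𝓝[>] 0, ENNReal.ofReal t * c < 1 := by
    have tendsto_zero : Tendsto (fun t : ℝ => ENNReal.ofReal t * c) (𝓝 0) (𝓝 0) := by
      simpa using ENNReal.Tendsto.mul_const (b := (c : ℝ≥0∞))
        (ENNReal.tendsto_ofReal (tendsto_id (x := 𝓝 (0 : ℝ)))) (.inr ENNReal.coe_ne_top)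
    exact nhdsWithin_le_nhds (tendsto_zero.eventually_lt_const one_pos)
  refine lintegral_expNeg_eq_of_eventually_mul (Measure.measurable_lintegral hg)
    (Measure.measurable_lintegral hg) ?_
  filter_upwards [small] with t ht
  simp_rw [← lintegral_const_mul _ hg]
  exact h _ (hg.const_mul _) fun x => (mul_le_mul_right (hgc x) _).trans ht.le

lemma lintegral_sum_mul_indicator_one {ι : Type*} [Fintype ι] (k : ι → ℝ≥0) {A : ι → Set S}
    (hA : ∀ i, MeasurableSet (A i)) (m : Measure S) :
    ∫⁻ x, ∑ i, k i * (A i).indicator 1 x ∂m = ∑ i, k i * m (A i) := by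
  rw [lintegral_finsetSum _ fun i _ => (measurable_one.indicator (hA i)).const_mul _]
  refine Finset.sum_congr rfl fun i _ => ?_
  rw [lintegral_const_mul _ (measurable_one.indicator (hA i)), lintegral_indicator_one (hA i)]

lemma ext_of_laplaceFunctional_eq
    (h : ∀ g : S → ℝ≥0∞, Measurable g → ∀ c : ℝ≥0, (∀ x, g x ≤ c) →
      laplaceFunctional Q g = laplaceFunctional Q' g) : Q = Q' := by
  refine ext_of_map_measureValues_eq <| IsProjectiveLimit.unique
    (P := fun I => (Q'.map measureValues).map I.restrict) (fun I => ?_) fun I => rfl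
  refine ext_of_lintegral_expNeg_sum_mul_eq fun k => ?_
  have transform_eq (R : Measure (Measure S)) :
      ∫⁻ x, expNeg (∑ i, k i * x i) ∂((R.map measureValues).map I.restrict)
        = laplaceFunctional R fun x => ∑ i, k i * (i.1.1).indicator 1 x := by
    rw [Measure.map_map (Finset.measurable_restrict I) measurable_measureValues,
      lintegral_map (continuous_expNeg_sum_mul k).measurable
        ((Finset.measurable_restrict I).comp measurable_measureValues)]
    simp only [laplaceFunctional, lintegral_sum_mul_indicator_one k fun i : I => i.1.2]
    rfl
  rw [transform_eq, transform_eq]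
  refine h _ ?_ (∑ i, k i) fun x => ?_
  · exact Finset.measurable_sum _ fun i _ => (measurable_one.indicator i.1.2).const_mul _
  · push_cast
    exact Finset.sum_le_sum fun i _ =>
      mul_le_of_le_one_right' (indicator_le_self' (fun _ _ => zero_le) x)

end RandomMeasure

theorem law_eq_of_cox_law_eq_general {Ω₁ Ω₂ S : Type*} [MeasurableSpace Ω₁] [MeasurableSpace Ω₂]
    [MeasurableSpace S] {P₁ : Measure Ω₁} {P₂ : Measure Ω₂} [IsFiniteMeasure P₁]
    [IsFiniteMeasure P₂] {η₁ μ : Ω₁ → Measure S} {η₂ ν : Ω₂ → Measure S}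
    (hη₁ : AEMeasurable η₁ P₁) (hη₂ : AEMeasurable η₂ P₂) (hμ : AEMeasurable μ P₁)
    (hν : AEMeasurable ν P₂) (h₁ : IsCoxProcess P₁ η₁ μ) (h₂ : IsCoxProcess P₂ η₂ ν)
    (hlaw : P₁.map η₁ = P₂.map η₂) : P₁.map μ = P₂.map ν := by
  refine ext_of_laplaceFunctional_eq fun u hu c huc =>
    laplaceFunctional_eq_of_forall_le_one (fun g hg hg_le => ?_) hu huc
  obtain ⟨f, hf, rfl⟩ := exists_measurable_one_sub_expNeg_eq hg hg_le
  rw [← h₁.laplaceFunctional_map_eq hη₁ hμ hf, hlaw, h₂.laplaceFunctional_map_eq hη₂ hν hf]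

/-- If the Cox processes `PPP(μ)` and `PPP(ν)` directed by random measures `μ, ν` on a Polish
space have the same law, then `μ` and `ν` have the same law.  (In particular, for deterministic
σ-finite intensities, equality in law of the Poisson point processes forces equality of the
intensity measures.) -/
theorem law_eq_of_cox_law_eq {Ω₁ Ω₂ S : Type*} [MeasurableSpace Ω₁] [MeasurableSpace Ω₂]
    [MeasurableSpace S] [TopologicalSpace S] [PolishSpace S] [BorelSpace S]
    (P₁ : Measure Ω₁) (P₂ : Measure Ω₂) [IsProbabilityMeasure P₁] [IsProbabilityMeasure P₂]
    (η₁ μ : Ω₁ → Measure S) (η₂ ν : Ω₂ → Measure S)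
    (hη₁ : Measurable η₁) (hη₂ : Measurable η₂) (hμ : Measurable μ) (hν : Measurable ν)
    (h₁ : IsCoxProcess P₁ η₁ μ) (h₂ : IsCoxProcess P₂ η₂ ν)
    (hlaw : Measure.map η₁ P₁ = Measure.map η₂ P₂) :
    Measure.map μ P₁ = Measure.map ν P₂ :=
  law_eq_of_cox_law_eq_general hη₁.aemeasurable hη₂.aemeasurable hμ.aemeasurable hν.aemeasurable
    h₁ h₂ hlaw
end

section
/- Let m ∈ ℕ, σ > 0 and g : ℝ² → ℝ be continuous with compact support. For every ε > 0 there exists δ > 0 such that: for any n ≤ m, any reals z_1,…,z_n, w_1,…,w_n, and any centered Gaussian vector X = (X_1,…,X_n) with max_{i,j} |Cov(X_i,X_j) − σ²δ_{ij}| < δ, one has |log( E exp(∑_{i=1}^n g(z_i + X_i, w_i)) / E exp(∑_{i=1}^n g(z_i + Y_i, w_i)) )| < ε, where Y = (Y_1,…,Y_n) consists of i.i.d. N(0,σ²) variables. -/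
open MeasureTheory ProbabilityTheory

/-- A probability measure on `Fin n → ℝ` is a centered Gaussian law if each linear combination
of coordinates is a centered real Gaussian (with its own variance). -/
def IsCenteredGaussianLaw {n : ℕ} (ν : Measure (Fin n → ℝ)) : Prop :=
  ∀ a : Fin n → ℝ, Measure.map (fun x => ∑ i, a i * x i) ν
    = gaussianReal 0 (Real.toNNReal (∫ x, (∑ i, a i * x i) ^ 2 ∂ν))

/-!
A centered Gaussian vector `X` with covariance matrix `S` is coupled to `Y` by writing `X = √S N`
and `Y = σ N` with the same standard Gaussian `N`, so that `E ‖X - Y‖² = tr (√S - σ)²`. Since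
`S - σ² = (√S - σ) (√S + σ)` and `√S + σ ≥ σ`, this is at most `σ⁻² tr (S - σ²)²`, which is small
when the entries of `S - σ²` are. A bounded uniformly continuous `g` satisfies
`|g u - g v| ≤ a + C |u - v|²` with `a` as small as desired, so the `L²` coupling controls the
difference of the two exponential moments; both are bounded away from `0`, which gives the bound
on the logarithm of their ratio.
-/

open Matrix WithLp
open scoped NNReal RealInnerProductSpace MatrixOrder Topology

section RealEstimates

lemma abs_exp_sub_exp_le {a b B : ℝ} (ha : a ≤ B) (hb : b ≤ B) :
    |Real.exp a - Real.exp b| ≤ Real.exp B * |a - b| :=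
  (convex_Iic B).norm_image_sub_le_of_norm_deriv_le
    (fun _ _ => Real.differentiableAt_exp)
    (fun x hx => by simpa [abs_of_pos (Real.exp_pos x)] using hx) hb ha

lemma abs_log_div_le {P Q k : ℝ} (hk : 0 < k) (hP : k ≤ P) (hQ : k ≤ Q) :
    |Real.log (P / Q)| ≤ |P - Q| / k := by
  have hpos : ∀ x ∈ Set.Ici k, 0 < x := fun x hx => hk.trans_le hx
  rw [Real.log_div (hpos P hP).ne' (hpos Q hQ).ne', div_eq_inv_mul]
  refine (convex_Ici k).norm_image_sub_le_of_norm_deriv_le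
    (fun x hx => Real.differentiableAt_log (hpos x hx).ne') (fun x hx => ?_) hQ hP
  rw [Real.deriv_log, norm_inv, Real.norm_of_nonneg (hpos x hx).le]
  exact inv_anti₀ hk hx

lemma exists_pos_lt_of_continuousAt_zero {φ : ℝ → ℝ} {ε : ℝ} (hφ : ContinuousAt φ 0) (h : φ 0 < ε) :
    ∃ t, 0 < t ∧ φ t < ε := by
  have hev : ∀ᶠ t in 𝓝[>] 0, φ t < ε := (hφ.eventually_lt_const h).filter_mono nhdsWithin_le_nhds
  exact (hev.and self_mem_nhdsWithin).exists.imp fun t ht => ht.symm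

lemma uniformEquicontinuous_of_uniformContinuous_uncurry {α β γ : Type*} [UniformSpace α]
    [UniformSpace β] [UniformSpace γ] {g : α → γ → β}
    (hg : UniformContinuous (Function.uncurry g)) : UniformEquicontinuous fun w u => g u w := by
  intro U hU
  obtain ⟨V, hV, V', hV', hsub⟩ := entourageProd_subset (hg hU)
  filter_upwards [hV] with p hp w
  exact hsub (show ((p.1, w), (p.2, w)) ∈ entourageProd V V' from ⟨hp, refl_mem_uniformity hV'⟩)

lemma exists_dist_le_add_mul_dist_sq {ι α β : Type*}
    [PseudoMetricSpace α] [PseudoMetricSpace β] {f : ι → α → β} {D : ℝ}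
    (hf : UniformEquicontinuous f) (hD : ∀ i u v, dist (f i u) (f i v) ≤ D) {ε : ℝ} (hε : 0 < ε) :
    ∃ C, 0 ≤ C ∧ ∀ i u v, dist (f i u) (f i v) ≤ ε + C * dist u v ^ 2 := by
  obtain ⟨η, hη, hclose⟩ := Metric.uniformEquicontinuous_iff.1 hf ε hε
  refine ⟨max D 0 / η ^ 2, by positivity, fun i u v => ?_⟩
  rcases lt_or_ge (dist u v) η with huv | huv
  · exact (hclose u v huv i).le.trans (le_add_of_nonneg_right (by positivity))
  · have hsq : 1 ≤ dist u v ^ 2 / η ^ 2 := (one_le_div₀ (by positivity)).2 (by gcongr)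
    calc dist (f i u) (f i v) ≤ max D 0 * 1 := by simp [hD i u v]
      _ ≤ max D 0 * (dist u v ^ 2 / η ^ 2) := by gcongr
      _ ≤ ε + max D 0 / η ^ 2 * dist u v ^ 2 := by rw [mul_div_assoc', mul_div_right_comm]; linarith

end RealEstimates

lemma abs_log_integral_exp_div_le {Ω : Type*} [MeasurableSpace Ω] {μ : Measure Ω}
    [IsProbabilityMeasure μ] {f₁ f₂ : Ω → ℝ} {B : ℝ}
    (hf₁ : AEStronglyMeasurable f₁ μ) (hf₂ : AEStronglyMeasurable f₂ μ)
    (hB₁ : ∀ x, |f₁ x| ≤ B) (hB₂ : ∀ x, |f₂ x| ≤ B) :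
    |Real.log ((∫ x, Real.exp (f₁ x) ∂μ) / ∫ x, Real.exp (f₂ x) ∂μ)|
      ≤ Real.exp (2 * B) * ∫ x, |f₁ x - f₂ x| ∂μ := by
  have hint {f : Ω → ℝ} (hf : AEStronglyMeasurable f μ) (hfB : ∀ x, |f x| ≤ B) :
      Integrable (fun x => Real.exp (f x)) μ :=
    .of_bound (Real.continuous_exp.comp_aestronglyMeasurable hf) (Real.exp B) <| .of_forall
      fun x => by
        simpa only [Real.norm_eq_abs, Real.abs_exp, Real.exp_le_exp] using le_of_abs_le (hfB x)
  have hlow {f : Ω → ℝ} (hf : AEStronglyMeasurable f μ) (hfB : ∀ x, |f x| ≤ B) :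
      Real.exp (-B) ≤ ∫ x, Real.exp (f x) ∂μ := by
    simpa using integral_mono (integrable_const (Real.exp (-B))) (hint hf hfB)
      fun x => Real.exp_le_exp.2 (neg_le_of_abs_le (hfB x))
  have hdiff : Integrable (fun x => |f₁ x - f₂ x|) μ :=
    (Integrable.of_bound hf₁ B (.of_forall hB₁)).sub (.of_bound hf₂ B (.of_forall hB₂)) |>.abs
  calc _ ≤ |(∫ x, Real.exp (f₁ x) ∂μ) - ∫ x, Real.exp (f₂ x) ∂μ| / Real.exp (-B) :=
        abs_log_div_le (Real.exp_pos _) (hlow hf₁ hB₁) (hlow hf₂ hB₂)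
    _ ≤ (∫ x, Real.exp B * |f₁ x - f₂ x| ∂μ) / Real.exp (-B) := by
        rw [← integral_sub (hint hf₁ hB₁) (hint hf₂ hB₂)]
        gcongr
        exact norm_integral_le_of_norm_le (f := fun x => Real.exp (f₁ x) - Real.exp (f₂ x))
          (hdiff.const_mul (Real.exp B)) <| .of_forall fun x =>
            abs_exp_sub_exp_le (le_of_abs_le (hB₁ x)) (le_of_abs_le (hB₂ x))
    _ = Real.exp (2 * B) * ∫ x, |f₁ x - f₂ x| ∂μ := by
        rw [integral_const_mul, Real.exp_neg, div_inv_eq_mul, two_mul, Real.exp_add]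
        ring

section Trace

variable {ι : Type*} [Fintype ι]

lemma sq_mul_trace_sub_smul_one_sq_le [DecidableEq ι] {A : Matrix ι ι ℝ} (hA : A.PosSemidef)
    {σ : ℝ} (hσ : 0 ≤ σ) :
    σ ^ 2 * ((A - σ • 1) * (A - σ • 1)).trace
      ≤ ((A * A - σ ^ 2 • 1) * (A * A - σ ^ 2 • 1)).trace := by
  set D := A - σ • (1 : Matrix ι ι ℝ)
  have hDsymm : Dᴴ = D :=
    hA.1.sub (isHermitian_one.smul (IsSelfAdjoint.all σ))
  have hfactor : (A * A - σ ^ 2 • 1) * (A * A - σ ^ 2 • 1)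
      = Dᴴ * (A * A + (2 * σ) • A) * D + σ ^ 2 • (D * D) := by
    rw [hDsymm]
    simp only [D, Matrix.sub_mul, Matrix.mul_sub, Matrix.add_mul, Matrix.mul_add, smul_sub,
      smul_add, Matrix.smul_mul, Matrix.mul_smul, Matrix.one_mul, Matrix.mul_one, smul_smul,
      Matrix.mul_assoc]
    module
  have hpos : (A * A + (2 * σ) • A).PosSemidef := by
    refine .add ?_ (hA.smul (by positivity))
    simpa only [hA.1.eq] using posSemidef_conjTranspose_mul_self A
  rw [hfactor, trace_add, trace_smul, smul_eq_mul]
  exact le_add_of_nonneg_left (hpos.conjTranspose_mul_mul_same D).trace_nonneg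

lemma trace_mul_transpose_self_le {κ : Type*} [Fintype κ] {E : Matrix ι κ ℝ} {δ : ℝ}
    (hE : ∀ i j, |E i j| ≤ δ) :
    (E * Eᵀ).trace ≤ Fintype.card ι * Fintype.card κ * δ ^ 2 := by
  calc (E * Eᵀ).trace = ∑ i, ∑ j, E i j * E i j := (sum_hadamard_eq E E).symm
    _ ≤ ∑ _i : ι, ∑ _j : κ, δ ^ 2 := by
        gcongr with i _ j
        rw [← sq]
        exact sq_le_sq.2 ((hE i j).trans (le_abs_self δ))
    _ = Fintype.card ι * Fintype.card κ * δ ^ 2 := by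
        simp only [Finset.sum_const, Finset.card_univ, nsmul_eq_mul]
        ring

lemma trace_sqrt_sub_smul_one_le [DecidableEq ι] {S : Matrix ι ι ℝ} (hS : S.PosSemidef)
    {σ δ : ℝ} (hσ : 0 < σ) (h : ∀ i j, |(S - σ ^ 2 • 1) i j| ≤ δ) :
    ((CFC.sqrt S - σ • 1) * (CFC.sqrt S - σ • 1)ᵀ).trace ≤ (Fintype.card ι * δ / σ) ^ 2 := by
  have hA : (CFC.sqrt S).PosSemidef := (CFC.sqrt_nonneg S).posSemidef
  have hAsymm : (CFC.sqrt S)ᵀ = CFC.sqrt S := hA.1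
  have hSsymm : Sᵀ = S := hS.1
  have htrace := sq_mul_trace_sub_smul_one_sq_le hA hσ.le
  rw [CFC.sqrt_mul_sqrt_self S hS.nonneg] at htrace
  have hentries := trace_mul_transpose_self_le h
  rw [transpose_sub, transpose_smul, transpose_one, hSsymm] at hentries
  rw [transpose_sub, transpose_smul, transpose_one, hAsymm, div_pow, le_div_iff₀' (by positivity)]
  exact htrace.trans (hentries.trans_eq (by ring))

end Trace

section StandardGaussian

lemma integral_inner_sq_stdGaussian {E : Type*} [NormedAddCommGroup E] [InnerProductSpace ℝ E]
    [FiniteDimensional ℝ E] [MeasurableSpace E] [BorelSpace E] (t : E) :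
    ∫ x, ⟪t, x⟫ ^ 2 ∂stdGaussian E = ‖t‖ ^ 2 := by
  have h := covarianceBilin_apply (μ := stdGaussian E) IsGaussian.memLp_two_id t t
  simpa [covarianceBilin_stdGaussian, ← sq, innerSL_apply_apply ℝ] using h.symm

variable {ι : Type*} [Fintype ι] [DecidableEq ι]

lemma integrable_norm_sq_toEuclideanCLM_stdGaussian (B : Matrix ι ι ℝ) :
    Integrable (fun x => ‖toEuclideanCLM (𝕜 := ℝ) B x‖ ^ 2)
      (stdGaussian (EuclideanSpace ℝ ι)) :=
  ((toEuclideanCLM (𝕜 := ℝ) B).comp_memLp' IsGaussian.memLp_two_id).integrable_norm_pow two_ne_zero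

lemma integral_norm_sq_toEuclideanCLM_stdGaussian (B : Matrix ι ι ℝ) :
    ∫ x, ‖toEuclideanCLM (𝕜 := ℝ) B x‖ ^ 2 ∂stdGaussian (EuclideanSpace ℝ ι)
      = (B * Bᵀ).trace := by
  have hcoord (x : EuclideanSpace ℝ ι) (i : ι) :
      (toEuclideanCLM (𝕜 := ℝ) B x) i = ⟪toLp 2 (B i), x⟫ := by
    rw [ofLp_toEuclideanCLM]
    simp [mulVec, dotProduct, PiLp.inner_apply, mul_comm]
  have hint (i : ι) : Integrable (fun x => ⟪toLp 2 (B i), x⟫ ^ 2)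
      (stdGaussian (EuclideanSpace ℝ ι)) :=
    (IsGaussian.memLp_dual _ (innerSL ℝ (toLp 2 (B i))) 2 (by simp)).integrable_sq
  simp_rw [EuclideanSpace.norm_sq_eq, hcoord, Real.norm_eq_abs, sq_abs]
  rw [integral_finsetSum _ fun i _ => hint i, ← sum_hadamard_eq]
  refine Finset.sum_congr rfl fun i _ => ?_
  rw [integral_inner_sq_stdGaussian, EuclideanSpace.real_norm_sq_eq]
  simp only [hadamard_apply, sq]

lemma multivariateGaussian_zero_mul_self {A : Matrix ι ι ℝ} (hA : A.PosSemidef) :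
    multivariateGaussian 0 (A * A)
      = (stdGaussian (EuclideanSpace ℝ ι)).map (toEuclideanCLM (𝕜 := ℝ) A) := by
  simp only [multivariateGaussian, CFC.sqrt_mul_self A hA.nonneg, zero_add]

lemma abs_log_integral_exp_multivariateGaussian_div_le {A B : Matrix ι ι ℝ}
    (hA : A.PosSemidef) (hB : B.PosSemidef) {f : EuclideanSpace ℝ ι → ℝ} {M a C : ℝ}
    (hf : Measurable f) (hM : ∀ x, |f x| ≤ M) (hfC : ∀ x y, |f x - f y| ≤ a + C * ‖x - y‖ ^ 2) :
    |Real.log ((∫ x, Real.exp (f x) ∂multivariateGaussian 0 (A * A)) /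
        ∫ x, Real.exp (f x) ∂multivariateGaussian 0 (B * B))|
      ≤ Real.exp (2 * M) * (a + C * ((A - B) * (A - B)ᵀ).trace) := by
  have htransport {T : Matrix ι ι ℝ} (hT : T.PosSemidef) :
      ∫ x, Real.exp (f x) ∂multivariateGaussian 0 (T * T)
        = ∫ x, Real.exp (f (toEuclideanCLM (𝕜 := ℝ) T x)) ∂stdGaussian (EuclideanSpace ℝ ι) := by
    rw [multivariateGaussian_zero_mul_self hT]
    exact integral_map (by fun_prop) (by fun_prop)
  have hmeas (T : Matrix ι ι ℝ) : Measurable fun x => f (toEuclideanCLM (𝕜 := ℝ) T x) := by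
    fun_prop
  have hsub (x : EuclideanSpace ℝ ι) : toEuclideanCLM (𝕜 := ℝ) A x - toEuclideanCLM (𝕜 := ℝ) B x
      = toEuclideanCLM (𝕜 := ℝ) (A - B) x := by
    rw [map_sub, _root_.sub_apply]
  have hquad := (integrable_norm_sq_toEuclideanCLM_stdGaussian (A - B)).const_mul C
  rw [htransport hA, htransport hB]
  refine (abs_log_integral_exp_div_le (hmeas A).aestronglyMeasurable (hmeas B).aestronglyMeasurable
    (fun _ => hM _) fun _ => hM _).trans ?_
  gcongr
  calc ∫ x, |f (toEuclideanCLM (𝕜 := ℝ) A x) - f (toEuclideanCLM (𝕜 := ℝ) B x)|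
          ∂stdGaussian (EuclideanSpace ℝ ι)
      ≤ ∫ x, (a + C * ‖toEuclideanCLM (𝕜 := ℝ) (A - B) x‖ ^ 2)
          ∂stdGaussian (EuclideanSpace ℝ ι) := by
        refine integral_mono_of_nonneg (.of_forall fun _ => abs_nonneg _)
          ((integrable_const a).add hquad) (.of_forall fun x => ?_)
        simpa only [hsub] using hfC (toEuclideanCLM (𝕜 := ℝ) A x) (toEuclideanCLM (𝕜 := ℝ) B x)
    _ = a + C * ((A - B) * (A - B)ᵀ).trace := by
        rw [integral_add (integrable_const a) hquad, integral_const_mul,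
          integral_norm_sq_toEuclideanCLM_stdGaussian]
        simp

end StandardGaussian

section SecondMoments

variable {ι : Type*} {ν : Measure (ι → ℝ)}

/-- The matrix of mixed second moments `∫ x i * x j` of a measure on `ι → ℝ`; for a centered law
it is the covariance matrix. -/
noncomputable def secondMomentMatrix (ν : Measure (ι → ℝ)) : Matrix ι ι ℝ :=
  .of fun i j => ∫ x, x i * x j ∂ν

lemma dotProduct_secondMomentMatrix_mulVec [Fintype ι]
    (hν : ∀ i, MemLp (fun x : ι → ℝ => x i) 2 ν) (a : ι → ℝ) :
    a ⬝ᵥ secondMomentMatrix ν *ᵥ a = ∫ x, (∑ i, a i * x i) ^ 2 ∂ν := by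
  have hint (i j : ι) : Integrable (fun x : ι → ℝ => a i * x i * (a j * x j)) ν :=
    ((hν i).const_mul (a i)).integrable_mul ((hν j).const_mul (a j))
  simp_rw [sq, Finset.sum_mul_sum]
  rw [integral_finsetSum _ fun i _ => integrable_finsetSum _ fun j _ => hint i j]
  refine Finset.sum_congr rfl fun i _ => ?_
  rw [integral_finsetSum _ fun j _ => hint i j, mulVec, dotProduct, Finset.mul_sum]
  refine Finset.sum_congr rfl fun j _ => ?_
  simp_rw [mul_mul_mul_comm (a i)]
  rw [integral_const_mul, secondMomentMatrix, of_apply]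
  ring

lemma posSemidef_secondMomentMatrix [Finite ι] (hν : ∀ i, MemLp (fun x : ι → ℝ => x i) 2 ν) :
    (secondMomentMatrix ν).PosSemidef := by
  have := Fintype.ofFinite ι
  refine .of_dotProduct_mulVec_nonneg ?_ fun a => ?_
  · ext i j
    simp only [secondMomentMatrix, conjTranspose_apply, of_apply, star_trivial, mul_comm]
  · rw [star_trivial, dotProduct_secondMomentMatrix_mulVec hν]
    exact integral_nonneg fun _ => sq_nonneg _

lemma map_toLp_pi_gaussianReal [Fintype ι] [DecidableEq ι] (v : ℝ≥0) :
    (Measure.pi fun _ : ι => gaussianReal 0 v).map (toLp 2)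
      = multivariateGaussian 0 ((v : ℝ) • 1) := by
  have hpos : ((v : ℝ) • (1 : Matrix ι ι ℝ)).PosSemidef := PosSemidef.one.smul v.2
  apply Measure.ext_of_charFun
  ext t
  rw [charFun_multivariateGaussian hpos, charFun_pi]
  simp only [charFun_gaussianReal, ← Complex.exp_sum]
  congr 1
  simp only [Complex.ofReal_zero, mul_zero, zero_mul, zero_sub, inner_zero_right, smul_mulVec,
    one_mulVec, dotProduct, Pi.smul_apply, smul_eq_mul, Complex.ofReal_sum,
    Complex.ofReal_mul, Finset.sum_div, Finset.sum_neg_distrib]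
  congr 1
  exact Finset.sum_congr rfl fun i _ => by ring

end SecondMoments

namespace IsCenteredGaussianLaw

variable {n : ℕ} {ν : Measure (Fin n → ℝ)}

lemma isGaussian (hν : IsCenteredGaussianLaw ν) : IsGaussian ν := by
  refine isGaussian_of_map_eq_gaussianReal fun L => ?_
  have hL : ⇑L = fun x : Fin n → ℝ => ∑ i, L (Pi.single i 1) * x i := by
    ext x
    conv_lhs => rw [pi_eq_sum_univ' x]
    simp only [map_sum, map_smul, smul_eq_mul, mul_comm]
  rw [hL]
  exact ⟨0, _, hν _⟩

lemma memLp_eval (hν : IsCenteredGaussianLaw ν) (i : Fin n) :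
    MemLp (fun x : Fin n → ℝ => x i) 2 ν :=
  have := hν.isGaussian
  IsGaussian.memLp_dual ν (.proj i) 2 (by simp)

lemma map_toLp_eq_multivariateGaussian (hν : IsCenteredGaussianLaw ν) :
    ν.map (toLp 2) = multivariateGaussian 0 (secondMomentMatrix ν) := by
  have := hν.isGaussian
  apply Measure.ext_of_charFun
  ext t
  calc charFun (ν.map (toLp 2)) t = charFun (ν.map fun x => ∑ i, t i * x i) 1 := by
        rw [charFun_apply, charFun_apply_real, integral_map (by fun_prop) (by fun_prop),
          integral_map (Measurable.aemeasurable (by fun_prop)) (by fun_prop)]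
        simp [PiLp.inner_apply]
    _ = charFun (multivariateGaussian 0 (secondMomentMatrix ν)) t := by
        rw [hν, charFun_gaussianReal,
          Real.coe_toNNReal _ (integral_nonneg fun _ => sq_nonneg _),
          charFun_multivariateGaussian (posSemidef_secondMomentMatrix hν.memLp_eval),
          dotProduct_secondMomentMatrix_mulVec hν.memLp_eval]
        simp

lemma abs_log_integral_exp_sum_div_le (hν : IsCenteredGaussianLaw ν) {σ δ : ℝ} (hσ : 0 < σ)
    (hcov : ∀ i j, |(∫ x, x i * x j ∂ν) - σ ^ 2 * (if i = j then 1 else 0)| ≤ δ)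
    {f : Fin n → ℝ → ℝ} {M a C : ℝ} (hf : ∀ i, Measurable (f i)) (hM : ∀ i u, |f i u| ≤ M)
    (hC : 0 ≤ C) (hfC : ∀ i u v, |f i u - f i v| ≤ a + C * |u - v| ^ 2) :
    |Real.log ((∫ x, Real.exp (∑ i, f i (x i)) ∂ν) / ∫ y, Real.exp (∑ i, f i (y i))
        ∂(Measure.pi fun _ : Fin n => gaussianReal 0 (Real.toNNReal (σ ^ 2))))|
      ≤ Real.exp (2 * (n * M)) * (n * a + C * (n * δ / σ) ^ 2) := by
  set F : EuclideanSpace ℝ (Fin n) → ℝ := fun x => ∑ i, f i (x i) with hF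
  set S := secondMomentMatrix ν with hS
  have hSpos : S.PosSemidef := posSemidef_secondMomentMatrix hν.memLp_eval
  have htransport (ρ : Measure (Fin n → ℝ)) :
      ∫ x, Real.exp (∑ i, f i (x i)) ∂ρ = ∫ x, Real.exp (F x) ∂ρ.map (toLp 2) :=
    (integral_map_equiv (MeasurableEquiv.toLp 2 (Fin n → ℝ)) fun x => Real.exp (F x)).symm
  have hFM (x : EuclideanSpace ℝ (Fin n)) : |F x| ≤ n * M := by
    simpa using (Finset.abs_sum_le_sum_abs (fun i => f i (x i)) Finset.univ).trans
      (Finset.sum_le_sum fun i _ => hM i (x i))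
  have hFC (x y : EuclideanSpace ℝ (Fin n)) : |F x - F y| ≤ n * a + C * ‖x - y‖ ^ 2 := by
    rw [hF, ← Finset.sum_sub_distrib, EuclideanSpace.norm_sq_eq, Finset.mul_sum]
    simpa [Finset.sum_add_distrib] using
      (Finset.abs_sum_le_sum_abs (fun i => f i (x i) - f i (y i)) Finset.univ).trans
        (Finset.sum_le_sum fun i _ => hfC i (x i) (y i))
  have hentries (i j : Fin n) : |(S - σ ^ 2 • 1) i j| ≤ δ := by
    simpa [hS, secondMomentMatrix, one_apply] using hcov i j
  have htrace := trace_sqrt_sub_smul_one_le hSpos hσ hentries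
  have hgauss := abs_log_integral_exp_multivariateGaussian_div_le
    (CFC.sqrt_nonneg S).posSemidef (PosSemidef.one.smul hσ.le) (by fun_prop) hFM hFC
  rw [CFC.sqrt_mul_sqrt_self S hSpos.nonneg, smul_mul_smul_comm, ← sq, mul_one] at hgauss
  rw [htransport, htransport, hν.map_toLp_eq_multivariateGaussian, map_toLp_pi_gaussianReal,
    Real.coe_toNNReal _ (sq_nonneg σ)]
  refine hgauss.trans ?_
  rw [Fintype.card_fin] at htrace
  gcongr

end IsCenteredGaussianLaw

theorem almost_independent_gaussian_laplace_comparison_general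
    (m : ℕ) (σ : ℝ) (hσ : 0 < σ) {W : Type*} (g : ℝ → W → ℝ)
    (hg : UniformEquicontinuous fun w u => g u w) (M : ℝ) (hM : ∀ u w, |g u w| ≤ M) :
    ∀ ε : ℝ, 0 < ε → ∃ δ : ℝ, 0 < δ ∧
      ∀ n : ℕ, n ≤ m → ∀ (z : Fin n → ℝ) (w : Fin n → W) (ν : Measure (Fin n → ℝ)),
        IsCenteredGaussianLaw ν →
        (∀ i j : Fin n, |(∫ x, x i * x j ∂ν) - σ ^ 2 * (if i = j then 1 else 0)| < δ) →
        |Real.log ((∫ x, Real.exp (∑ i, g (z i + x i) (w i)) ∂ν) /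
            (∫ y, Real.exp (∑ i, g (z i + y i) (w i))
              ∂(Measure.pi fun _ : Fin n => gaussianReal 0 (Real.toNNReal (σ ^ 2)))))| < ε := by
  intro ε hε
  obtain ⟨a, ha, haε⟩ := exists_pos_lt_of_continuousAt_zero (ε := ε)
    (φ := fun a => Real.exp (2 * (m * |M|)) * (m * a)) (by fun_prop) (by simpa using hε)
  obtain ⟨C, hC, hgC⟩ := exists_dist_le_add_mul_dist_sq (D := M + M) hg
    (fun w u v => (abs_sub _ _).trans (add_le_add (hM u w) (hM v w))) ha
  obtain ⟨δ, hδ, hδε⟩ := exists_pos_lt_of_continuousAt_zero (ε := ε)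
    (φ := fun δ => Real.exp (2 * (m * |M|)) * (m * a + C * (m * δ / σ) ^ 2))
    (by fun_prop) (by simpa using haε)
  refine ⟨δ, hδ, fun n hn z w ν hν hcov => lt_of_le_of_lt ?_ hδε⟩
  refine (hν.abs_log_integral_exp_sum_div_le hσ (fun i j => (hcov i j).le)
    (f := fun i u => g (z i + u) (w i))
    (fun i => ((hg.uniformContinuous (w i)).continuous.comp (by fun_prop)).measurable)
    (fun i u => (hM _ _).trans (le_abs_self M)) hC
    fun i u v => by simpa [Real.dist_eq] using hgC (w i) (z i + u) (z i + v)).trans ?_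
  gcongr

/-- Let `m ∈ ℕ`, `σ > 0` and `g : ℝ² → ℝ` continuous with compact support.  For every `ε > 0`
there is `δ > 0` such that for any `n ≤ m`, reals `z_1,…,z_n, w_1,…,w_n` and any centered
Gaussian vector `X` with `max_{i,j} |Cov(X_i, X_j) - σ² δ_{ij}| < δ`, the Laplace-type
functionals of `X` and of an i.i.d. `N(0,σ²)` vector `Y` satisfy
`|log (E exp(∑ g(z_i + X_i, w_i)) / E exp(∑ g(z_i + Y_i, w_i)))| < ε`. -/
theorem almost_independent_gaussian_laplace_comparison
    (m : ℕ) (σ : ℝ) (hσ : 0 < σ) (g : ℝ → ℝ → ℝ)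
    (hgc : Continuous (Function.uncurry g)) (hgs : HasCompactSupport (Function.uncurry g)) :
    ∀ ε : ℝ, 0 < ε → ∃ δ : ℝ, 0 < δ ∧
      ∀ n : ℕ, n ≤ m → ∀ z w : Fin n → ℝ, ∀ ν : Measure (Fin n → ℝ),
        IsProbabilityMeasure ν → IsCenteredGaussianLaw ν →
        (∀ i j : Fin n, |(∫ x, x i * x j ∂ν) - σ ^ 2 * (if i = j then 1 else 0)| < δ) →
        |Real.log ((∫ x, Real.exp (∑ i, g (z i + x i) (w i)) ∂ν) /
            (∫ y, Real.exp (∑ i, g (z i + y i) (w i))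
              ∂(Measure.pi fun _ : Fin n => gaussianReal 0 (Real.toNNReal (σ ^ 2)))))| < ε := by
  intro ε hε
  obtain ⟨M, hM⟩ := hgc.bounded_above_of_compact_support hgs
  obtain ⟨δ, hδ, h⟩ := almost_independent_gaussian_laplace_comparison_general m σ hσ g
    (uniformEquicontinuous_of_uniformContinuous_uncurry (hgs.uniformContinuous_of_continuous hgc))
    M (fun u w => hM (u, w)) ε hε
  exact ⟨δ, hδ, fun n hn z w ν _ => h n hn z w ν⟩
end

section
/- Fix γ > 0 and define L_n(j) = γ log((j ∧ (n−j)) ∨ 1) for j = 0,…,n. There exists c > 0 (depending on γ) such that for every n ∈ ℕ, the Brownian bridge (W^n_t)_{0≤t≤n} from 0 to 0 satisfies P(W^n_t ≤ 1 − L_n(t) for all t ∈ [0, n]) ≥ c/n. -/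
open MeasureTheory ProbabilityTheory

/-!
The bridge of duration `T` is independent of the endpoint `B_T`, so it suffices to bound from below
the probability that a Brownian motion stays under a barrier `b` and ends within `1/2` below `0`,
and to divide by the probability `≍ T^(-1/2)` of the latter. As barrier take `1/2 - γ log u` with
`u t = 1 + 2 t (T - t) / T`, which is smooth and dominates `(t ∧ (T - t)) ∨ 1`.

Girsanov's theorem straightens the barrier at the price of a bounded factor and of a potential
`w ↦ -b'' w` acting on the distance `w` to the barrier. Under Brownian motion killed at `0` and
conditioned on its endpoints that distance is a Bessel bridge, of expected size at most `2 √u`,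
whereas `-b'' ≤ 144 γ u⁻²`; as `∫ u^(-3/2)` is bounded uniformly in `T`, Jensen's inequality costs
only a constant. What remains is the killed transition density `≍ T^(-3/2)`, whence `c / T`.

Everything is done at the multiples of a mesh `δ`, with constants independent of `δ`; the dyadic
limit `δ → 0` and continuity of the paths give continuous time.
-/

namespace BridgeBarrier

open Real Set Filter Topology
open scoped NNReal ENNReal

section Gaussian

lemma gaussianPDFReal_comm (x y : ℝ) (t : ℝ≥0) : gaussianPDFReal x t y = gaussianPDFReal y t x := by
  rw [gaussianPDFReal, gaussianPDFReal, ← neg_sub, neg_sq]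

lemma gaussianPDFReal_neg_left (x y : ℝ) (t : ℝ≥0) :
    gaussianPDFReal (-x) t y = gaussianPDFReal x t (-y) := by
  rw [gaussianPDFReal, gaussianPDFReal, ← neg_sub, neg_sq, neg_sub_left, neg_add', neg_sub_comm]

lemma gaussianPDFReal_neg_left_eq_mul_exp (x y : ℝ) (t : ℝ≥0) :
    gaussianPDFReal (-x) t y = gaussianPDFReal x t y * exp (-(2 * x * y / t)) := by
  rcases eq_or_ne t 0 with rfl | ht
  · simp
  have ht' : (t : ℝ) ≠ 0 := NNReal.coe_ne_zero.2 ht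
  rw [gaussianPDFReal, gaussianPDFReal, mul_assoc _ (rexp _), ← exp_add]
  congr 2
  field_simp
  ring

lemma gaussianPDFReal_le_gaussianPDFReal_self (x y : ℝ) (t : ℝ≥0) :
    gaussianPDFReal x t y ≤ gaussianPDFReal 0 t 0 := by
  simp only [gaussianPDFReal]
  gcongr ?_ * exp ?_
  rw [sub_self, zero_pow two_ne_zero, neg_zero, zero_div]
  exact div_nonpos_of_nonpos_of_nonneg (neg_nonpos.2 (sq_nonneg _)) (by positivity)

lemma gaussianPDFReal_mul_gaussianPDFReal {s t : ℝ≥0} (hs : s ≠ 0) (ht : t ≠ 0) (x w z : ℝ) :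
    gaussianPDFReal x s w * gaussianPDFReal w t z =
      gaussianPDFReal x (s + t) z *
        gaussianPDFReal ((t * x + s * z) / (s + t)) (s * t / (s + t)) w := by
  have : (0 : ℝ) < s := NNReal.coe_pos.2 hs.pos
  have : (0 : ℝ) < t := NNReal.coe_pos.2 ht.pos
  have normalization : (√(2 * π * s))⁻¹ * (√(2 * π * t))⁻¹ =
      (√(2 * π * (s + t)))⁻¹ * (√(2 * π * (s * t / (s + t))))⁻¹ := by
    rw [← mul_inv, ← mul_inv, ← sqrt_mul (by positivity), ← sqrt_mul (by positivity)]
    congr 2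
    field_simp
  have exponent : -(w - x) ^ 2 / (2 * s) + -(z - w) ^ 2 / (2 * t) =
      -(z - x) ^ 2 / (2 * (s + t)) +
        -(w - (t * x + s * z) / (s + t)) ^ 2 / (2 * (s * t / (s + t))) := by
    field_simp
    ring
  simp only [gaussianPDFReal, NNReal.coe_add, NNReal.coe_div, NNReal.coe_mul]
  rw [mul_mul_mul_comm, normalization, ← exp_add, exponent, exp_add, mul_mul_mul_comm]

lemma integrable_mul_gaussianPDFReal {φ : ℝ → ℝ} {μ : ℝ} {v : ℝ≥0} (hv : v ≠ 0)
    (hφ : Integrable φ (gaussianReal μ v)) :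
    Integrable fun w => φ w * gaussianPDFReal μ v w := by
  rw [gaussianReal_of_var_ne_zero _ hv,
    integrable_withDensity_iff (measurable_gaussianPDF μ v)
      (ae_of_all _ fun _ => gaussianPDF_lt_top)] at hφ
  simpa only [toReal_gaussianPDF] using hφ

lemma integral_mul_gaussianPDFReal (φ : ℝ → ℝ) (μ : ℝ) {v : ℝ≥0} (hv : v ≠ 0) :
    ∫ w, φ w * gaussianPDFReal μ v w = ∫ w, φ w ∂gaussianReal μ v := by
  simp_rw [integral_gaussianReal_eq_integral_smul hv, smul_eq_mul, mul_comm]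

lemma integrable_sq_gaussianReal (μ : ℝ) (v : ℝ≥0) :
    Integrable (fun w => w ^ 2) (gaussianReal μ v) :=
  (memLp_id_gaussianReal 2).integrable_sq

lemma integral_sq_gaussianReal (μ : ℝ) (v : ℝ≥0) :
    ∫ w, w ^ 2 ∂gaussianReal μ v = v + μ ^ 2 := by
  have h := variance_eq_sub (memLp_id_gaussianReal (μ := μ) (v := v) 2)
  rw [variance_id_gaussianReal] at h
  simp only [Pi.pow_apply, id_eq, integral_id_gaussianReal] at h
  exact sub_eq_iff_eq_add.1 h.symm

lemma gaussianPDFReal_add_left (x c y : ℝ) (t : ℝ≥0) :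
    gaussianPDFReal (x + c) t y =
      gaussianPDFReal x t y * exp (c / t * (y - x) - (c / t) ^ 2 * t / 2) := by
  rcases eq_or_ne t 0 with rfl | ht
  · simp
  have ht' : (t : ℝ) ≠ 0 := NNReal.coe_ne_zero.2 ht
  rw [gaussianPDFReal, gaussianPDFReal, mul_assoc _ (rexp _), ← exp_add]
  congr 2
  field_simp
  ring

lemma measurable_gaussianReal_add (c : ℝ) (t : ℝ≥0) :
    Measurable fun y => gaussianReal (y + c) t :=
  measurable_gaussianReal.comp (by fun_prop : Measurable fun y => (y + c, t))

lemma measurable_gaussianPDF_add (c : ℝ) (t : ℝ≥0) :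
    Measurable fun p : ℝ × ℝ => gaussianPDF (p.1 + c) t p.2 :=
  measurable_uncurry_gaussianPDF.comp (f := fun p : ℝ × ℝ => (p.1 + c, t, p.2)) (by fun_prop)

end Gaussian

section GaussianProcess

variable {Ω : Type*} [MeasurableSpace Ω] {P : Measure Ω}

lemma isGaussianProcess_of_map_sum_eq_gaussianReal {ι : Type*} {X : ι → Ω → ℝ}
    (hX : ∀ t, Measurable (X t))
    (h : ∀ (k : ℕ) (t : Fin k → ι) (a : Fin k → ℝ), ∃ (m : ℝ) (v : ℝ≥0),
      P.map (fun ω => ∑ i, a i * X (t i) ω) = gaussianReal m v) :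
    IsGaussianProcess X P := by
  classical
  refine ⟨fun I => ⟨isGaussian_of_map_eq_gaussianReal fun L => ?_⟩⟩
  let e := I.equivFin.symm
  obtain ⟨m, v, hmv⟩ := h I.card (fun i => e i) fun i => L (Pi.single (e i) 1)
  have hL (ω : Ω) : L (I.restrict fun t => X t ω) =
      ∑ i, L (Pi.single (e i) 1) * X (e i) ω := by
    rw [pi_eq_sum_univ' (I.restrict fun t => X t ω), map_sum, ← e.sum_comp]
    refine Finset.sum_congr rfl fun i _ => ?_
    rw [map_smul, smul_eq_mul, mul_comm]
    rfl
  have hrestrict : Measurable fun ω => I.restrict fun t => X t ω :=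
    measurable_pi_lambda _ fun t => hX _
  refine ⟨m, v, ?_⟩
  rw [Measure.map_map (by fun_prop) hrestrict, ← hmv]
  exact congrArg (P.map ·) (funext hL)

lemma isPreBrownianReal_of_map_sum_eq_gaussianReal {X : ℝ≥0 → Ω → ℝ}
    (hX : ∀ t, Measurable (X t))
    (h : ∀ (k : ℕ) (t : Fin k → ℝ≥0) (a : Fin k → ℝ),
      P.map (fun ω => ∑ i, a i * X (t i) ω) =
        gaussianReal 0 (∑ i, ∑ j, a i * a j * (min (t i) (t j) : ℝ≥0)).toNNReal) :
    IsPreBrownianReal X P := by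
  have hG : IsGaussianProcess X P :=
    isGaussianProcess_of_map_sum_eq_gaussianReal hX fun k t a => ⟨0, _, h k t a⟩
  have := hG.isProbabilityMeasure
  have hL2 (t : ℝ≥0) : MemLp (X t) 2 P := (hG.hasGaussianLaw_eval t).memLp_two
  have hlaw (t : ℝ≥0) : HasLaw (X t) (gaussianReal 0 t) P :=
    ⟨(hX t).aemeasurable, by simpa using h 1 (fun _ => t) fun _ => 1⟩
  have hvar (t : ℝ≥0) : Var[X t; P] = t := by rw [(hlaw t).variance_eq, variance_id_gaussianReal]
  refine hG.isPreBrownianReal_of_covariance (fun t => ?_) fun s t hst => ?_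
  · rw [(hlaw t).integral_eq, integral_id_gaussianReal]
  · have hsum : HasLaw (X s + X t) (gaussianReal 0 (3 * s + t)) P := by
      refine ⟨((hX s).add (hX t)).aemeasurable, ?_⟩
      convert h 2 ![s, t] 1 using 2
      · ext ω
        simp
      · have hquadratic : ∑ i, ∑ j, (1 : Fin 2 → ℝ) i * (1 : Fin 2 → ℝ) j *
            (min (![s, t] i) (![s, t] j) : ℝ≥0) = (3 * s + t : ℝ≥0) := by
          simp [Fin.sum_univ_two, hst]
          ring
        rw [hquadratic, Real.toNNReal_coe]
    have hvar_sum := variance_add (hL2 s) (hL2 t)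
    rw [hsum.variance_eq, variance_id_gaussianReal, hvar, hvar] at hvar_sum
    push_cast at hvar_sum
    linarith

end GaussianProcess

lemma integral_Ioi_add_comp_neg {f : ℝ → ℝ} (hf : Integrable f) :
    ∫ w in Ioi 0, (f w + f (-w)) = ∫ w, f w := by
  rw [integral_add hf.integrableOn hf.comp_neg.integrableOn, integral_comp_neg_Ioi, neg_zero,
    add_comm]
  exact intervalIntegral.integral_Iic_add_Ioi hf.integrableOn hf.integrableOn

section KilledKernel

/-- Transition density at time `t` from `x` to `y` of Brownian motion killed on leaving the
positive half-line, given by the reflection principle; meaningful for `0 ≤ x` and `0 ≤ y`. -/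
noncomputable def killedPDFReal (t : ℝ≥0) (x y : ℝ) : ℝ :=
  gaussianPDFReal x t y - gaussianPDFReal (-x) t y

/-- `killedPDFReal` as an extended nonnegative real, for use with the Lebesgue integral. -/
noncomputable def killedPDF (t : ℝ≥0) (x y : ℝ) : ℝ≥0∞ :=
  ENNReal.ofReal (killedPDFReal t x y)

lemma killedPDFReal_eq_mul (t : ℝ≥0) (x y : ℝ) :
    killedPDFReal t x y = gaussianPDFReal x t y * (1 - exp (-(2 * x * y / t))) := by
  rw [killedPDFReal, gaussianPDFReal_neg_left_eq_mul_exp, mul_one_sub]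

lemma killedPDFReal_nonneg (t : ℝ≥0) {x y : ℝ} (hx : 0 ≤ x) (hy : 0 ≤ y) :
    0 ≤ killedPDFReal t x y := by
  rw [killedPDFReal_eq_mul]
  refine mul_nonneg (gaussianPDFReal_nonneg _ _ _) (sub_nonneg.2 (exp_le_one_iff.2 ?_))
  exact neg_nonpos.2 (by positivity)

lemma killedPDFReal_neg_right (t : ℝ≥0) (x y : ℝ) :
    killedPDFReal t x (-y) = -killedPDFReal t x y := by
  simp only [killedPDFReal, gaussianPDFReal_neg_left, neg_neg, neg_sub]

lemma killedPDFReal_comm (t : ℝ≥0) (x y : ℝ) : killedPDFReal t x y = killedPDFReal t y x := by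
  rw [killedPDFReal, killedPDFReal, gaussianPDFReal_comm, gaussianPDFReal_neg_left x,
    gaussianPDFReal_comm x]

lemma killedPDFReal_neg_left (t : ℝ≥0) (x y : ℝ) :
    killedPDFReal t (-x) y = -killedPDFReal t x y := by
  rw [killedPDFReal_comm, killedPDFReal_neg_right, killedPDFReal_comm]

lemma killedPDF_le_gaussianPDF (t : ℝ≥0) (x y : ℝ) : killedPDF t x y ≤ gaussianPDF x t y :=
  ENNReal.ofReal_le_ofReal (sub_le_self _ (gaussianPDFReal_nonneg _ _ _))

lemma killedPDF_ne_top (t : ℝ≥0) (x y : ℝ) : killedPDF t x y ≠ ∞ := ENNReal.ofReal_ne_top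

@[fun_prop]
lemma measurable_killedPDF (t : ℝ≥0) : Measurable fun p : ℝ × ℝ => killedPDF t p.1 p.2 := by
  have h := measurable_uncurry_gaussianPDFReal
  refine ENNReal.measurable_ofReal.comp (Measurable.sub ?_ ?_)
  · exact h.comp (f := fun p : ℝ × ℝ => (p.1, t, p.2)) (by fun_prop)
  · exact h.comp (f := fun p : ℝ × ℝ => (-p.1, t, p.2)) (by fun_prop)

lemma gaussianPDFReal_mul_killedPDFReal {s t : ℝ≥0} (hs : s ≠ 0) (ht : t ≠ 0) (x w z : ℝ) :
    gaussianPDFReal x s w * killedPDFReal t w z =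
      gaussianPDFReal x (s + t) z *
          gaussianPDFReal ((t * x + s * z) / (s + t)) (s * t / (s + t)) w -
        gaussianPDFReal (-x) (s + t) z *
          gaussianPDFReal ((t * x - s * z) / (s + t)) (s * t / (s + t)) w := by
  have h := gaussianPDFReal_mul_gaussianPDFReal hs ht x w (-z)
  rw [mul_neg, ← sub_eq_add_neg, ← gaussianPDFReal_neg_left x] at h
  rw [killedPDFReal, gaussianPDFReal_neg_left w, mul_sub,
    gaussianPDFReal_mul_gaussianPDFReal hs ht x w z, h]

lemma setLIntegral_Ioi_ofReal_add_comp_neg {F : ℝ → ℝ} (hF : Integrable F)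
    (hnonneg : ∀ w ∈ Ioi (0 : ℝ), 0 ≤ F w + F (-w)) :
    ∫⁻ w in Ioi 0, ENNReal.ofReal (F w + F (-w)) = ENNReal.ofReal (∫ w, F w) := by
  rw [← integral_Ioi_add_comp_neg hF]
  exact (ofReal_integral_eq_lintegral_ofReal (hF.add hF.comp_neg).integrableOn
    ((ae_restrict_mem measurableSet_Ioi).mono hnonneg)).symm

/-- Folding the even weight `φ` and the two odd factors over the origin turns the integral into a
difference of Gaussian expectations. -/
lemma setLIntegral_killedPDF_mul_killedPDF {s t : ℝ≥0} (hs : s ≠ 0) (ht : t ≠ 0) {x z : ℝ}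
    (hx : 0 ≤ x) (hz : 0 ≤ z) {φ : ℝ → ℝ} (hφ_even : ∀ w, φ (-w) = φ w) (hφ : ∀ w, 0 ≤ φ w)
    (hφ_int : ∀ μ, Integrable φ (gaussianReal μ (s * t / (s + t)))) :
    ∫⁻ w in Ioi 0, killedPDF s x w * ENNReal.ofReal (φ w) * killedPDF t w z =
      ENNReal.ofReal
        (gaussianPDFReal x (s + t) z *
            ∫ w, φ w ∂gaussianReal ((t * x + s * z) / (s + t)) (s * t / (s + t)) -
          gaussianPDFReal (-x) (s + t) z *
            ∫ w, φ w ∂gaussianReal ((t * x - s * z) / (s + t)) (s * t / (s + t))) := by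
  have hv : s * t / (s + t) ≠ 0 := div_ne_zero (mul_ne_zero hs ht) (by positivity)
  set F : ℝ → ℝ := fun w => φ w * (gaussianPDFReal x s w * killedPDFReal t w z) with hF
  have hint (m μ : ℝ) := (integrable_mul_gaussianPDFReal hv (hφ_int μ)).const_mul m
  have hF_eq : F = fun w =>
      gaussianPDFReal x (s + t) z *
          (φ w * gaussianPDFReal ((t * x + s * z) / (s + t)) (s * t / (s + t)) w) -
        gaussianPDFReal (-x) (s + t) z *
          (φ w * gaussianPDFReal ((t * x - s * z) / (s + t)) (s * t / (s + t)) w) := by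
    ext w
    simp only [hF, gaussianPDFReal_mul_killedPDFReal hs ht]
    ring
  have hF_int : Integrable F := hF_eq ▸ (hint _ _).sub (hint _ _)
  have hfold (w : ℝ) : killedPDFReal s x w * φ w * killedPDFReal t w z = F w + F (-w) := by
    simp only [hF, hφ_even, killedPDFReal_neg_left]
    rw [killedPDFReal, gaussianPDFReal_neg_left]
    ring
  calc ∫⁻ w in Ioi 0, killedPDF s x w * ENNReal.ofReal (φ w) * killedPDF t w z
      = ∫⁻ w in Ioi 0, ENNReal.ofReal (F w + F (-w)) := by
        refine setLIntegral_congr_fun measurableSet_Ioi fun w hw => ?_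
        have hK := killedPDFReal_nonneg s hx (le_of_lt hw)
        rw [← hfold, ENNReal.ofReal_mul (mul_nonneg hK (hφ w)), ENNReal.ofReal_mul hK]
        rfl
    _ = ENNReal.ofReal (∫ w, F w) :=
        setLIntegral_Ioi_ofReal_add_comp_neg hF_int fun w hw => hfold w ▸
          mul_nonneg (mul_nonneg (killedPDFReal_nonneg s hx hw.le) (hφ w))
            (killedPDFReal_nonneg t hw.le hz)
    _ = _ := by
        rw [hF_eq, integral_sub (hint _ _) (hint _ _), integral_const_mul, integral_const_mul,
          integral_mul_gaussianPDFReal φ _ hv, integral_mul_gaussianPDFReal φ _ hv]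

lemma killedPDF_chapmanKolmogorov {s t : ℝ≥0} (hs : s ≠ 0) (ht : t ≠ 0) {x z : ℝ}
    (hx : 0 ≤ x) (hz : 0 ≤ z) :
    ∫⁻ w in Ioi 0, killedPDF s x w * killedPDF t w z = killedPDF (s + t) x z := by
  simpa [killedPDF, killedPDFReal] using
    setLIntegral_killedPDF_mul_killedPDF hs ht hx hz (φ := fun _ => 1) (fun _ => rfl)
      (fun _ => zero_le_one) (fun _ => integrable_const _)

lemma one_add_mul_exp_neg_le_one (a : ℝ) : (1 + a) * exp (-a) ≤ 1 := by
  rw [exp_neg, ← div_eq_mul_inv, div_le_one (exp_pos a), add_comm]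
  exact add_one_le_exp a

/-- Bounding `w` by `(σ ^ 2 + w ^ 2) / (2 * σ)`, whose Gaussian expectations are explicit. -/
lemma setLIntegral_killedPDF_mul_id_mul_killedPDF_le_of_pos {s t : ℝ≥0} (hs : s ≠ 0) (ht : t ≠ 0)
    {x z σ : ℝ} (hx : 0 ≤ x) (hz : 0 ≤ z) (hσ : 0 < σ) :
    ∫⁻ w in Ioi 0, killedPDF s x w * ENNReal.ofReal w * killedPDF t w z ≤
      ENNReal.ofReal
        (gaussianPDFReal x (s + t) z *
            ((σ ^ 2 + (s * t / (s + t) + ((t * x + s * z) / (s + t)) ^ 2)) / (2 * σ)) -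
          gaussianPDFReal (-x) (s + t) z *
            ((σ ^ 2 + (s * t / (s + t) + ((t * x - s * z) / (s + t)) ^ 2)) / (2 * σ))) := by
  set φ : ℝ → ℝ := fun w => (σ ^ 2 + w ^ 2) / (2 * σ) with hφ
  have id_le (w : ℝ) : w ≤ φ w := by
    rw [hφ, le_div_iff₀ (by positivity)]
    nlinarith [sq_nonneg (σ - w)]
  have hφ_int (μ : ℝ) (v : ℝ≥0) : Integrable φ (gaussianReal μ v) :=
    ((integrable_const _).add (integrable_sq_gaussianReal μ v)).div_const _
  have integral_φ (μ : ℝ) (v : ℝ≥0) :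
      ∫ w, φ w ∂gaussianReal μ v = (σ ^ 2 + (v + μ ^ 2)) / (2 * σ) := by
    rw [hφ, integral_div, integral_add (integrable_const _) (integrable_sq_gaussianReal μ v),
      integral_sq_gaussianReal, integral_const, probReal_univ, one_smul]
  have h := setLIntegral_killedPDF_mul_killedPDF hs ht hx hz (fun w => by simp only [hφ, neg_sq])
    (fun w => by positivity) (fun μ => hφ_int μ _)
  simp only [integral_φ, NNReal.coe_div, NNReal.coe_mul, NNReal.coe_add] at h
  exact (lintegral_mono fun w => by gcongr; exact id_le w).trans h.le

/-- Conditioned on survival, the killed bridge is a three-dimensional Bessel bridge, the norm of a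
vector with mean `(μ, 0, 0)` and covariance `v • 1`; the bound is its `L²` norm. -/
lemma setLIntegral_killedPDF_mul_id_mul_killedPDF_le {s t : ℝ≥0} (hs : s ≠ 0) (ht : t ≠ 0)
    {x z : ℝ} (hx : 0 ≤ x) (hz : 0 ≤ z) :
    ∫⁻ w in Ioi 0, killedPDF s x w * ENNReal.ofReal w * killedPDF t w z ≤
      ENNReal.ofReal √(3 * (s * t / (s + t)) + ((t * x + s * z) / (s + t)) ^ 2) *
        killedPDF (s + t) x z := by
  have : (0 : ℝ) < s := NNReal.coe_pos.2 hs.pos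
  have : (0 : ℝ) < t := NNReal.coe_pos.2 ht.pos
  set σ : ℝ := √(3 * (s * t / (s + t)) + ((t * x + s * z) / (s + t)) ^ 2)
  have hσ_pos : 0 < σ := sqrt_pos.2 (by positivity)
  have hσ_sq : σ ^ 2 = 3 * (s * t / (s + t)) + ((t * x + s * z) / (s + t)) ^ 2 :=
    sq_sqrt (by positivity)
  refine (setLIntegral_killedPDF_mul_id_mul_killedPDF_le_of_pos hs ht hx hz hσ_pos).trans ?_
  rw [killedPDF, ← ENNReal.ofReal_mul hσ_pos.le, killedPDFReal,
    gaussianPDFReal_neg_left_eq_mul_exp]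
  refine ENNReal.ofReal_le_ofReal ?_
  simp only [NNReal.coe_add]
  set v : ℝ := s * t / (s + t) with hv
  set μ₁ : ℝ := (t * x + s * z) / (s + t) with hμ₁
  set μ₂ : ℝ := (t * x - s * z) / (s + t) with hμ₂
  set a : ℝ := 2 * x * z / (s + t) with ha
  have mean_sq_gap : μ₁ ^ 2 - μ₂ ^ 2 = 2 * v * a := by
    rw [hμ₁, hμ₂, hv, ha]
    field_simp
    ring
  have moment₁ : (σ ^ 2 + (v + μ₁ ^ 2)) / (2 * σ) = σ - v / σ := by
    field_simp
    linarith
  have moment₂ : (σ ^ 2 + (v + μ₂ ^ 2)) / (2 * σ) = σ - v / σ * (1 + a) := by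
    field_simp
    linarith
  rw [moment₁, moment₂, ← sub_nonneg]
  calc 0 ≤ gaussianPDFReal x (s + t) z * (v / σ) * (1 - (1 + a) * exp (-a)) :=
        mul_nonneg (mul_nonneg (gaussianPDFReal_nonneg _ _ _) (by positivity))
          (sub_nonneg.2 (one_add_mul_exp_neg_le_one a))
    _ = _ := by ring

/-- The first moment, on the event of survival, of the position at time `s` of the killed motion
run from `x` for time `s + t`, as a density in the endpoint `z`. -/
noncomputable def killedFirstMoment (s t : ℝ≥0) (x z : ℝ) : ℝ≥0∞ :=
  ∫⁻ w in Ioi 0, killedPDF s x w * ENNReal.ofReal w * killedPDF t w z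

lemma measurable_killedFirstMoment (s t : ℝ≥0) (x : ℝ) : Measurable (killedFirstMoment s t x) :=
  Measurable.lintegral_prod_right' (f := fun p : ℝ × ℝ =>
    killedPDF s x p.2 * ENNReal.ofReal p.2 * killedPDF t p.2 p.1) (by fun_prop)

lemma setLIntegral_killedFirstMoment_mul_killedPDF (s : ℝ≥0) {t u : ℝ≥0} (ht : t ≠ 0) (hu : u ≠ 0)
    (x : ℝ) {z : ℝ} (hz : 0 ≤ z) :
    ∫⁻ y in Ioi 0, killedFirstMoment s t x y * killedPDF u y z =
      killedFirstMoment s (t + u) x z := by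
  calc ∫⁻ y in Ioi 0, killedFirstMoment s t x y * killedPDF u y z
      = ∫⁻ y in Ioi 0, ∫⁻ w in Ioi 0,
          killedPDF s x w * ENNReal.ofReal w * killedPDF t w y * killedPDF u y z :=
        lintegral_congr fun y => (lintegral_mul_const _ (by fun_prop)).symm
    _ = ∫⁻ w in Ioi 0, ∫⁻ y in Ioi 0,
          killedPDF s x w * ENNReal.ofReal w * (killedPDF t w y * killedPDF u y z) := by
        simp_rw [← mul_assoc]
        exact lintegral_lintegral_swap (by fun_prop)
    _ = killedFirstMoment s (t + u) x z := by
        refine setLIntegral_congr_fun measurableSet_Ioi fun w hw => ?_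
        rw [lintegral_const_mul _ (by fun_prop),
          killedPDF_chapmanKolmogorov ht hu (le_of_lt hw) hz]

/-- `1 - exp (-r) ≥ r / 2` for `0 ≤ r ≤ 1` turns the reflection formula into a linear lower
bound. -/
lemma div_mul_gaussianPDFReal_le_killedPDFReal {t : ℝ≥0} {x y : ℝ} (hx : 0 ≤ x) (hy : 0 ≤ y)
    (hxy : 2 * x * y ≤ t) :
    x * y / t * gaussianPDFReal x t y ≤ killedPDFReal t x y := by
  rw [killedPDFReal_eq_mul, mul_comm]
  refine mul_le_mul_of_nonneg_left ?_ (gaussianPDFReal_nonneg x t y)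
  set r : ℝ := 2 * x * y / t
  have hr₀ : 0 ≤ r := by positivity
  have hr₁ : r ≤ 1 := div_le_one_of_le₀ hxy t.coe_nonneg
  have exp_le : exp (-r) ≤ (1 + r)⁻¹ := by
    rw [exp_neg]
    gcongr
    rw [add_comm]
    exact add_one_le_exp r
  calc x * y / t = r / 2 := by ring
    _ ≤ 1 - (1 + r)⁻¹ := by
        rw [← sub_nonneg, show 1 - (1 + r)⁻¹ - r / 2 = r * (1 - r) / (2 * (1 + r)) by
          field_simp
          ring]
        have := sub_nonneg.2 hr₁
        positivity
    _ ≤ 1 - exp (-r) := sub_le_sub_left exp_le 1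

end KilledKernel

section FeynmanKac

variable {α : Type*} [MeasurableSpace α] (ρ : Measure α) (κ : α → α → ℝ≥0∞) (φ : ℕ → α → ℝ)
  (f : α → ℝ≥0∞)

/-- Discrete Feynman–Kac densities: the initial density `f` is propagated by the kernel `κ` (with
respect to `ρ`), the `j`-th step being weighted by `exp (-φ j)`. -/
noncomputable def feynmanKac : ℕ → α → ℝ≥0∞
  | 0 => f
  | j + 1 => fun y => ∫⁻ x, feynmanKac j x * ENNReal.ofReal (exp (-φ j x)) * κ x y ∂ρ

/-- The unweighted integral of the additive functional `∑ i < j, (φ i)⁺` along the paths whose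
weighted mass is `feynmanKac`. -/
noncomputable def additiveFunctional : ℕ → α → ℝ≥0∞
  | 0 => 0
  | j + 1 => fun y =>
      ∫⁻ x, (additiveFunctional j x + ENNReal.ofReal (φ j x) * feynmanKac ρ κ 0 f j x) * κ x y ∂ρ

variable {ρ κ φ f}

lemma feynmanKac_zero_succ (j : ℕ) (y : α) :
    feynmanKac ρ κ 0 f (j + 1) y = ∫⁻ x, feynmanKac ρ κ 0 f j x * κ x y ∂ρ := by
  simp [feynmanKac]

lemma additiveFunctional_succ (j : ℕ) (y : α) :
    additiveFunctional ρ κ φ f (j + 1) y =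
      ∫⁻ x, (additiveFunctional ρ κ φ f j x + ENNReal.ofReal (φ j x) * feynmanKac ρ κ 0 f j x) *
        κ x y ∂ρ :=
  rfl

lemma measurable_feynmanKac [SFinite ρ] (hκ : Measurable fun p : α × α => κ p.1 p.2)
    (hφ : ∀ j, Measurable (φ j)) (hf : Measurable f) :
    ∀ j, Measurable (feynmanKac ρ κ φ f j)
  | 0 => hf
  | j + 1 => by
    have ih := measurable_feynmanKac hκ hφ hf j
    have := hφ j
    exact Measurable.lintegral_prod_right' (f := fun p : α × α =>
      feynmanKac ρ κ φ f j p.2 * ENNReal.ofReal (exp (-φ j p.2)) * κ p.2 p.1)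
      (.mul (by fun_prop) (hκ.comp measurable_swap))

lemma measurable_additiveFunctional [SFinite ρ] (hκ : Measurable fun p : α × α => κ p.1 p.2)
    (hφ : ∀ j, Measurable (φ j)) (hf : Measurable f) :
    ∀ j, Measurable (additiveFunctional ρ κ φ f j)
  | 0 => measurable_const
  | j + 1 => by
    have ih := measurable_additiveFunctional hκ hφ hf j
    have hG := measurable_feynmanKac (ρ := ρ) (φ := 0) hκ (fun _ => measurable_const) hf j
    have := hφ j
    exact Measurable.lintegral_prod_right' (f := fun p : α × α =>
      (additiveFunctional ρ κ φ f j p.2 +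
        ENNReal.ofReal (φ j p.2) * feynmanKac ρ κ 0 f j p.2) * κ p.2 p.1)
      (.mul (by fun_prop) (hκ.comp measurable_swap))

lemma tangent_le_of_tangent_sub_le (M r : ℝ) {G H S : ℝ≥0∞}
    (h : ENNReal.ofReal ((1 + (M - r)) * exp (-(M - r))) * G ≤
      H + ENNReal.ofReal (exp (-(M - r))) * S) :
    ENNReal.ofReal ((1 + M) * exp (-M)) * G ≤
      H * ENNReal.ofReal (exp (-r)) +
        ENNReal.ofReal (exp (-M)) * (S + ENNReal.ofReal r * G) := by
  have split : ENNReal.ofReal ((1 + M) * exp (-M)) ≤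
      ENNReal.ofReal (exp (-r)) * ENNReal.ofReal ((1 + (M - r)) * exp (-(M - r))) +
        ENNReal.ofReal (exp (-M)) * ENNReal.ofReal r := by
    rw [← ENNReal.ofReal_mul (exp_nonneg _), ← ENNReal.ofReal_mul (exp_nonneg _)]
    refine (ENNReal.ofReal_le_ofReal (le_of_eq ?_)).trans ENNReal.ofReal_add_le
    rw [mul_left_comm, ← exp_add, ← neg_add, add_sub_cancel]
    ring_nf
  have exp_mul : ENNReal.ofReal (exp (-r)) * ENNReal.ofReal (exp (-(M - r))) =
      ENNReal.ofReal (exp (-M)) := by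
    rw [← ENNReal.ofReal_mul (exp_nonneg _), ← exp_add]
    congr 2
    ring
  calc ENNReal.ofReal ((1 + M) * exp (-M)) * G
      ≤ ENNReal.ofReal (exp (-r)) * (ENNReal.ofReal ((1 + (M - r)) * exp (-(M - r))) * G) +
          ENNReal.ofReal (exp (-M)) * (ENNReal.ofReal r * G) := by
        rw [← mul_assoc, ← mul_assoc, ← add_mul]
        gcongr
    _ ≤ ENNReal.ofReal (exp (-r)) * (H + ENNReal.ofReal (exp (-(M - r))) * S) +
          ENNReal.ofReal (exp (-M)) * (ENNReal.ofReal r * G) := by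
        gcongr
    _ = _ := by
        rw [mul_add, ← mul_assoc, exp_mul]
        ring

/-- Jensen's inequality for `exp (-·)` in tangent-line form, which needs no normalisation: it is
`exp (-u) ≥ (1 + M - u) * exp (-M)` integrated along the paths. -/
lemma tangent_mul_feynmanKac_zero_le [SFinite ρ] (hκ : Measurable fun p : α × α => κ p.1 p.2)
    (hφ : ∀ j, Measurable (φ j)) (hf : Measurable f) (j : ℕ) (M : ℝ) (y : α) :
    ENNReal.ofReal ((1 + M) * exp (-M)) * feynmanKac ρ κ 0 f j y ≤
      feynmanKac ρ κ φ f j y + ENNReal.ofReal (exp (-M)) * additiveFunctional ρ κ φ f j y := by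
  induction j generalizing M y with
  | zero =>
    refine (mul_le_of_le_one_left zero_le ?_).trans le_self_add
    exact ENNReal.ofReal_le_one.2 (one_add_mul_exp_neg_le_one M)
  | succ j ih =>
    have hG := measurable_feynmanKac (ρ := ρ) (φ := 0) hκ (fun _ => measurable_const) hf j
    have hH := measurable_feynmanKac (ρ := ρ) hκ hφ hf j
    have hS := measurable_additiveFunctional (ρ := ρ) hκ hφ hf j
    have hκy : Measurable fun x => κ x y := hκ.comp (measurable_id.prodMk measurable_const)
    have := hφ j
    rw [feynmanKac_zero_succ, feynmanKac, additiveFunctional_succ,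
      ← lintegral_const_mul _ (by fun_prop), ← lintegral_const_mul _ (by fun_prop),
      ← lintegral_add_left (by fun_prop)]
    refine lintegral_mono fun x => ?_
    rw [← mul_assoc, ← mul_assoc, ← add_mul]
    gcongr
    exact tangent_le_of_tangent_sub_le M (φ j x) (ih (M - φ j x) x)

lemma exp_neg_mul_feynmanKac_zero_le [SFinite ρ] (hκ : Measurable fun p : α × α => κ p.1 p.2)
    (hφ : ∀ j, Measurable (φ j)) (hf : Measurable f) {j : ℕ} {M : ℝ} (hM : 0 ≤ M) {y : α}
    (hG : feynmanKac ρ κ 0 f j y ≠ ∞)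
    (hS : additiveFunctional ρ κ φ f j y ≤ ENNReal.ofReal M * feynmanKac ρ κ 0 f j y) :
    ENNReal.ofReal (exp (-M)) * feynmanKac ρ κ 0 f j y ≤ feynmanKac ρ κ φ f j y := by
  have h := (tangent_mul_feynmanKac_zero_le hκ hφ hf j M y).trans (add_le_add_right
    (mul_le_mul_right hS _) _)
  rw [one_add_mul, mul_comm M, ENNReal.ofReal_add (exp_nonneg _) (by positivity),
    ENNReal.ofReal_mul (exp_nonneg _), add_mul, mul_assoc] at h
  exact (ENNReal.add_le_add_iff_right (by finiteness)).1 h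

end FeynmanKac

section Tilting

variable {δ : ℝ≥0} {x y : ℝ}

/-- The Feynman–Kac densities of the killed motion started from `x` and observed at the multiples
of `δ`, with linear potentials `w ↦ d j * w`; index `j` corresponds to time `(j + 1) * δ`. -/
noncomputable abbrev tiltedKilledPDF (δ : ℝ≥0) (d : ℕ → ℝ) (x : ℝ) : ℕ → ℝ → ℝ≥0∞ :=
  feynmanKac (volume.restrict (Ioi 0)) (killedPDF δ) (fun j w => d j * w) (killedPDF δ x)

lemma feynmanKac_zero_killedPDF (hδ : δ ≠ 0) (hx : 0 ≤ x) (j : ℕ) (hy : 0 ≤ y) :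
    feynmanKac (volume.restrict (Ioi 0)) (killedPDF δ) 0 (killedPDF δ x) j y =
      killedPDF ((j + 1 : ℕ) * δ) x y := by
  induction j generalizing y with
  | zero => simp [feynmanKac]
  | succ j ih =>
    rw [feynmanKac_zero_succ, setLIntegral_congr_fun measurableSet_Ioi fun w hw => by
      rw [ih (le_of_lt hw)], killedPDF_chapmanKolmogorov (by positivity) hδ hx hy]
    congr 1
    push_cast
    ring

lemma additiveFunctional_killedPDF (hδ : δ ≠ 0) (d : ℕ → ℝ) (hx : 0 ≤ x) (j : ℕ) (hy : 0 ≤ y) :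
    additiveFunctional (volume.restrict (Ioi 0)) (killedPDF δ) (fun j w => d j * w)
        (killedPDF δ x) j y =
      ∑ i ∈ Finset.range j, ENNReal.ofReal (d i) *
        killedFirstMoment ((i + 1 : ℕ) * δ) ((j - i : ℕ) * δ) x y := by
  induction j generalizing y with
  | zero => simp [additiveFunctional]
  | succ j ih =>
    have integrand (w : ℝ) (hw : 0 < w) :
        (additiveFunctional (volume.restrict (Ioi 0)) (killedPDF δ) (fun j w => d j * w)
            (killedPDF δ x) j w + ENNReal.ofReal (d j * w) *
            feynmanKac (volume.restrict (Ioi 0)) (killedPDF δ) 0 (killedPDF δ x) j w) *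
          killedPDF δ w y =
        ∑ i ∈ Finset.range j, ENNReal.ofReal (d i) *
            (killedFirstMoment ((i + 1 : ℕ) * δ) ((j - i : ℕ) * δ) x w * killedPDF δ w y) +
          ENNReal.ofReal (d j) *
            (killedPDF ((j + 1 : ℕ) * δ) x w * ENNReal.ofReal w * killedPDF δ w y) := by
      rw [ih hw.le, feynmanKac_zero_killedPDF hδ hx j hw.le, ENNReal.ofReal_mul' hw.le, add_mul,
        Finset.sum_mul]
      simp only [mul_assoc, mul_left_comm, mul_comm]
    have hJ (s t : ℝ≥0) := measurable_killedFirstMoment s t x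
    rw [additiveFunctional_succ, setLIntegral_congr_fun measurableSet_Ioi integrand,
      lintegral_add_right _ (by fun_prop), lintegral_finsetSum _ fun i _ => by fun_prop,
      lintegral_const_mul _ (by fun_prop), Finset.sum_range_succ, ← killedFirstMoment]
    congr 1
    · refine Finset.sum_congr rfl fun i hi => ?_
      have hij := Finset.mem_range.1 hi
      rw [lintegral_const_mul _ (by fun_prop),
        setLIntegral_killedFirstMoment_mul_killedPDF _ _ hδ x hy, Nat.succ_sub hij.le]
      · congr 2
        push_cast
        ring
      · exact mul_ne_zero (Nat.cast_ne_zero.2 (Nat.sub_pos_of_lt hij).ne') hδ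
    · simp

/-- The bridge of duration `s + t` from `x` to `y` has variance `s * t / (s + t)` and mean
`(t * x + s * y) / (s + t)` at time `s`. -/
lemma exp_neg_sum_mul_killedPDF_le_tiltedKilledPDF (hδ : δ ≠ 0) (d β : ℕ → ℝ) (hx : 0 ≤ x)
    (hy : 0 ≤ y) (j : ℕ) (hβ : ∀ i < j, 0 ≤ β i)
    (hd : ∀ i < j, ∀ s t : ℝ, s = (i + 1) * δ → s + t = (j + 1) * δ →
      d i * √(3 * (s * t / (s + t)) + ((t * x + s * y) / (s + t)) ^ 2) ≤ β i) :
    ENNReal.ofReal (exp (-∑ i ∈ Finset.range j, β i)) * killedPDF ((j + 1 : ℕ) * δ) x y ≤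
      tiltedKilledPDF δ d x j y := by
  have hG := feynmanKac_zero_killedPDF hδ hx j hy
  rw [← hG]
  refine exp_neg_mul_feynmanKac_zero_le (measurable_killedPDF δ) (fun _ => by fun_prop)
    (by fun_prop) (Finset.sum_nonneg fun i hi => hβ i (Finset.mem_range.1 hi))
    (hG ▸ killedPDF_ne_top _ _ _) ?_
  rw [additiveFunctional_killedPDF hδ d hx j hy, hG,
    ENNReal.ofReal_sum_of_nonneg fun i hi => hβ i (Finset.mem_range.1 hi), Finset.sum_mul]
  refine Finset.sum_le_sum fun i hi => ?_
  have hij := Finset.mem_range.1 hi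
  have ht : ((j - i : ℕ) : ℝ≥0) * δ ≠ 0 :=
    mul_ne_zero (Nat.cast_ne_zero.2 (Nat.sub_pos_of_lt hij).ne') hδ
  refine (mul_le_mul_right (setLIntegral_killedPDF_mul_id_mul_killedPDF_le
    (by positivity) ht hx hy) _).trans ?_
  rw [← mul_assoc, ← ENNReal.ofReal_mul' (sqrt_nonneg _), ← add_mul, ← Nat.cast_add,
    show i + 1 + (j - i) = j + 1 by omega]
  gcongr
  refine hd i hij _ _ (by simp) ?_
  norm_cast
  rw [← add_mul, ← Nat.cast_add, show i + 1 + (j - i) = j + 1 by omega]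

end Tilting

section Markov

variable {Ω : Type*}

/-- The distance from the process, observed at the multiples of `δ`, up to the barrier `b`. -/
def barrierGap (X : ℝ≥0 → Ω → ℝ) (δ : ℝ≥0) (b : ℕ → ℝ) (k : ℕ) (ω : Ω) : ℝ := b k - X (k * δ) ω

/-- The event that the process stays below the barrier `b` at the times `0, δ, …, k * δ`. -/
def survivalEvent (X : ℝ≥0 → Ω → ℝ) (δ : ℝ≥0) (b : ℕ → ℝ) (k : ℕ) : Set Ω :=
  {ω | ∀ i ≤ k, 0 < barrierGap X δ b i ω}

lemma survivalEvent_succ {X : ℝ≥0 → Ω → ℝ} {δ : ℝ≥0} {b : ℕ → ℝ} (k : ℕ) :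
    survivalEvent X δ b (k + 1) = survivalEvent X δ b k ∩ barrierGap X δ b (k + 1) ⁻¹' Ioi 0 := by
  ext ω
  simp only [survivalEvent, mem_ofPred_eq, mem_inter_iff, mem_preimage, mem_Ioi]
  grind

variable [MeasurableSpace Ω]

/-- The (sub-probability) law of the gap at time `k * δ` on the event of survival. -/
noncomputable def survivalLaw (P : Measure Ω) (X : ℝ≥0 → Ω → ℝ) (δ : ℝ≥0) (b : ℕ → ℝ)
    (k : ℕ) : Measure ℝ :=
  (P.restrict (survivalEvent X δ b k)).map (barrierGap X δ b k)

variable {P : Measure Ω} {X : ℝ≥0 → Ω → ℝ} {δ : ℝ≥0} {b : ℕ → ℝ}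

lemma map_sub_restrict_eq_bind_gaussianReal {β : Type*} [MeasurableSpace β] [IsFiniteMeasure P]
    {U : Ω → β} {Z : Ω → ℝ} (hU : Measurable U) (hZ : Measurable Z) (hUZ : IndepFun U Z P)
    (hZ_law : P.map Z = gaussianReal 0 δ) {S : Set β} (hS : MeasurableSet S) {y : β → ℝ}
    (hy : Measurable y) (c : ℝ) :
    (P.restrict (U ⁻¹' S)).map (fun ω => y (U ω) + c - Z ω) =
      ((P.restrict (U ⁻¹' S)).map (y ∘ U)).bind fun u => gaussianReal (u + c) δ := by
  ext A hA
  have hprod := (indepFun_iff_map_prod_eq_prod_map_map hU.aemeasurable hZ.aemeasurable).1 hUZ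
  have hkernel := measurable_gaussianReal_add c δ
  have hkernelA : Measurable fun u => gaussianReal (u + c) δ A :=
    (Measure.measurable_coe hA).comp hkernel
  have hT : MeasurableSet ((S ×ˢ univ) ∩ {p : β × ℝ | y p.1 + c - p.2 ∈ A}) :=
    (hS.prod .univ).inter ((by fun_prop : Measurable fun p : β × ℝ => y p.1 + c - p.2) hA)
  calc (P.restrict (U ⁻¹' S)).map (fun ω => y (U ω) + c - Z ω) A
      = P.map (fun ω => (U ω, Z ω)) ((S ×ˢ univ) ∩ {p : β × ℝ | y p.1 + c - p.2 ∈ A}) := by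
        rw [Measure.map_apply (by fun_prop) hA, Measure.restrict_apply' (hU hS),
          Measure.map_apply (hU.prodMk hZ) hT, inter_comm]
        congr 1
        ext ω
        simp
    _ = ∫⁻ u in S, gaussianReal (y u + c) δ A ∂P.map U := by
        rw [hprod, hZ_law, Measure.prod_apply hT, ← lintegral_indicator hS]
        refine lintegral_congr fun u => ?_
        by_cases hu : u ∈ S
        · rw [indicator_of_mem hu, ← sub_zero (y u + c), ← gaussianReal_map_const_sub,
            Measure.map_apply (by fun_prop) hA]
          simp [hu, preimage]
        · simp [hu]
    _ = _ := by
        rw [Measure.bind_apply hA hkernel.aemeasurable,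
          lintegral_map hkernelA (hy.comp hU)]
        exact setLIntegral_map hS (hkernelA.comp hy) hU

lemma measurable_barrierGap (hX : ∀ t, Measurable (X t)) (k : ℕ) :
    Measurable (barrierGap X δ b k) :=
  (hX _).const_sub _

lemma survivalLaw_zero (hB : IsPreBrownianReal X P) (hb : 0 < b 0) :
    survivalLaw P X δ b 0 = Measure.dirac (b 0) := by
  have := hB.isGaussianProcess.isProbabilityMeasure
  have gap_eq : barrierGap X δ b 0 =ᵐ[P] fun _ => b 0 := by
    filter_upwards [hB.eval_zero_ae_eq_zero] with ω hω
    simp [barrierGap, hω]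
  have survives : ∀ᵐ ω ∂P, ω ∈ survivalEvent X δ b 0 := by
    filter_upwards [gap_eq] with ω hω
    simpa [survivalEvent, hω]
  rw [survivalLaw, Measure.restrict_eq_self_of_ae_mem survives, Measure.map_congr gap_eq,
    Measure.map_const, measure_univ, one_smul]

/-- The survival event and the gap at time `k * δ` are functionals of the path up to that time. -/
lemma survivalLaw_succ (hX : ∀ t, Measurable (X t))
    (hB : IsPreBrownianReal X P) (k : ℕ) :
    survivalLaw P X δ b (k + 1) =
      ((survivalLaw P X δ b k).bind fun y => gaussianReal (y + (b (k + 1) - b k)) δ).restrict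
        (Ioi 0) := by
  have := hB.isGaussianProcess.isProbabilityMeasure
  set t₀ : ℝ≥0 := k * δ
  let past : Ω → Iic t₀ → ℝ := fun ω t => X t ω
  let increment : Ω → ℝ := fun ω => X (t₀ + δ) ω - X t₀ ω
  have hindep : IndepFun past increment P :=
    (hB.indepFun_shift t₀).symm.comp measurable_id (measurable_pi_apply δ)
  have hincrement : P.map increment = gaussianReal 0 δ := ((hB.shift t₀).hasLaw_eval δ).map_eq
  have time_mem {i : ℕ} (hi : i ≤ k) : (i * δ : ℝ≥0) ∈ Iic t₀ := by
    exact mul_le_mul_left (Nat.cast_le.2 hi) δ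
  let S : Set (Iic t₀ → ℝ) := ⋂ i : Iic k, {x | 0 < b i - x ⟨i * δ, time_mem i.2⟩}
  have hS : MeasurableSet S := .iInter fun i =>
    measurableSet_lt measurable_const ((measurable_pi_apply _).const_sub _)
  have hsurvival : survivalEvent X δ b k = past ⁻¹' S := by
    ext ω
    simp [survivalEvent, S, past, barrierGap]
  have hgap (ω : Ω) : barrierGap X δ b (k + 1) ω =
      b k - past ω ⟨t₀, self_mem_Iic⟩ + (b (k + 1) - b k) - increment ω := by
    simp only [barrierGap, past, increment, Nat.cast_succ, add_one_mul, t₀]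
    ring
  rw [survivalLaw, survivalEvent_succ, inter_comm,
    ← Measure.restrict_restrict (measurable_barrierGap hX _ measurableSet_Ioi),
    ← Measure.restrict_map (measurable_barrierGap hX _) measurableSet_Ioi, survivalLaw, hsurvival,
    funext hgap]
  congr 1
  exact map_sub_restrict_eq_bind_gaussianReal (measurable_pi_lambda past fun t => hX t)
    ((hX _).sub (hX _) : Measurable increment) hindep hincrement hS
    (y := fun x => b k - x ⟨t₀, self_mem_Iic⟩) ((measurable_pi_apply _).const_sub _) _

lemma withDensity_le_survivalLaw_succ (hδ : δ ≠ 0)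
    (hX : ∀ t, Measurable (X t)) (hB : IsPreBrownianReal X P) {k : ℕ} {D D' : ℝ → ℝ≥0∞}
    (hD : Measurable D) (hDk : (volume.restrict (Ioi 0)).withDensity D ≤ survivalLaw P X δ b k)
    (hD' : ∀ y',
      D' y' ≤ ∫⁻ y in Ioi 0, D y * gaussianPDF (y + (b (k + 1) - b k)) δ y') :
    (volume.restrict (Ioi 0)).withDensity D' ≤ survivalLaw P X δ b (k + 1) := by
  refine Measure.le_iff.2 fun A hA => ?_
  have hkernel := measurable_gaussianReal_add (b (k + 1) - b k) δ
  have := measurable_gaussianPDF_add (b (k + 1) - b k) δ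
  have hA₀ := hA.inter (measurableSet_Ioi (a := (0 : ℝ)))
  calc (volume.restrict (Ioi 0)).withDensity D' A
      = ∫⁻ y' in A ∩ Ioi 0, D' y' := by
        rw [withDensity_apply _ hA, Measure.restrict_restrict hA]
    _ ≤ ∫⁻ y' in A ∩ Ioi 0, ∫⁻ y in Ioi 0, D y * gaussianPDF (y + (b (k + 1) - b k)) δ y' :=
        setLIntegral_mono' hA₀ fun y' _ => hD' y'
    _ = ∫⁻ y in Ioi 0, D y * gaussianReal (y + (b (k + 1) - b k)) δ (A ∩ Ioi 0) := by
        rw [lintegral_lintegral_swap (by fun_prop)]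
        refine lintegral_congr fun y => ?_
        rw [lintegral_const_mul _ (measurable_gaussianPDF _ _), gaussianReal_apply _ hδ]
    _ = ∫⁻ y, gaussianReal (y + (b (k + 1) - b k)) δ (A ∩ Ioi 0)
          ∂(volume.restrict (Ioi 0)).withDensity D :=
        (lintegral_withDensity_eq_lintegral_mul _ hD
          ((Measure.measurable_coe hA₀).comp hkernel)).symm
    _ ≤ ∫⁻ y, gaussianReal (y + (b (k + 1) - b k)) δ (A ∩ Ioi 0) ∂survivalLaw P X δ b k :=
        lintegral_mono' hDk le_rfl
    _ = survivalLaw P X δ b (k + 1) A := by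
        rw [survivalLaw_succ hX hB, Measure.restrict_apply hA,
          Measure.bind_apply hA₀ hkernel.aemeasurable]

end Markov

section Girsanov

variable {Ω : Type*} [MeasurableSpace Ω] {P : Measure Ω} {X : ℝ≥0 → Ω → ℝ} {δ : ℝ≥0} {b : ℕ → ℝ}

/-- The downward slope of the barrier `b` over the `k`-th time interval of length `δ`. -/
noncomputable def barrierSlope (δ : ℝ≥0) (b : ℕ → ℝ) (k : ℕ) : ℝ := (b k - b (k + 1)) / δ

/-- Discrete Girsanov density of the gap at time `(j + 1) * δ`: tilting the steps turns the
barrier into a constant one, and summation by parts turns the tilt `-∑ i, m i * (Y (i+1) - Y i)`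
of slopes `m` into the potentials `(m i - m (i+1)) * Y (i+1)`. -/
noncomputable def girsanovDensity (δ : ℝ≥0) (b : ℕ → ℝ) (j : ℕ) (y : ℝ) : ℝ≥0∞ :=
  ENNReal.ofReal (exp (barrierSlope δ b 0 * b 0 - barrierSlope δ b j * y -
      ∑ i ∈ Finset.range (j + 1), barrierSlope δ b i ^ 2 * δ / 2)) *
    tiltedKilledPDF δ (fun i => barrierSlope δ b i - barrierSlope δ b (i + 1)) (b 0) j y

lemma measurable_girsanovDensity (j : ℕ) : Measurable (girsanovDensity δ b j) :=
  .mul (by fun_prop) (measurable_feynmanKac (measurable_killedPDF δ) (fun _ => by fun_prop)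
    (by fun_prop) j)

lemma ofReal_exp_mul_killedPDF_le (k : ℕ) (y y' : ℝ) :
    ENNReal.ofReal (exp (-(barrierSlope δ b k * (y' - y)) - barrierSlope δ b k ^ 2 * δ / 2)) *
      killedPDF δ y y' ≤ gaussianPDF (y + (b (k + 1) - b k)) δ y' := by
  have hm : (b (k + 1) - b k) / δ = -barrierSlope δ b k := by
    rw [barrierSlope, ← neg_div, neg_sub]
  rw [gaussianPDF, gaussianPDFReal_add_left, hm, mul_comm, neg_sq, neg_mul,
    ENNReal.ofReal_mul (gaussianPDFReal_nonneg _ _ _)]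
  gcongr
  exact killedPDF_le_gaussianPDF δ y y'

lemma girsanovDensity_succ_le (j : ℕ) (y' : ℝ) :
    girsanovDensity δ b (j + 1) y' ≤
      ∫⁻ y in Ioi 0, girsanovDensity δ b j y * gaussianPDF (y + (b (j + 2) - b (j + 1))) δ y' := by
  have hH := measurable_feynmanKac (ρ := volume.restrict (Ioi 0)) (measurable_killedPDF δ)
    (φ := fun i y => (barrierSlope δ b i - barrierSlope δ b (i + 1)) * y)
    (fun _ => by fun_prop) (f := killedPDF δ (b 0)) (by fun_prop) j
  rw [girsanovDensity, tiltedKilledPDF, feynmanKac, ← lintegral_const_mul _ (by fun_prop)]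
  refine lintegral_mono fun y => ?_
  refine le_trans (le_of_eq ?_)
    (mul_le_mul_right (ofReal_exp_mul_killedPDF_le (j + 1) y y') _)
  have exponents :
      exp (barrierSlope δ b 0 * b 0 - barrierSlope δ b (j + 1) * y' -
          ∑ i ∈ Finset.range (j + 1 + 1), barrierSlope δ b i ^ 2 * δ / 2) *
        exp (-((barrierSlope δ b j - barrierSlope δ b (j + 1)) * y)) =
      exp (barrierSlope δ b 0 * b 0 - barrierSlope δ b j * y -
          ∑ i ∈ Finset.range (j + 1), barrierSlope δ b i ^ 2 * δ / 2) *
        exp (-(barrierSlope δ b (j + 1) * (y' - y)) - barrierSlope δ b (j + 1) ^ 2 * δ / 2) := by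
    rw [← exp_add, ← exp_add, Finset.sum_range_succ]
    congr 1
    ring
  rw [girsanovDensity, mul_mul_mul_comm, ← ENNReal.ofReal_mul (exp_nonneg _), ← exponents,
    ENNReal.ofReal_mul (exp_nonneg _)]
  ring

theorem girsanovDensity_le_survivalLaw (hδ : δ ≠ 0)
    (hX : ∀ t, Measurable (X t)) (hB : IsPreBrownianReal X P) (hb : 0 < b 0) (j : ℕ) :
    (volume.restrict (Ioi 0)).withDensity (girsanovDensity δ b j) ≤
      survivalLaw P X δ b (j + 1) := by
  induction j with
  | zero =>
    rw [survivalLaw_succ hX hB, survivalLaw_zero hB hb,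
      Measure.dirac_bind (measurable_gaussianReal_add _ _), gaussianReal_of_var_ne_zero _ hδ,
      restrict_withDensity measurableSet_Ioi]
    refine withDensity_mono (ae_of_all _ fun y => ?_)
    refine le_trans (le_of_eq ?_) (ofReal_exp_mul_killedPDF_le 0 (b 0) y)
    simp only [girsanovDensity, tiltedKilledPDF, feynmanKac, Finset.sum_range_one, zero_add]
    congr 3
    ring
  | succ j ih =>
    exact withDensity_le_survivalLaw_succ hδ hX hB (measurable_girsanovDensity j) ih
      fun y' => girsanovDensity_succ_le j y'

end Girsanov

section SqrtSums

lemma div_mul_sqrt_le_inv_sqrt_sub {a δ : ℝ} (ha : 0 < a) (hδ : 0 ≤ δ) (hδa : δ ≤ a) :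
    δ / (a * √a) ≤ 4 * ((√a)⁻¹ - (√(a + δ))⁻¹) := by
  set p := √a
  set q := √(a + δ)
  have hp : 0 < p := sqrt_pos.2 ha
  have hp_sq : p ^ 2 = a := sq_sqrt ha.le
  have hq_sq : q ^ 2 = a + δ := sq_sqrt (by positivity)
  have hpq : p ≤ q := sqrt_le_sqrt (by linarith)
  have hq : 0 < q := hp.trans_le hpq
  calc δ / (a * p) = (q - p) / (p ^ 3 * q) * ((q + p) * q) := by
        rw [← hp_sq, show δ = (q - p) * (q + p) by linarith]
        field_simp
    _ ≤ (q - p) / (p ^ 3 * q) * (4 * p ^ 2) :=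
        mul_le_mul_of_nonneg_left (by nlinarith)
          (div_nonneg (sub_nonneg.2 hpq) (by positivity))
    _ = 4 * (p⁻¹ - q⁻¹) := by field_simp

lemma sum_div_mul_sqrt_le {δ : ℝ} (hδ₀ : 0 ≤ δ) (hδ₁ : δ ≤ 1) (n : ℕ) :
    ∑ i ∈ Finset.range n, δ / ((1 + i * δ) * √(1 + i * δ)) ≤ 4 := by
  have telescope (i : ℕ) : δ / ((1 + i * δ) * √(1 + i * δ)) ≤
      4 * (√(1 + i * δ))⁻¹ - 4 * (√(1 + (i + 1 : ℕ) * δ))⁻¹ := by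
    have h := div_mul_sqrt_le_inv_sqrt_sub (a := 1 + i * δ) (by positivity) hδ₀
      (hδ₁.trans (le_add_of_nonneg_right (by positivity)))
    rwa [mul_sub, add_assoc, ← add_one_mul, ← Nat.cast_succ] at h
  refine (Finset.sum_le_sum fun i _ => telescope i).trans ?_
  rw [Finset.sum_range_sub' fun i : ℕ => 4 * (√(1 + i * δ))⁻¹]
  simp

end SqrtSums

section BridgeScale

/-- One plus twice the variance at time `t` of the Brownian bridge of duration `T`: a smooth
substitute for `(t ∧ (T - t)) ∨ 1`. -/
noncomputable def bridgeScale (T t : ℝ) : ℝ := 1 + 2 * (t * (T - t) / T)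

variable {T t δ : ℝ}

@[simp]
lemma bridgeScale_zero (T : ℝ) : bridgeScale T 0 = 1 := by simp [bridgeScale]

@[simp]
lemma bridgeScale_self (T : ℝ) : bridgeScale T T = 1 := by simp [bridgeScale]

lemma one_add_min_le_bridgeScale (ht₀ : 0 ≤ t) (htT : t ≤ T) :
    1 + min t (T - t) ≤ bridgeScale T t := by
  rcases (ht₀.trans htT).eq_or_lt with rfl | hT
  · simp [le_antisymm htT ht₀]
  rw [bridgeScale, add_le_add_iff_left, ← mul_div_assoc, le_div_iff₀ hT]
  rcases min_cases t (T - t) with ⟨h, h'⟩ | ⟨h, h'⟩ <;> rw [h] <;> nlinarith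

lemma one_le_bridgeScale (ht₀ : 0 ≤ t) (htT : t ≤ T) : 1 ≤ bridgeScale T t :=
  (le_add_of_nonneg_right (le_min ht₀ (sub_nonneg.2 htT))).trans
    (one_add_min_le_bridgeScale ht₀ htT)

lemma bridgeScale_le (hT : 1 ≤ T) : bridgeScale T t ≤ 2 * T := by
  have : 2 * (t * (T - t) / T) ≤ T / 2 := by
    rw [← mul_div_assoc, div_le_iff₀ (by linarith)]
    nlinarith [sq_nonneg (T - 2 * t)]
  rw [bridgeScale]
  linarith

lemma abs_bridgeScale_add_sub_le (hδ : 0 ≤ δ) (ht₀ : 0 ≤ t) (htT : t + δ ≤ T) :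
    |bridgeScale T (t + δ) - bridgeScale T t| ≤ 2 * δ := by
  have hT : 0 ≤ T := by linarith
  have difference : bridgeScale T (t + δ) - bridgeScale T t = 2 * δ * ((T - 2 * t - δ) / T) := by
    simp only [bridgeScale]
    ring
  rw [difference, abs_mul, abs_of_nonneg (by positivity : 0 ≤ 2 * δ), abs_div, abs_of_nonneg hT]
  refine mul_le_of_le_one_right (by positivity) (div_le_one_of_le₀ ?_ hT)
  exact abs_le.2 ⟨by linarith, by linarith⟩

lemma bridgeScale_le_three_mul (hδ₀ : 0 ≤ δ) (hδ₁ : δ ≤ 1) (ht₀ : 0 ≤ t) (htT : t + δ ≤ T) :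
    bridgeScale T t ≤ 3 * bridgeScale T (t + δ) ∧
      bridgeScale T (t + δ) ≤ 3 * bridgeScale T t := by
  have h := abs_le.1 (abs_bridgeScale_add_sub_le hδ₀ ht₀ htT)
  have h₁ := one_le_bridgeScale ht₀ (by linarith : t ≤ T)
  have h₂ := one_le_bridgeScale (by linarith : 0 ≤ t + δ) htT
  constructor <;> linarith

lemma log_sub_log_le {a b : ℝ} (ha : 0 < a) (hb : 0 < b) : log a - log b ≤ (a - b) / b := by
  rw [← log_div ha.ne' hb.ne', sub_div, div_self hb.ne']
  exact log_le_sub_one_of_pos (div_pos ha hb)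

lemma abs_log_bridgeScale_add_sub_le (hδ₀ : 0 ≤ δ) (hδ₁ : δ ≤ 1) (ht₀ : 0 ≤ t)
    (htT : t + δ ≤ T) :
    |log (bridgeScale T (t + δ)) - log (bridgeScale T t)| ≤ 6 * δ / bridgeScale T t := by
  have h := abs_le.1 (abs_bridgeScale_add_sub_le hδ₀ ht₀ htT)
  have h₁ : 0 < bridgeScale T t :=
    one_pos.trans_le (one_le_bridgeScale ht₀ (by linarith : t ≤ T))
  have h₂ : 0 < bridgeScale T (t + δ) :=
    one_pos.trans_le (one_le_bridgeScale (by linarith : 0 ≤ t + δ) htT)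
  rw [abs_sub_le_iff]
  constructor
  · refine (log_sub_log_le h₂ h₁).trans ?_
    gcongr
    linarith
  · refine (log_sub_log_le h₁ h₂).trans ?_
    rw [div_le_div_iff₀ h₂ h₁]
    have := (bridgeScale_le_three_mul hδ₀ hδ₁ ht₀ htT).1
    nlinarith

/-- Only an upper bound is available: near the endpoints the barrier is convex. -/
lemma second_difference_log_bridgeScale_le_div_mul (hδ₀ : 0 ≤ δ) (hT : 1 ≤ T) (ht₀ : 0 ≤ t)
    (htT : t + 2 * δ ≤ T) :
    2 * log (bridgeScale T (t + δ)) - log (bridgeScale T t) - log (bridgeScale T (t + 2 * δ)) ≤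
      16 * δ ^ 2 / (bridgeScale T t * bridgeScale T (t + 2 * δ)) := by
  have assoc : t + 2 * δ = t + δ + δ := by ring
  have hu₀ := one_le_bridgeScale ht₀ (by linarith : t ≤ T)
  have hu₁ := one_le_bridgeScale (by linarith : 0 ≤ t + δ) (by linarith : t + δ ≤ T)
  have hu₂ := one_le_bridgeScale (by linarith : 0 ≤ t + 2 * δ) htT
  have step₀ := abs_le.1 (abs_bridgeScale_add_sub_le hδ₀ ht₀ (by linarith : t + δ ≤ T))
  have step₁ := abs_le.1 (abs_bridgeScale_add_sub_le hδ₀ (by linarith : 0 ≤ t + δ)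
    (by linarith : t + δ + δ ≤ T))
  have midpoint : bridgeScale T (t + δ) =
      (bridgeScale T t + bridgeScale T (t + 2 * δ)) / 2 + 2 * δ ^ 2 / T := by
    simp only [bridgeScale]
    ring
  have size := bridgeScale_le (t := t + δ) hT
  rw [← assoc] at step₁
  set u₀ := bridgeScale T t
  set u₁ := bridgeScale T (t + δ)
  set u₂ := bridgeScale T (t + 2 * δ)
  have log₀ := log_sub_log_le (one_pos.trans_le hu₁) (one_pos.trans_le hu₀)
  have log₂ := log_sub_log_le (one_pos.trans_le hu₁) (one_pos.trans_le hu₂)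
  have curvature : (u₀ + u₂) / 2 * (2 * δ ^ 2 / T) ≤ 4 * δ ^ 2 := by
    rw [← mul_div_assoc, div_le_iff₀ (by linarith)]
    have : 0 ≤ 2 * δ ^ 2 / T := by positivity
    nlinarith [sq_nonneg δ]
  have slope : ((u₂ - u₀) / 2) ^ 2 ≤ (2 * δ) ^ 2 :=
    sq_le_sq' (by linarith) (by linarith)
  calc 2 * log u₁ - log u₀ - log u₂ ≤ (u₁ - u₀) / u₀ + (u₁ - u₂) / u₂ := by linarith
    _ = 2 * ((u₀ + u₂) / 2 * (2 * δ ^ 2 / T) + ((u₂ - u₀) / 2) ^ 2) / (u₀ * u₂) := by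
        rw [midpoint]
        field_simp
        ring
    _ ≤ 16 * δ ^ 2 / (u₀ * u₂) := by
        gcongr ?_ / _
        linarith

lemma second_difference_log_bridgeScale_le (hδ₀ : 0 ≤ δ) (hδ₁ : δ ≤ 1) (hT : 1 ≤ T) (ht₀ : 0 ≤ t)
    (htT : t + 2 * δ ≤ T) :
    2 * log (bridgeScale T (t + δ)) - log (bridgeScale T t) - log (bridgeScale T (t + 2 * δ)) ≤
      144 * δ ^ 2 / bridgeScale T (t + δ) ^ 2 := by
  have htT' : t + δ + δ ≤ T := by linarith
  have hu₁ := one_le_bridgeScale (by linarith : 0 ≤ t + δ) (by linarith : t + δ ≤ T)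
  have comparable₀ := (bridgeScale_le_three_mul hδ₀ hδ₁ ht₀ (by linarith : t + δ ≤ T)).2
  have comparable₂ := (bridgeScale_le_three_mul hδ₀ hδ₁ (by linarith : 0 ≤ t + δ) htT').1
  rw [add_assoc t δ δ, ← two_mul] at comparable₂
  calc _ ≤ 16 * δ ^ 2 / (bridgeScale T t * bridgeScale T (t + 2 * δ)) :=
        second_difference_log_bridgeScale_le_div_mul hδ₀ hT ht₀ htT
    _ ≤ 16 * δ ^ 2 / (bridgeScale T (t + δ) / 3 * (bridgeScale T (t + δ) / 3)) := by
        gcongr <;> linarith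
    _ = 144 * δ ^ 2 / bridgeScale T (t + δ) ^ 2 := by ring

/-- The density in `t` of the cost of conditioning the bridge on staying below the barrier. -/
noncomputable def bridgeWeight (T t : ℝ) : ℝ := (bridgeScale T t * √(bridgeScale T t))⁻¹

lemma bridgeWeight_nonneg (T t : ℝ) : 0 ≤ bridgeWeight T t := by
  rw [bridgeWeight, inv_nonneg]
  rcases le_total 0 (bridgeScale T t) with h | h
  · positivity
  · rw [sqrt_eq_zero_of_nonpos h, mul_zero]

lemma bridgeWeight_le_add (ht₀ : 0 ≤ t) (htT : t ≤ T) :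
    bridgeWeight T t ≤
      ((1 + t) * √(1 + t))⁻¹ + ((1 + (T - t)) * √(1 + (T - t)))⁻¹ := by
  have hT : 0 ≤ T - t := sub_nonneg.2 htT
  have weight_le {r : ℝ} (hr : 0 ≤ r) (h : 1 + r ≤ bridgeScale T t) :
      bridgeWeight T t ≤ ((1 + r) * √(1 + r))⁻¹ := by
    rw [bridgeWeight]
    have : 0 ≤ bridgeScale T t := by linarith
    gcongr
  have h := one_add_min_le_bridgeScale ht₀ htT
  rcases min_cases t (T - t) with ⟨hmin, -⟩ | ⟨hmin, -⟩ <;> rw [hmin] at h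
  · exact le_add_of_le_of_nonneg (weight_le ht₀ h) (by positivity)
  · exact le_add_of_nonneg_of_le (by positivity) (weight_le hT h)

lemma sum_mul_bridgeWeight_le (hδ₀ : 0 ≤ δ) (hδ₁ : δ ≤ 1) (n : ℕ) :
    ∑ i ∈ Finset.range (n + 1), δ * bridgeWeight (n * δ) (i * δ) ≤ 8 := by
  let f (i : ℕ) : ℝ := δ / ((1 + i * δ) * √(1 + i * δ))
  calc ∑ i ∈ Finset.range (n + 1), δ * bridgeWeight (n * δ) (i * δ)
      ≤ ∑ i ∈ Finset.range (n + 1), (f i + f (n - i)) := by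
        refine Finset.sum_le_sum fun i hi => ?_
        have hin : i ≤ n := Finset.mem_range_succ_iff.1 hi
        simp only [f, Nat.cast_sub hin, sub_mul, div_eq_mul_inv, ← mul_add]
        gcongr
        exact bridgeWeight_le_add (by positivity) (by gcongr)
    _ = 2 * ∑ i ∈ Finset.range (n + 1), f i := by
        rw [Finset.sum_add_distrib, Finset.sum_flip, two_mul]
    _ ≤ 8 := by linarith [sum_div_mul_sqrt_le hδ₀ hδ₁ (n + 1)]

lemma sqrt_add_sq_le_two_mul_sqrt_bridgeScale {s x y : ℝ} (hs : 0 ≤ s) (ht : 0 ≤ t)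
    (hx : x ∈ Icc 0 1) (hy : y ∈ Icc 0 1) :
    √(3 * (s * t / (s + t)) + ((t * x + s * y) / (s + t)) ^ 2) ≤ 2 * √(bridgeScale (s + t) s) := by
  have hmean₀ : 0 ≤ (t * x + s * y) / (s + t) := by
    have := hx.1
    have := hy.1
    positivity
  have hmean₁ : (t * x + s * y) / (s + t) ≤ 1 :=
    div_le_one_of_le₀ (by nlinarith [hx.2, hy.2]) (by positivity)
  have hvar : 0 ≤ s * t / (s + t) := by positivity
  rw [show (2 : ℝ) = √4 by rw [show (4 : ℝ) = 2 ^ 2 by norm_num]; simp,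
    ← sqrt_mul (by norm_num : (0 : ℝ) ≤ 4)]
  refine sqrt_le_sqrt ?_
  rw [bridgeScale, add_sub_cancel_left]
  nlinarith

end BridgeScale

section LogBarrier

/-- The logarithmic barrier `1/2 - γ log (t ∧ (T - t))`, smoothed by means of `bridgeScale` and
sampled at the times `t = k * δ`. -/
noncomputable def smoothLogBarrier (γ T δ : ℝ) (k : ℕ) : ℝ :=
  1 / 2 - γ * log (bridgeScale T (k * δ))

@[simp]
lemma smoothLogBarrier_zero (γ T δ : ℝ) : smoothLogBarrier γ T δ 0 = 1 / 2 := by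
  simp [smoothLogBarrier]

@[simp]
lemma smoothLogBarrier_self (γ δ : ℝ) (n : ℕ) : smoothLogBarrier γ (n * δ) δ n = 1 / 2 := by
  simp [smoothLogBarrier]

variable {γ T : ℝ} {δ : ℝ≥0} {k : ℕ}

lemma smoothLogBarrier_le (hγ : 0 ≤ γ) (hk : k * δ ≤ T) :
    smoothLogBarrier γ T δ k ≤ 1 / 2 - γ * log (max (min (k * δ) (T - k * δ)) 1) := by
  have hk₀ : (0 : ℝ) ≤ k * δ := by positivity
  have h := one_add_min_le_bridgeScale hk₀ hk
  rw [smoothLogBarrier]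
  gcongr
  exact max_le (by linarith) (one_le_bridgeScale hk₀ hk)

lemma barrierSlope_smoothLogBarrier :
    barrierSlope δ (smoothLogBarrier γ T δ) k =
      γ * ((log (bridgeScale T (k * δ + δ)) - log (bridgeScale T (k * δ))) / δ) := by
  simp only [barrierSlope, smoothLogBarrier, Nat.cast_succ, add_one_mul]
  ring

lemma abs_barrierSlope_smoothLogBarrier_le (hγ : 0 ≤ γ) (hδ₀ : δ ≠ 0) (hδ₁ : δ ≤ 1)
    (hk : k * δ + δ ≤ T) :
    |barrierSlope δ (smoothLogBarrier γ T δ) k| ≤ 6 * γ / bridgeScale T (k * δ) := by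
  have hδ : (0 : ℝ) < δ := NNReal.coe_pos.2 hδ₀.pos
  rw [barrierSlope_smoothLogBarrier, abs_mul, abs_div, abs_of_nonneg hγ, NNReal.abs_eq, mul_comm 6,
    mul_div_assoc]
  refine mul_le_mul_of_nonneg_left ?_ hγ
  rw [div_le_iff₀ hδ, div_mul_eq_mul_div]
  exact abs_log_bridgeScale_add_sub_le hδ.le (mod_cast hδ₁) (by positivity) hk

lemma barrierSlope_smoothLogBarrier_sub_le (hγ : 0 ≤ γ) (hδ₀ : δ ≠ 0) (hδ₁ : δ ≤ 1) (hT : 1 ≤ T)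
    (hk : k * δ + 2 * δ ≤ T) :
    barrierSlope δ (smoothLogBarrier γ T δ) k - barrierSlope δ (smoothLogBarrier γ T δ) (k + 1) ≤
      144 * γ * δ / bridgeScale T ((k + 1 : ℕ) * δ) ^ 2 := by
  have hδ : (0 : ℝ) < δ := NNReal.coe_pos.2 hδ₀.pos
  have h := second_difference_log_bridgeScale_le hδ.le (mod_cast hδ₁) hT
    (by positivity : (0 : ℝ) ≤ k * δ) hk
  simp only [barrierSlope_smoothLogBarrier, Nat.cast_succ, add_one_mul]
  rw [← mul_sub, ← sub_div, show (k * δ + δ + δ : ℝ) = k * δ + 2 * δ by ring]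
  calc γ * ((log (bridgeScale T (k * δ + δ)) - log (bridgeScale T (k * δ)) -
          (log (bridgeScale T (k * δ + 2 * δ)) - log (bridgeScale T (k * δ + δ)))) / δ)
      ≤ γ * (144 * δ ^ 2 / bridgeScale T (k * δ + δ) ^ 2 / δ) := by
        gcongr
        linarith
    _ = 144 * γ * δ / bridgeScale T (k * δ + δ) ^ 2 := by field_simp

lemma barrierSlope_smoothLogBarrier_sq_le (hγ : 0 ≤ γ) (hδ₀ : δ ≠ 0) (hδ₁ : δ ≤ 1)
    (hk : k * δ + δ ≤ T) :
    barrierSlope δ (smoothLogBarrier γ T δ) k ^ 2 ≤ 36 * γ ^ 2 * bridgeWeight T (k * δ) := by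
  have hscale := one_le_bridgeScale (by positivity : (0 : ℝ) ≤ k * δ)
    (by linarith [δ.2] : (k * δ : ℝ) ≤ T)
  have hslope := abs_barrierSlope_smoothLogBarrier_le hγ hδ₀ hδ₁ hk
  rw [bridgeWeight]
  set u := bridgeScale T (k * δ)
  calc barrierSlope δ (smoothLogBarrier γ T δ) k ^ 2
      ≤ (6 * γ / u) ^ 2 := by
        rw [← sq_abs]
        gcongr
    _ = 36 * γ ^ 2 * (u * u)⁻¹ := by ring
    _ ≤ 36 * γ ^ 2 * (u * √u)⁻¹ := by
        gcongr
        exact sqrt_le_self_iff.2 (Or.inr hscale)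

lemma sum_barrierSlope_smoothLogBarrier_sq_le (hγ : 0 ≤ γ) (hδ₀ : δ ≠ 0) (hδ₁ : δ ≤ 1) (n : ℕ) :
    ∑ i ∈ Finset.range n, barrierSlope δ (smoothLogBarrier γ (n * δ) δ) i ^ 2 * δ / 2 ≤
      144 * γ ^ 2 := by
  calc ∑ i ∈ Finset.range n, barrierSlope δ (smoothLogBarrier γ (n * δ) δ) i ^ 2 * δ / 2
      ≤ ∑ i ∈ Finset.range n, 18 * γ ^ 2 * (δ * bridgeWeight (n * δ) (i * δ)) := by
        refine Finset.sum_le_sum fun i hi => ?_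
        have hi : (i * δ + δ : ℝ) ≤ n * δ := by
          rw [← add_one_mul]
          gcongr
          exact_mod_cast Finset.mem_range.1 hi
        nlinarith [barrierSlope_smoothLogBarrier_sq_le hγ hδ₀ hδ₁ hi, δ.2]
    _ = 18 * γ ^ 2 * ∑ i ∈ Finset.range n, δ * bridgeWeight (n * δ) (i * δ) := by
        rw [Finset.mul_sum]
    _ ≤ 18 * γ ^ 2 * 8 := by
        gcongr
        refine (Finset.sum_le_sum_of_subset_of_nonneg ?_ fun i _ _ => ?_).trans
          (sum_mul_bridgeWeight_le δ.2 (mod_cast hδ₁) n)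
        · exact Finset.range_subset_range.2 n.le_succ
        · exact mul_nonneg δ.2 (bridgeWeight_nonneg _ _)
    _ = 144 * γ ^ 2 := by ring

lemma sum_succ_mul_bridgeWeight_le (hδ₁ : δ ≤ 1) (n : ℕ) :
    ∑ i ∈ Finset.range n, δ * bridgeWeight ((n + 1 : ℕ) * δ) ((i + 1 : ℕ) * δ) ≤ 8 := by
  have hsum := sum_mul_bridgeWeight_le δ.2 (mod_cast hδ₁) (n + 1)
  rw [Finset.sum_range_succ', Finset.sum_range_succ] at hsum
  have hnonneg (t : ℝ) := mul_nonneg δ.2 (bridgeWeight_nonneg ((n + 1 : ℕ) * δ) t)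
  linarith! [hnonneg ((n + 1 : ℕ) * δ), hnonneg ((0 : ℕ) * δ)]

/-- The drift of the slope, weighted by the `L²` norm of the conditioned bridge. -/
lemma barrierSlope_sub_mul_sqrt_le (hγ : 0 ≤ γ) (hδ₀ : δ ≠ 0) (hδ₁ : δ ≤ 1) {s t x y : ℝ}
    (ht : δ ≤ t) (hs : s = (k + 1 : ℕ) * δ) (hst : 1 ≤ s + t) (hx : x ∈ Icc 0 1)
    (hy : y ∈ Icc 0 1) :
    (barrierSlope δ (smoothLogBarrier γ (s + t) δ) k -
        barrierSlope δ (smoothLogBarrier γ (s + t) δ) (k + 1)) *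
      √(3 * (s * t / (s + t)) + ((t * x + s * y) / (s + t)) ^ 2) ≤
        288 * γ * (δ * bridgeWeight (s + t) s) := by
  have hs₀ : 0 ≤ s := by rw [hs]; positivity
  have ht₀ : 0 ≤ t := δ.2.trans ht
  have hslope := barrierSlope_smoothLogBarrier_sub_le (k := k) hγ hδ₀ hδ₁ hst
    (by rw [hs]; push_cast; linarith)
  have hscale : 0 < bridgeScale (s + t) s :=
    one_pos.trans_le (one_le_bridgeScale hs₀ (by linarith))
  rw [← hs] at hslope
  rw [bridgeWeight]
  have hmoment := sqrt_add_sq_le_two_mul_sqrt_bridgeScale hs₀ ht₀ hx hy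
  set u := bridgeScale (s + t) s
  calc _ ≤ 144 * γ * δ / u ^ 2 * (2 * √u) := by gcongr
    _ = 288 * γ * (δ * (u * √u)⁻¹) := by
        field_simp
        rw [sq_sqrt hscale.le]
        ring

end LogBarrier

section GirsanovBound

variable {γ : ℝ} {δ : ℝ≥0}

/-- The constant lost in the change of measure and in Jensen's inequality. -/
noncomputable def barrierCost (γ : ℝ) : ℝ := 144 * γ ^ 2 + 2304 * γ

lemma barrierSlope_smoothLogBarrier_zero_nonneg (hγ : 0 ≤ γ) {T : ℝ} (hT : δ ≤ T) :
    0 ≤ barrierSlope δ (smoothLogBarrier γ T δ) 0 := by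
  rw [barrierSlope_smoothLogBarrier]
  have hlog := log_nonneg (one_le_bridgeScale δ.2 hT)
  simpa using mul_nonneg hγ (div_nonneg hlog δ.2)

lemma barrierSlope_smoothLogBarrier_last_nonpos (hγ : 0 ≤ γ) (j : ℕ) :
    barrierSlope δ (smoothLogBarrier γ ((j + 1 : ℕ) * δ) δ) j ≤ 0 := by
  have := log_nonneg (one_le_bridgeScale (T := (j + 1 : ℕ) * δ) (t := j * δ) (by positivity)
    (by gcongr; simp))
  rw [barrierSlope, smoothLogBarrier_self, smoothLogBarrier, sub_sub_cancel_left]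
  exact div_nonpos_of_nonpos_of_nonneg (neg_nonpos.2 (mul_nonneg hγ this)) δ.2

lemma exp_neg_barrierCost_mul_killedPDF_le_girsanovDensity (hγ : 0 ≤ γ) (hδ₀ : δ ≠ 0) (hδ₁ : δ ≤ 1)
    (j : ℕ) (hT : 1 ≤ ((j + 1 : ℕ) * δ : ℝ)) {y : ℝ} (hy : y ∈ Icc 0 1) :
    ENNReal.ofReal (exp (-barrierCost γ)) * killedPDF ((j + 1 : ℕ) * δ) (1 / 2) y ≤
      girsanovDensity δ (smoothLogBarrier γ ((j + 1 : ℕ) * δ) δ) j y := by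
  set b := smoothLogBarrier γ ((j + 1 : ℕ) * δ) δ
  let β (i : ℕ) : ℝ := 288 * γ * (δ * bridgeWeight ((j + 1 : ℕ) * δ) ((i + 1 : ℕ) * δ))
  have hβ (i : ℕ) : 0 ≤ β i :=
    mul_nonneg (by positivity) (mul_nonneg δ.2 (bridgeWeight_nonneg _ _))
  have hjensen : ENNReal.ofReal (exp (-∑ i ∈ Finset.range j, β i)) *
      killedPDF ((j + 1 : ℕ) * δ) (1 / 2) y ≤
        tiltedKilledPDF δ (fun i => barrierSlope δ b i - barrierSlope δ b (i + 1)) (1 / 2) j y := by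
    refine exp_neg_sum_mul_killedPDF_le_tiltedKilledPDF hδ₀ _ β (by norm_num) hy.1 j
      (fun i _ => hβ i) fun i hij s t hs hst => ?_
    have hsucc : (i + 1 + 1 : ℝ) ≤ j + 1 := mod_cast Nat.succ_le_succ hij
    rw [← Nat.cast_succ] at hs hst
    have ht : δ ≤ t := by
      push_cast at hs hst
      nlinarith [δ.2]
    simp only [b, β, ← hs, ← hst]
    exact barrierSlope_sub_mul_sqrt_le hγ hδ₀ hδ₁ ht hs (hst ▸ hT) (by norm_num) hy
  have hV := sum_barrierSlope_smoothLogBarrier_sq_le hγ hδ₀ hδ₁ (j + 1)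
  have hM : ∑ i ∈ Finset.range j, β i ≤ 2304 * γ := by
    rw [← Finset.mul_sum]
    nlinarith [sum_succ_mul_bridgeWeight_le hδ₁ j]
  have hfirst : 0 ≤ barrierSlope δ b 0 :=
    barrierSlope_smoothLogBarrier_zero_nonneg hγ (hT.trans' (mod_cast hδ₁))
  have hlast : barrierSlope δ b j ≤ 0 := barrierSlope_smoothLogBarrier_last_nonpos hγ j
  have hb₀ : b 0 = 1 / 2 := smoothLogBarrier_zero _ _ _
  rw [girsanovDensity, hb₀, barrierCost, neg_add, exp_add, ENNReal.ofReal_mul (exp_pos _).le,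
    mul_assoc]
  refine mul_le_mul' (ENNReal.ofReal_le_ofReal (exp_le_exp.2 ?_)) (hjensen.trans' ?_)
  · nlinarith [mul_nonneg (neg_nonneg.2 hlast) hy.1]
  · gcongr

end GirsanovBound

section BrownianBridge

variable {Ω : Type*} {X : ℝ≥0 → Ω → ℝ} {T : ℝ≥0}

/-- The bridge of duration `T` obtained from the process `X` by removing its linear trend. -/
noncomputable def brownianBridge (X : ℝ≥0 → Ω → ℝ) (T t : ℝ≥0) (ω : Ω) : ℝ :=
  X t ω - (t / T : ℝ) * X T ω

/-- The event that the bridge of duration `n * δ` stays below `f` at the multiples of `δ`. -/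
def bridgeGridEvent (X : ℝ≥0 → Ω → ℝ) (δ : ℝ≥0) (n : ℕ) (f : ℝ≥0 → ℝ) : Set Ω :=
  {ω | ∀ k ≤ n, brownianBridge X (n * δ) (k * δ) ω ≤ f (k * δ)}

/-- The barrier `1 - L_n`. -/
noncomputable def logBarrier (γ : ℝ) (T t : ℝ≥0) : ℝ :=
  1 - γ * log (max (min (t : ℝ) (T - t)) 1)

lemma survivalEvent_inter_preimage_subset_bridgeGridEvent {γ : ℝ} {δ : ℝ≥0} (hγ : 0 ≤ γ) (n : ℕ) :
    survivalEvent X δ (smoothLogBarrier γ (n * δ) δ) n ∩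
        barrierGap X δ (smoothLogBarrier γ (n * δ) δ) n ⁻¹' Icc (1 / 2) 1 ⊆
      bridgeGridEvent X δ n (logBarrier γ (n * δ)) ∩ X (n * δ) ⁻¹' Icc (-(1 / 2)) 0 := by
  rintro ω ⟨hsurvives, hgap⟩
  have hend : X (n * δ) ω ∈ Icc (-(1 / 2)) 0 := by
    simp only [barrierGap, smoothLogBarrier_self, mem_preimage, mem_Icc] at hgap
    constructor <;> linarith
  refine ⟨fun k hk => ?_, hend⟩
  have htime : (k * δ : ℝ) ≤ n * δ := by gcongr
  have hbelow : 0 < smoothLogBarrier γ (n * δ) δ k - X (k * δ) ω := hsurvives k hk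
  have hsmooth := smoothLogBarrier_le hγ htime
  have hfraction : (k * δ / (n * δ) : ℝ) ≤ 1 := div_le_one_of_le₀ htime (by positivity)
  have : (0 : ℝ) ≤ k * δ / (n * δ) := by positivity
  simp only [brownianBridge, logBarrier, NNReal.coe_mul, NNReal.coe_natCast]
  nlinarith [hend.1, hend.2]

variable [MeasurableSpace Ω] {P : Measure Ω}

lemma measurable_brownianBridge (hX : ∀ t, Measurable (X t)) (t : ℝ≥0) :
    Measurable (brownianBridge X T t) :=
  (hX t).sub ((hX T).const_mul _)

lemma covariance_brownianBridge_eval (hB : IsPreBrownianReal X P) {t : ℝ≥0} (ht : t ≤ T) :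
    cov[brownianBridge X T t, X T; P] = 0 := by
  have hL2 (s : ℝ≥0) : MemLp (X s) 2 P := (hB.isGaussianProcess.hasGaussianLaw_eval s).memLp_two
  have := hB.isGaussianProcess.isProbabilityMeasure
  have hcov (s : ℝ≥0) : cov[fun ω => X s ω, fun ω => X T ω; P] = min s T :=
    hB.covariance_fun_eval s T
  calc cov[brownianBridge X T t, X T; P] = min t T - (t / T : ℝ) * min T T := by
        rw [← hcov t, ← hcov T]
        exact (covariance_fun_sub_left (hL2 t) ((hL2 T).const_mul _) (hL2 T)).trans
          (by rw [covariance_const_mul_left])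
    _ = 0 := by
        rw [min_eq_left ht, min_self, div_mul_cancel_of_imp, sub_self]
        intro hT
        simp_all

lemma indepFun_brownianBridge_eval (hX : ∀ t, Measurable (X t)) (hB : IsPreBrownianReal X P)
    (T : ℝ≥0) :
    IndepFun (fun ω (t : Iic T) => brownianBridge X T t ω) (X T) P := by
  have hindep : IndepFun (fun ω (t : Iic T) => brownianBridge X T t ω)
      (fun ω (_ : Unit) => X T ω) P := by
    refine IsGaussianProcess.indepFun_of_covariance_eq_zero
      (X := fun t : Iic T => brownianBridge X T t) (Y := fun _ : Unit => X T) ?_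
      (fun t => (measurable_brownianBridge hX _).aemeasurable) (fun _ => (hX T).aemeasurable)
      fun t _ => covariance_brownianBridge_eval hB t.2
    apply hB.isGaussianProcess.of_isGaussianProcess
    rintro (t | _)
    · exact ⟨{(t : ℝ≥0), T},
        { toFun x := x ⟨t, by simp⟩ - (t / T : ℝ) * x ⟨T, by simp⟩
          map_add' x y := by simp; ring
          map_smul' c x := by simp; ring }, by simp [brownianBridge]⟩
    · exact ⟨{T},
        { toFun x := x ⟨T, by simp⟩
          map_add' x y := by simp
          map_smul' c x := by simp }, by simp⟩
  exact hindep.comp measurable_id (measurable_pi_apply ())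

variable {δ : ℝ≥0} {n : ℕ} {f : ℝ≥0 → ℝ}

lemma measurableSet_bridgeGridEvent (hX : ∀ t, Measurable (X t)) :
    MeasurableSet (bridgeGridEvent X δ n f) := by
  have h : bridgeGridEvent X δ n f =
      ⋂ k : Iic n, {ω | brownianBridge X (n * δ) (k * δ) ω ≤ f (k * δ)} := by
    ext ω
    simp [bridgeGridEvent]
  rw [h]
  exact .iInter fun k => measurableSet_le (measurable_brownianBridge hX _) measurable_const

lemma measure_bridgeGridEvent_inter_eval (hX : ∀ t, Measurable (X t)) (hB : IsPreBrownianReal X P)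
    {A : Set ℝ} (hA : MeasurableSet A) :
    P (bridgeGridEvent X δ n f ∩ X (n * δ) ⁻¹' A) =
      P (bridgeGridEvent X δ n f) * P (X (n * δ) ⁻¹' A) := by
  have time_mem {k : ℕ} (hk : k ≤ n) : (k * δ : ℝ≥0) ∈ Iic (n * δ) :=
    mul_le_mul_left (Nat.cast_le.2 hk) δ
  let S : Set (Iic (n * δ) → ℝ) :=
    ⋂ k : Iic n, {x | x ⟨(k : ℕ) * δ, time_mem k.2⟩ ≤ f ((k : ℕ) * δ)}
  have hS : MeasurableSet S :=
    .iInter fun k => measurableSet_le (measurable_pi_apply _) measurable_const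
  have hgrid : bridgeGridEvent X δ n f =
      (fun ω (t : Iic (n * δ)) => brownianBridge X (n * δ) t ω) ⁻¹' S := by
    ext ω
    simp [bridgeGridEvent, S]
  rw [hgrid]
  exact (indepFun_brownianBridge_eval hX hB _).measure_inter_preimage_eq_mul _ _ hS hA

end BrownianBridge

section GridBound

variable {Ω : Type*} [MeasurableSpace Ω] {P : Measure Ω} {X : ℝ≥0 → Ω → ℝ} {γ : ℝ} {δ T : ℝ≥0}

lemma gaussianPDFReal_zero_mul_le_killedPDFReal (hT : 1 ≤ T) {y : ℝ} (hy : y ∈ Icc (1 / 2) 1) :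
    exp (-(1 / 8)) / 4 / T * gaussianPDFReal 0 T 0 ≤ killedPDFReal T (1 / 2) y := by
  have : (1 : ℝ) ≤ T := mod_cast hT
  have hpdf : exp (-(1 / 8)) * gaussianPDFReal 0 T 0 ≤ gaussianPDFReal (1 / 2) T y := by
    have hexp : (y - 1 / 2) ^ 2 / (2 * T) ≤ 1 / 8 := by
      rw [div_le_iff₀ (by positivity)]
      nlinarith [hy.1, hy.2]
    simp only [gaussianPDFReal, sub_zero, zero_pow two_ne_zero, neg_zero, zero_div, exp_zero,
      mul_one, neg_div]
    rw [mul_comm]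
    gcongr
  calc exp (-(1 / 8)) / 4 / T * gaussianPDFReal 0 T 0
      = 1 / 2 * (1 / 2) / T * (exp (-(1 / 8)) * gaussianPDFReal 0 T 0) := by ring
    _ ≤ 1 / 2 * y / T * gaussianPDFReal (1 / 2) T y := by
        have hy₀ : 0 ≤ y := one_half_pos.le.trans hy.1
        gcongr
        · exact mul_nonneg (exp_nonneg _) (gaussianPDFReal_nonneg _ _ _)
        · exact hy.1
    _ ≤ killedPDFReal T (1 / 2) y :=
        div_mul_gaussianPDFReal_le_killedPDFReal (by norm_num) (by linarith [hy.1])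
          (by linarith [hy.2])

lemma measure_preimage_Icc_eval_le (hX : Measurable (X T)) (hB : IsPreBrownianReal X P)
    (hT : T ≠ 0) (a b : ℝ) :
    P (X T ⁻¹' Icc a b) ≤ ENNReal.ofReal (gaussianPDFReal 0 T 0 * (b - a)) := by
  rw [← Measure.map_apply hX measurableSet_Icc, (hB.hasLaw_eval T).map_eq,
    gaussianReal_apply _ hT, ENNReal.ofReal_mul (gaussianPDFReal_nonneg _ _ _),
    ← Real.volume_Icc, ← setLIntegral_const]
  exact lintegral_mono fun x =>
    ENNReal.ofReal_le_ofReal (gaussianPDFReal_le_gaussianPDFReal_self _ _ _)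

/-- The lower bound for the probability of a bridge of unit duration. The factor `exp (-(1 / 8))`
comes from the Gaussian density within `1 / 2` of its mean, `1 / 4` from the endpoints `1 / 2` of
the killed transition density. -/
noncomputable def barrierConstant (γ : ℝ) : ℝ := exp (-barrierCost γ) * (exp (-(1 / 8)) / 4)

lemma barrierConstant_pos (γ : ℝ) : 0 < barrierConstant γ := by
  unfold barrierConstant
  positivity

lemma barrierConstant_le_survivalLaw (hX : ∀ t, Measurable (X t)) (hB : IsPreBrownianReal X P)
    (hγ : 0 ≤ γ) (hδ₁ : δ ≤ 1) {n : ℕ} (hT : 1 ≤ n * δ) :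
    ENNReal.ofReal (barrierConstant γ / (n * δ : ℝ≥0)) *
        ENNReal.ofReal (gaussianPDFReal 0 (n * δ) 0 * (0 - -(1 / 2))) ≤
      survivalLaw P X δ (smoothLogBarrier γ (n * δ) δ) n (Icc (1 / 2) 1) := by
  obtain ⟨j, rfl⟩ : ∃ j, n = j + 1 :=
    Nat.exists_eq_succ_of_ne_zero fun h => by simp [h] at hT
  have hδ₀ : δ ≠ 0 := fun h => by simp [h] at hT
  have hpos : Icc (1 / 2 : ℝ) 1 ⊆ Ioi 0 := fun y hy => one_half_pos.trans_le hy.1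
  have hT' : (1 : ℝ) ≤ (j + 1 : ℕ) * δ := mod_cast hT
  set T : ℝ≥0 := (j + 1 : ℕ) * δ
  set b := smoothLogBarrier γ ((j + 1 : ℕ) * δ) δ
  have := hB.isGaussianProcess.isProbabilityMeasure
  have hdensity {y : ℝ} (hy : y ∈ Icc (1 / 2) 1) :
      ENNReal.ofReal (barrierConstant γ / T * gaussianPDFReal 0 T 0) ≤ girsanovDensity δ b j y := by
    refine le_trans ?_ (exp_neg_barrierCost_mul_killedPDF_le_girsanovDensity hγ hδ₀ hδ₁ j hT'
      (Icc_subset_Icc_left (by norm_num) hy))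
    rw [killedPDF, ← ENNReal.ofReal_mul (exp_nonneg _), barrierConstant, mul_div_assoc, mul_assoc]
    gcongr
    exact gaussianPDFReal_zero_mul_le_killedPDFReal hT hy
  calc ENNReal.ofReal (barrierConstant γ / T) *
        ENNReal.ofReal (gaussianPDFReal 0 T 0 * (0 - -(1 / 2)))
      = ∫⁻ _ in Icc (1 / 2 : ℝ) 1,
          ENNReal.ofReal (barrierConstant γ / T * gaussianPDFReal 0 T 0) := by
        have := (barrierConstant_pos γ).le
        rw [setLIntegral_const, Real.volume_Icc, ← ENNReal.ofReal_mul (by positivity),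
          ← ENNReal.ofReal_mul (mul_nonneg (by positivity) (gaussianPDFReal_nonneg _ _ _))]
        congr 1
        ring
    _ ≤ ∫⁻ y in Icc (1 / 2 : ℝ) 1, girsanovDensity δ b j y :=
        setLIntegral_mono' measurableSet_Icc fun _ => hdensity
    _ = (volume.restrict (Ioi 0)).withDensity (girsanovDensity δ b j) (Icc (1 / 2) 1) := by
        rw [withDensity_apply _ measurableSet_Icc, Measure.restrict_restrict measurableSet_Icc,
          inter_eq_left.2 hpos]
    _ ≤ survivalLaw P X δ b (j + 1) (Icc (1 / 2) 1) :=
        girsanovDensity_le_survivalLaw hδ₀ hX hB (by simp [b]) j _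

lemma ofReal_div_le_measure_bridgeGridEvent (hX : ∀ t, Measurable (X t))
    (hB : IsPreBrownianReal X P) (hγ : 0 ≤ γ) (hδ₁ : δ ≤ 1) {n : ℕ} (hT : 1 ≤ n * δ) :
    ENNReal.ofReal (barrierConstant γ / (n * δ : ℝ≥0)) ≤
      P (bridgeGridEvent X δ n (logBarrier γ (n * δ))) := by
  have hT₀ : (n * δ : ℝ≥0) ≠ 0 := (one_pos.trans_le hT).ne'
  set b := smoothLogBarrier γ (n * δ) δ
  have hlaw : survivalLaw P X δ b n (Icc (1 / 2) 1) =
      P (survivalEvent X δ b n ∩ barrierGap X δ b n ⁻¹' Icc (1 / 2) 1) := by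
    have hgap := measurable_barrierGap hX n (b := b) (δ := δ)
    rw [survivalLaw, Measure.map_apply hgap measurableSet_Icc,
      Measure.restrict_apply (hgap measurableSet_Icc), inter_comm]
  have hpdf : 0 < gaussianPDFReal 0 (n * δ) 0 := gaussianPDFReal_pos _ _ _ hT₀
  have hchain := calc
    ENNReal.ofReal (barrierConstant γ / (n * δ : ℝ≥0)) *
        ENNReal.ofReal (gaussianPDFReal 0 (n * δ) 0 * (0 - -(1 / 2)))
      ≤ survivalLaw P X δ b n (Icc (1 / 2) 1) := barrierConstant_le_survivalLaw hX hB hγ hδ₁ hT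
    _ ≤ P (bridgeGridEvent X δ n (logBarrier γ (n * δ)) ∩ X (n * δ) ⁻¹' Icc (-(1 / 2)) 0) :=
        hlaw.trans_le (measure_mono (survivalEvent_inter_preimage_subset_bridgeGridEvent hγ n))
    _ = P (bridgeGridEvent X δ n (logBarrier γ (n * δ))) * P (X (n * δ) ⁻¹' Icc (-(1 / 2)) 0) :=
        measure_bridgeGridEvent_inter_eval hX hB measurableSet_Icc
    _ ≤ P (bridgeGridEvent X δ n (logBarrier γ (n * δ))) *
          ENNReal.ofReal (gaussianPDFReal 0 (n * δ) 0 * (0 - -(1 / 2))) := by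
        gcongr
        exact measure_preimage_Icc_eval_le (hX _) hB hT₀ _ _
  refine (ENNReal.mul_le_mul_iff_left ?_ ENNReal.ofReal_ne_top).1 hchain
  simpa using hpdf

end GridBound

section ContinuousTime

variable {Ω : Type*} {X : ℝ≥0 → Ω → ℝ} {δ : ℝ≥0} {n : ℕ} {f g : ℝ≥0 → ℝ}

lemma le_of_forall_dyadic_le (hf : Continuous f) (hg : Continuous g) (hδ : δ ≠ 0)
    (h : ∀ q : ℕ, ∀ k ≤ n * 2 ^ q, f (k * (δ / 2 ^ q)) ≤ g (k * (δ / 2 ^ q))) {t : ℝ≥0}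
    (ht : t ≤ n * δ) : f t ≤ g t := by
  have hfloor :
      Tendsto (fun q : ℕ => (⌊(t / δ : ℝ) * 2 ^ q⌋₊ / 2 ^ q : ℝ≥0)) atTop (𝓝 (t / δ)) := by
    have hpow := tendsto_pow_atTop_atTop_of_one_lt (one_lt_two (α := ℝ))
    refine NNReal.tendsto_coe.1 ?_
    push_cast
    exact (tendsto_nat_floor_mul_div_atTop (t / δ).coe_nonneg).comp hpow
  have htime := hfloor.mul_const δ
  rw [div_mul_cancel₀ t hδ] at htime
  refine le_of_tendsto_of_tendsto' ((hf.tendsto t).comp htime) ((hg.tendsto t).comp htime)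
    fun q => ?_
  have hratio : (t / δ : ℝ) ≤ n := mod_cast div_le_of_le_mul₀ zero_le zero_le ht
  have hindex : ⌊(t / δ : ℝ) * 2 ^ q⌋₊ ≤ n * 2 ^ q := Nat.floor_le_of_le (by push_cast; gcongr)
  simpa only [Function.comp_apply, div_mul_eq_mul_div, mul_div_assoc] using h q _ hindex

lemma bridgeGridEvent_div_subset {m : ℕ} (hm : m ≠ 0) :
    bridgeGridEvent X (δ / m) (n * m) f ⊆ bridgeGridEvent X δ n f := by
  intro ω h k hk
  have hmesh (i : ℕ) : ((i * m : ℕ) : ℝ≥0) * (δ / m) = i * δ := by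
    have : (m : ℝ≥0) ≠ 0 := Nat.cast_ne_zero.2 hm
    push_cast
    field_simp
  simpa only [hmesh] using h (k * m) (Nat.mul_le_mul_right m hk)

lemma antitone_bridgeGridEvent_dyadic :
    Antitone fun q : ℕ => bridgeGridEvent X (δ / 2 ^ q) (n * 2 ^ q) f := by
  refine antitone_nat_of_succ_le fun q => ?_
  have h := bridgeGridEvent_div_subset (X := X) (δ := δ / 2 ^ q) (n := n * 2 ^ q) (f := f)
    two_ne_zero
  rwa [Nat.cast_two, div_div, ← pow_succ, mul_assoc, ← pow_succ] at h

lemma continuous_brownianBridge {ω : Ω} (hω : Continuous fun t => X t ω) (T : ℝ≥0) :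
    Continuous fun t => brownianBridge X T t ω := by
  unfold brownianBridge
  fun_prop

lemma continuous_logBarrier (γ : ℝ) (T : ℝ≥0) : Continuous (logBarrier γ T) := by
  refine continuous_const.sub (continuous_const.mul (Continuous.log (by fun_prop) fun t => ?_))
  exact (one_pos.trans_le (le_max_right _ _)).ne'

variable [MeasurableSpace Ω] {P : Measure Ω}

lemma logBarrier_anti {γ γ' : ℝ} (h : γ ≤ γ') (T t : ℝ≥0) : logBarrier γ' T t ≤ logBarrier γ T t :=
  sub_le_sub_left (mul_le_mul_of_nonneg_right h (log_nonneg (le_max_right _ _))) 1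

lemma le_measure_of_forall_le_measure_bridgeGridEvent [IsFiniteMeasure P]
    (hX : ∀ t, Measurable (X t)) (hcont : ∀ᵐ ω ∂P, Continuous fun t => X t ω) (hf : Continuous f)
    (hδ : δ ≠ 0) {a : ℝ≥0∞}
    (h : ∀ q : ℕ, a ≤ P (bridgeGridEvent X (δ / 2 ^ q) (n * 2 ^ q) f)) :
    a ≤ P {ω | ∀ t ≤ n * δ, brownianBridge X (n * δ) t ω ≤ f t} := by
  have hlimit := tendsto_measure_iInter_atTop (μ := P)
    (fun q => (measurableSet_bridgeGridEvent (f := f) hX).nullMeasurableSet)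
    (antitone_bridgeGridEvent_dyadic (X := X) (δ := δ) (n := n)) ⟨0, measure_ne_top _ _⟩
  refine (ge_of_tendsto' hlimit h).trans (measure_mono_ae ?_)
  filter_upwards [hcont] with ω hω hgrid t ht
  refine le_of_forall_dyadic_le (continuous_brownianBridge hω _) hf hδ (fun q k hk => ?_) ht
  have htotal : ((n * 2 ^ q : ℕ) : ℝ≥0) * (δ / 2 ^ q) = n * δ := by
    push_cast
    field_simp
  rw [← htotal]
  exact mem_iInter.1 hgrid q k hk

lemma ofReal_div_le_measure_brownianBridge_le_logBarrier (hX : ∀ t, Measurable (X t))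
    (hB : IsBrownianReal X P) {γ : ℝ} (hγ : 0 ≤ γ) {T : ℝ≥0} (hT : 1 ≤ T) :
    ENNReal.ofReal (barrierConstant γ / T) ≤
      P {ω | ∀ t ≤ T, brownianBridge X T t ω ≤ logBarrier γ T t} := by
  have := hB.isGaussianProcess.isProbabilityMeasure
  have hT₀ : T ≠ 0 := (one_pos.trans_le hT).ne'
  have hn : (⌈T⌉₊ : ℝ≥0) ≠ 0 := ((one_pos.trans_le hT).trans_le (Nat.le_ceil T)).ne'
  set δ : ℝ≥0 := T / ⌈T⌉₊
  have htotal : ⌈T⌉₊ * δ = T := mul_div_cancel₀ T hn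
  have hδ₁ : δ ≤ 1 := div_le_one_of_le₀ (Nat.le_ceil T) zero_le
  rw [← htotal]
  refine le_measure_of_forall_le_measure_bridgeGridEvent hX hB.cont (continuous_logBarrier _ _)
    (div_ne_zero hT₀ hn) fun q => ?_
  have hmesh : ((⌈T⌉₊ * 2 ^ q : ℕ) : ℝ≥0) * (δ / 2 ^ q) = ⌈T⌉₊ * δ := by
    push_cast
    field_simp
  rw [← hmesh]
  refine ofReal_div_le_measure_bridgeGridEvent hX hB.toIsPreBrownianReal hγ ?_ ?_
  · exact div_le_one_of_le₀ (hδ₁.trans (one_le_pow₀ one_le_two)) zero_le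
  · rwa [hmesh, htotal]

end ContinuousTime

end BridgeBarrier

open scoped NNReal in
theorem brownian_bridge_log_barrier_lower_bound_general {Ω : Type*} [MeasurableSpace Ω]
    {P : Measure Ω} {X : ℝ≥0 → Ω → ℝ} (hX : ∀ t, Measurable (X t)) (hB : IsBrownianReal X P)
    (γ : ℝ) :
    ∃ c : ℝ, 0 < c ∧ ∀ T : ℝ≥0, 1 ≤ T →
      ENNReal.ofReal (c / T) ≤
        P {ω | ∀ t ≤ T, X t ω - (t / T) * X T ω ≤
          1 - γ * Real.log (max (min (t : ℝ) (T - t)) 1)} := by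
  refine ⟨BridgeBarrier.barrierConstant |γ|, BridgeBarrier.barrierConstant_pos _, fun T hT => ?_⟩
  exact (BridgeBarrier.ofReal_div_le_measure_brownianBridge_le_logBarrier hX hB (abs_nonneg γ)
    hT).trans (measure_mono fun ω hω t ht =>
      (hω t ht).trans (BridgeBarrier.logBarrier_anti (le_abs_self γ) T t))

/-- Fix `γ > 0` and let `B` be a standard Brownian motion (a continuous centered Gaussian
process with covariance `min s t`).  There is `c > 0` (depending on `γ`) such that for every
`n ≥ 1`, the Brownian bridge `W^n_t = B_t - (t/n) B_n` on `[0,n]` satisfies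
`P(W^n_t ≤ 1 - γ log((t ∧ (n-t)) ∨ 1) for all t ∈ [0,n]) ≥ c / n`. -/
theorem brownian_bridge_log_barrier_lower_bound {Ω : Type*} [MeasurableSpace Ω]
    (P : Measure Ω) [IsProbabilityMeasure P] (B : ℝ → Ω → ℝ)
    (hmeas : ∀ t, Measurable (B t))
    (hcont : ∀ ω, Continuous fun t => B t ω)
    (hgauss : ∀ (k : ℕ) (t : Fin k → ℝ), (∀ i, 0 ≤ t i) → ∀ a : Fin k → ℝ,
      Measure.map (fun ω => ∑ i, a i * B (t i) ω) P
        = gaussianReal 0 (Real.toNNReal (∑ i, ∑ j, a i * a j * min (t i) (t j))))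
    (γ : ℝ) (hγ : 0 < γ) :
    ∃ c : ℝ, 0 < c ∧ ∀ n : ℕ, 1 ≤ n →
      ENNReal.ofReal (c / n)
        ≤ P {ω | ∀ t ∈ Set.Icc (0 : ℝ) n,
            B t ω - (t / n) * B n ω ≤ 1 - γ * Real.log (max (min t ((n : ℝ) - t)) 1)} := by
  have hB : IsBrownianReal (fun t : NNReal => B t) P :=
    { toIsPreBrownianReal :=
        BridgeBarrier.isPreBrownianReal_of_map_sum_eq_gaussianReal (fun t => hmeas t)
          fun k t a => by simpa using hgauss k (fun i => t i) (fun i => (t i).coe_nonneg) a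
      cont := ae_of_all P fun ω => (hcont ω).comp NNReal.continuous_coe }
  obtain ⟨c, hc, hbound⟩ :=
    brownian_bridge_log_barrier_lower_bound_general (fun t => hmeas t) hB γ
  refine ⟨c, hc, fun n hn => (hbound n (mod_cast hn)).trans (measure_mono fun ω hω t ht => ?_)⟩
  lift t to NNReal using ht.1
  exact mod_cast hω t (mod_cast ht.2)
end

section
/- Let (X_1,…,X_n) and (Y_1,…,Y_n) be centered Gaussian vectors with E[X_i²] = E[Y_i²] for all i and Cov(X_i, X_j) ≤ Cov(Y_i, Y_j) for all i, j. Then for every t_1,…,t_n ∈ ℝ, P(X_i ≤ t_i for all i) ≤ P(Y_i ≤ t_i for all i); in particular P(max_i X_i ≤ t) ≤ P(max_i Y_i ≤ t) for all t, i.e., max_i Y_i is stochastically dominated by max_i X_i. -/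
open MeasureTheory ProbabilityTheory

/-- `X` is a centered Gaussian vector: every linear combination of its coordinates is a
centered real Gaussian (with its own variance). -/
def IsCenteredGaussianVec {Ω : Type*} [MeasurableSpace Ω] (P : Measure Ω) {n : ℕ}
    (X : Fin n → Ω → ℝ) : Prop :=
  ∀ a : Fin n → ℝ, Measure.map (fun ω => ∑ i, a i * X i ω) P
    = gaussianReal 0 (Real.toNNReal (∫ ω, (∑ i, a i * X i ω) ^ 2 ∂P))

/-!
The orthant probability is the limit of the expectations of `f x = ∏ i, φ i (x i)`, where each `φ i`
is a smooth antitone approximation of the indicator of `Iic (t i)`. Off the diagonal, the second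
derivatives of such an `f` are nonnegative, so raising the covariances while keeping the variances
can only increase `∫ y, D²f x (y, y)`.

This is turned into a comparison of `∫ f` by Lindeberg's swapping argument. By Gaussian stability,
moving from `θ` to `θ + h` along the path `√(1 - θ) X + √θ Y` amounts to replacing an independent
summand `√h X` by `√h Y`. As both are centered, Taylor's formula shows that the swap changes `∫ f`
by `h / 2` times the difference of the Hessian integrals, which is nonnegative, up to an error
`O(h ^ (3 / 2))`. Over `N` steps of length `1 / N` the errors add up to `O(N ^ (-1 / 2))`.
-/

open Set Filter Topology

section BoundedDerivatives

variable {E F : Type*} [NormedAddCommGroup E] [NormedSpace ℝ E]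
  [NormedAddCommGroup F] [NormedSpace ℝ F] {n : ℕ}

/-- `f` is `n` times continuously differentiable, and `f` and its derivatives up to order `n` are
bounded: the class `C_b^n` of test functions. -/
structure HasBoundedDerivs (n : ℕ) (f : E → F) : Prop where
  contDiff : ContDiff ℝ n f
  exists_norm_le : ∀ k ≤ n, ∃ C, ∀ x, ‖iteratedFDeriv ℝ k f x‖ ≤ C

namespace HasBoundedDerivs

theorem exists_norm_apply_le {f : E → F} (hf : HasBoundedDerivs n f) : ∃ C, ∀ x, ‖f x‖ ≤ C := by
  simpa only [norm_iteratedFDeriv_zero] using hf.exists_norm_le 0 n.zero_le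

protected theorem const (c : F) : HasBoundedDerivs n (fun _ : E ↦ c) where
  contDiff := contDiff_const
  exists_norm_le k _ := by
    refine ⟨‖c‖, fun x ↦ ?_⟩
    rcases eq_or_ne k 0 with rfl | hk
    · rw [norm_iteratedFDeriv_zero]
    · simp [iteratedFDeriv_const_of_ne hk]

protected theorem mul {f g : E → ℝ} (hf : HasBoundedDerivs n f) (hg : HasBoundedDerivs n g) :
    HasBoundedDerivs n (fun x ↦ f x * g x) where
  contDiff := hf.contDiff.mul hg.contDiff
  exists_norm_le k hk := by
    choose! A hA using hf.exists_norm_le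
    choose! B hB using hg.exists_norm_le
    refine ⟨∑ i ∈ Finset.range (k + 1), k.choose i * A i * B (k - i), fun x ↦ ?_⟩
    refine (norm_iteratedFDeriv_mul_le hf.contDiff hg.contDiff x (by exact_mod_cast hk)).trans
      (Finset.sum_le_sum fun i hi ↦ ?_)
    have hik : i ≤ k := Finset.mem_range_succ_iff.mp hi
    have hAi := hA i (hik.trans hk) x
    have hA0 : 0 ≤ A i := (norm_nonneg _).trans hAi
    gcongr
    exact hB (k - i) ((k.sub_le i).trans hk) x

protected theorem prod {ι : Type*} (u : Finset ι) {f : ι → E → ℝ}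
    (hf : ∀ i, HasBoundedDerivs n (f i)) : HasBoundedDerivs n (fun x ↦ ∏ i ∈ u, f i x) := by
  classical
  induction u using Finset.induction_on with
  | empty => simpa only [Finset.prod_empty] using HasBoundedDerivs.const 1
  | insert i u hi ih => simpa only [Finset.prod_insert hi] using (hf i).mul ih

theorem comp_continuousLinearMap {G : Type*} [NormedAddCommGroup G] [NormedSpace ℝ G] {f : E → F}
    (hf : HasBoundedDerivs n f) (L : G →L[ℝ] E) : HasBoundedDerivs n (fun x ↦ f (L x)) where
  contDiff := hf.contDiff.comp L.contDiff
  exists_norm_le k hk := by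
    obtain ⟨C, hC⟩ := hf.exists_norm_le k hk
    refine ⟨C * ∏ _i : Fin k, ‖L‖, fun x ↦ ?_⟩
    have hcomp := L.iteratedFDeriv_comp_right hf.contDiff x (i := k) (by exact_mod_cast hk)
    rw [Function.comp_def] at hcomp
    rw [hcomp]
    refine (ContinuousMultilinearMap.norm_compContinuousLinearMap_le _ _).trans ?_
    gcongr
    exact hC _

theorem comp_sub_const {f : E → F} (hf : HasBoundedDerivs n f) (a : E) :
    HasBoundedDerivs n (fun x ↦ f (x - a)) where
  contDiff := hf.contDiff.comp (contDiff_id.sub contDiff_const)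
  exists_norm_le k hk := by
    obtain ⟨C, hC⟩ := hf.exists_norm_le k hk
    exact ⟨C, fun x ↦ by simpa only [iteratedFDeriv_comp_sub] using hC (x - a)⟩

end HasBoundedDerivs

theorem hasBoundedDerivs_smoothTransition : HasBoundedDerivs n Real.smoothTransition where
  contDiff := Real.smoothTransition.contDiff
  exists_norm_le k _ := by
    rcases k with _ | k
    · refine ⟨1, fun x ↦ ?_⟩
      rw [norm_iteratedFDeriv_zero, Real.norm_of_nonneg (Real.smoothTransition.nonneg x)]
      exact Real.smoothTransition.le_one x
    have hsupp : HasCompactSupport (deriv Real.smoothTransition) := by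
      refine HasCompactSupport.intro (isCompact_Icc (a := 0) (b := 1)) fun x hx ↦ ?_
      rcases lt_or_ge x 0 with h0 | h0
      · have : Real.smoothTransition =ᶠ[𝓝 x] fun _ ↦ 0 :=
          (eventually_lt_nhds h0).mono fun y hy ↦ Real.smoothTransition.zero_of_nonpos hy.le
        rw [this.deriv_eq, deriv_const]
      · have h1 : 1 < x := by_contra fun h ↦ hx ⟨h0, not_lt.mp h⟩
        have : Real.smoothTransition =ᶠ[𝓝 x] fun _ ↦ 1 :=
          (eventually_gt_nhds h1).mono fun y hy ↦ Real.smoothTransition.one_of_one_le hy.le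
        rw [this.deriv_eq, deriv_const]
    have hcont : Continuous (iteratedFDeriv ℝ k (deriv Real.smoothTransition)) := by
      have h : ContDiff ℝ (k + 1 : ℕ) Real.smoothTransition := Real.smoothTransition.contDiff
      exact (contDiff_succ_iff_deriv.mp h).2.2.continuous_iteratedFDeriv le_rfl
    obtain ⟨C, hC⟩ := (hsupp.iteratedFDeriv k).exists_bound_of_continuous hcont
    refine ⟨C, fun x ↦ ?_⟩
    rw [norm_iteratedFDeriv_eq_norm_iteratedDeriv, iteratedDeriv_succ',
      ← norm_iteratedFDeriv_eq_norm_iteratedDeriv]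
    exact hC x

end BoundedDerivatives

section Taylor

variable {E : Type*} [NormedAddCommGroup E] [NormedSpace ℝ E] {f : E → ℝ} {K : ℝ}

theorem abs_sub_taylor_two_le (hf : ContDiff ℝ 3 f) (hK : ∀ x, ‖iteratedFDeriv ℝ 3 f x‖ ≤ K)
    (x y : E) :
    |f (x + y) - f x - fderiv ℝ f x y - fderiv ℝ (fderiv ℝ f) x y y / 2| ≤ K * ‖y‖ ^ 3 := by
  have hremainder : ‖∫ t in (0 : ℝ)..1,
      (1 - t) ^ 2 • iteratedFDeriv ℝ 3 f (x + t • y) (fun _ ↦ y)‖ ≤ K * ‖y‖ ^ 3 * |1 - 0| := by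
    refine intervalIntegral.norm_integral_le_of_norm_le_const fun t ht ↦ ?_
    rw [uIoc_of_le zero_le_one] at ht
    have hderiv : ‖iteratedFDeriv ℝ 3 f (x + t • y) fun _ ↦ y‖ ≤ K * ‖y‖ ^ 3 := by
      refine (ContinuousMultilinearMap.le_of_opNorm_le (hK _) _).trans_eq ?_
      simp
    have hweight : ‖(1 - t) ^ 2‖ ≤ 1 := by
      rw [Real.norm_of_nonneg (sq_nonneg _)]
      exact pow_le_one₀ (by linarith [ht.2]) (by linarith [ht.1])
    rw [norm_smul]
    exact (mul_le_of_le_one_left (norm_nonneg _) hweight).trans hderiv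
  have hexpand : f (x + y) - f x - fderiv ℝ f x y - fderiv ℝ (fderiv ℝ f) x y y / 2
      = (∫ t in (0 : ℝ)..1, (1 - t) ^ 2 • iteratedFDeriv ℝ 3 f (x + t • y) (fun _ ↦ y)) / 2 := by
    rw [map_add_eq_sum_add_integral_iteratedFDeriv (n := 2) fun t _ ↦ hf.contDiffAt]
    simp only [Finset.sum_range_succ, Finset.range_zero, Finset.sum_empty, Nat.factorial,
      iteratedFDeriv_zero_apply, iteratedFDeriv_one_apply, iteratedFDeriv_two_apply, Nat.reduceAdd,
      Nat.reduceMul, Nat.succ_eq_add_one, Nat.cast_one, Nat.cast_ofNat, inv_one,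
      smul_eq_mul]
    ring
  rw [Real.norm_eq_abs, sub_zero, abs_one, mul_one] at hremainder
  rw [hexpand, abs_div, abs_two]
  exact (half_le_self (abs_nonneg _)).trans hremainder

end Taylor

section Swap

theorem integrable_integral_comp_add {M G : Type*} [AddMonoid M] [MeasurableSpace M]
    [MeasurableAdd₂ M] [NormedAddCommGroup G] [NormedSpace ℝ G] {μ ν : Measure M}
    [SFinite ν] {f : M → G} (hf : Integrable f (μ ∗ ν)) :
    Integrable (fun x ↦ ∫ y, f (x + y) ∂ν) μ :=
  (hf.comp_measurable measurable_add).integral_prod_left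

variable {E : Type*} [NormedAddCommGroup E] [NormedSpace ℝ E] [MeasurableSpace E]
  {γ μ ν : Measure E} {f : E → ℝ} {K : ℝ}

theorem integrable_clm_apply_self (hμ : MemLp id 2 μ) (B : E →L[ℝ] E →L[ℝ] ℝ) :
    Integrable (fun x ↦ B x x) μ := by
  have hquad : Continuous fun x ↦ B x x := by fun_prop
  refine ((hμ.integrable_norm_pow two_ne_zero).const_mul ‖B‖).mono'
    (hquad.comp_aestronglyMeasurable hμ.aestronglyMeasurable) (ae_of_all _ fun x ↦ ?_)
  exact (B.le_opNorm₂ x x).trans_eq (by rw [id_eq]; ring)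

theorem HasBoundedDerivs.integrable [OpensMeasurableSpace E] [IsFiniteMeasure μ]
    {n : ℕ} (hf : HasBoundedDerivs n f) : Integrable f μ := by
  obtain ⟨C, hC⟩ := hf.exists_norm_apply_le
  exact .of_bound hf.contDiff.continuous.aestronglyMeasurable C (ae_of_all _ hC)

variable [CompleteSpace E]

theorem abs_integral_comp_add_sub_le [BorelSpace E] [IsProbabilityMeasure μ]
    (hμ : MemLp id 3 μ) (hμ_mean : ∫ y, y ∂μ = 0) (hf : HasBoundedDerivs 3 f)
    (hK : ∀ x, ‖iteratedFDeriv ℝ 3 f x‖ ≤ K) (x : E) :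
    |∫ y, f (x + y) ∂μ - (f x + (∫ y, fderiv ℝ (fderiv ℝ f) x y y ∂μ) / 2)|
      ≤ K * ∫ y, ‖y‖ ^ 3 ∂μ := by
  have hid : Integrable id μ := hμ.integrable (by norm_num)
  have hf_int : Integrable (fun y ↦ f (x + y)) μ := by
    simpa only [sub_neg_eq_add, add_comm] using (hf.comp_sub_const (-x)).integrable
  have hlin_int : Integrable (fun y ↦ fderiv ℝ f x y) μ := (fderiv ℝ f x).integrable_comp hid
  have hlin : ∫ y, fderiv ℝ f x y ∂μ = 0 := by
    rw [(fderiv ℝ f x).integral_comp_id_comm hid, hμ_mean, map_zero]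
  have hquad_int : Integrable (fun y ↦ fderiv ℝ (fderiv ℝ f) x y y / 2) μ :=
    (integrable_clm_apply_self (hμ.mono_exponent (by norm_num)) _).div_const 2
  have hconst_int : Integrable (fun y ↦ f (x + y) - f x) μ := hf_int.sub (integrable_const _)
  have haffine_int : Integrable (fun y ↦ f (x + y) - f x - fderiv ℝ f x y) μ :=
    hconst_int.sub hlin_int
  have hremainder : ∫ y, f (x + y) ∂μ - (f x + (∫ y, fderiv ℝ (fderiv ℝ f) x y y ∂μ) / 2)
      = ∫ y, (f (x + y) - f x - fderiv ℝ f x y - fderiv ℝ (fderiv ℝ f) x y y / 2) ∂μ := by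
    rw [integral_sub haffine_int hquad_int, integral_sub hconst_int hlin_int,
      integral_sub hf_int (integrable_const _), integral_div, hlin, integral_const,
      probReal_univ, one_smul]
    ring
  rw [hremainder, ← Real.norm_eq_abs, ← integral_const_mul]
  exact norm_integral_le_of_norm_le ((hμ.integrable_norm_pow three_ne_zero).const_mul K)
    (ae_of_all _ fun y ↦ abs_sub_taylor_two_le hf.contDiff hK x y)

theorem integral_conv_le_integral_conv_add [BorelSpace E] [SecondCountableTopology E]
    [IsProbabilityMeasure γ] [IsProbabilityMeasure μ] [IsProbabilityMeasure ν]
    (hμ : MemLp id 3 μ) (hν : MemLp id 3 ν) (hμ_mean : ∫ y, y ∂μ = 0) (hν_mean : ∫ y, y ∂ν = 0)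
    (hf : HasBoundedDerivs 3 f) (hK : ∀ x, ‖iteratedFDeriv ℝ 3 f x‖ ≤ K)
    (hhess : ∀ x, ∫ y, fderiv ℝ (fderiv ℝ f) x y y ∂μ ≤ ∫ y, fderiv ℝ (fderiv ℝ f) x y y ∂ν) :
    ∫ x, f x ∂(γ ∗ μ) ≤ ∫ x, f x ∂(γ ∗ ν) + K * (∫ y, ‖y‖ ^ 3 ∂μ + ∫ y, ‖y‖ ^ 3 ∂ν) := by
  have hpointwise (x : E) : ∫ y, f (x + y) ∂μ
      ≤ ∫ y, f (x + y) ∂ν + K * (∫ y, ‖y‖ ^ 3 ∂μ + ∫ y, ‖y‖ ^ 3 ∂ν) := by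
    have hμ_taylor := abs_le.mp (abs_integral_comp_add_sub_le hμ hμ_mean hf hK x)
    have hν_taylor := abs_le.mp (abs_integral_comp_add_sub_le hν hν_mean hf hK x)
    linarith [hhess x]
  have hf_intμ : Integrable f (γ ∗ μ) := hf.integrable
  have hf_intν : Integrable f (γ ∗ ν) := hf.integrable
  rw [integral_conv hf_intμ, integral_conv hf_intν]
  calc ∫ x, ∫ y, f (x + y) ∂μ ∂γ
      ≤ ∫ x, (∫ y, f (x + y) ∂ν + K * (∫ y, ‖y‖ ^ 3 ∂μ + ∫ y, ‖y‖ ^ 3 ∂ν)) ∂γ :=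
        integral_mono (integrable_integral_comp_add hf_intμ)
          ((integrable_integral_comp_add hf_intν).add (integrable_const _)) hpointwise
    _ = _ := by
        rw [integral_add (integrable_integral_comp_add hf_intν) (integrable_const _),
          integral_const, probReal_univ, one_smul]

end Swap

section Dilation

variable {E : Type*} [NormedAddCommGroup E] [NormedSpace ℝ E] [MeasurableSpace E]
  {μ ν : Measure E}

/-- The law of `c • X` when `X` has law `μ`. It is written with a continuous linear map so that
instances such as `IsGaussian` are found for it. -/
noncomputable abbrev dilate (c : ℝ) (μ : Measure E) : Measure E :=
  μ.map (c • ContinuousLinearMap.id ℝ E)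

theorem dilate_one (μ : Measure E) : dilate 1 μ = μ := by
  rw [dilate, one_smul]
  exact Measure.map_id

theorem dilate_zero (μ : Measure E) [IsProbabilityMeasure μ] : dilate 0 μ = Measure.dirac 0 := by
  rw [dilate, zero_smul]
  exact (Measure.map_const μ 0).trans (by rw [measure_univ, one_smul])

variable [BorelSpace E]

theorem integral_dilate {F : Type*} [NormedAddCommGroup F] [NormedSpace ℝ F] {f : E → F} {c : ℝ}
    (hf : AEStronglyMeasurable f (dilate c μ)) : ∫ x, f x ∂(dilate c μ) = ∫ x, f (c • x) ∂μ :=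
  integral_map (ContinuousLinearMap.continuous _).measurable.aemeasurable hf

variable [SecondCountableTopology E]

theorem integral_id_dilate (c : ℝ) (μ : Measure E) : ∫ x, x ∂(dilate c μ) = c • ∫ x, x ∂μ := by
  rw [integral_dilate (f := fun x ↦ x) (by fun_prop), integral_smul]

theorem integral_norm_pow_dilate (c : ℝ) (μ : Measure E) (k : ℕ) :
    ∫ x, ‖x‖ ^ k ∂(dilate c μ) = |c| ^ k * ∫ x, ‖x‖ ^ k ∂μ := by
  rw [integral_dilate (by fun_prop), ← integral_const_mul]
  simp_rw [norm_smul, mul_pow, Real.norm_eq_abs]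

theorem integral_clm_apply_self_dilate (c : ℝ) (μ : Measure E) (B : E →L[ℝ] E →L[ℝ] ℝ) :
    ∫ x, B x x ∂(dilate c μ) = c ^ 2 * ∫ x, B x x ∂μ := by
  rw [integral_dilate (by fun_prop), ← integral_const_mul]
  simp only [map_smul, smul_apply, smul_eq_mul, ← mul_assoc, pow_two]

/-- The law of `√(1 - θ) • X + √θ • Y` for independent `X`, `Y` with laws `μ`, `ν`: a path of
measures from `μ` to `ν` for `θ ∈ [0, 1]`. -/
noncomputable abbrev gaussianInterp (μ ν : Measure E) (θ : ℝ) : Measure E :=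
  dilate √(1 - θ) μ ∗ dilate √θ ν

theorem gaussianInterp_zero (μ ν : Measure E) [SFinite μ] [IsProbabilityMeasure ν] :
    gaussianInterp μ ν 0 = μ := by
  rw [gaussianInterp, sub_zero, Real.sqrt_one, Real.sqrt_zero, dilate_one, dilate_zero,
    Measure.conv_dirac_zero]

theorem gaussianInterp_one (μ ν : Measure E) [IsProbabilityMeasure μ] [SFinite ν] :
    gaussianInterp μ ν 1 = ν := by
  rw [gaussianInterp, sub_self, Real.sqrt_one, Real.sqrt_zero, dilate_one, dilate_zero,
    Measure.dirac_zero_conv]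

end Dilation

section GaussianStability

variable {E : Type*} [NormedAddCommGroup E] [NormedSpace ℝ E] [MeasurableSpace E] [BorelSpace E]
  [SecondCountableTopology E] [CompleteSpace E] {μ ν : Measure E}

theorem charFunDual_dilate_of_integral_eq_zero [IsGaussian μ] (hμ : ∫ x, x ∂μ = 0) (c : ℝ)
    (L : StrongDual ℝ E) :
    charFunDual (dilate c μ) L = Complex.exp (-((c ^ 2 * Var[L; μ] : ℝ) : ℂ) / 2) := by
  rw [charFunDual_map, IsGaussian.charFunDual_eq_of_integral_eq_zero hμ, ← variance_const_mul]
  congr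
  ext x
  simp

theorem dilate_conv_dilate [IsGaussian μ] {a b c : ℝ} (hμ : ∫ x, x ∂μ = 0)
    (habc : a ^ 2 + b ^ 2 = c ^ 2) : dilate a μ ∗ dilate b μ = dilate c μ := by
  refine Measure.ext_of_charFunDual (funext fun L ↦ ?_)
  simp_rw [charFunDual_conv, charFunDual_dilate_of_integral_eq_zero hμ, ← Complex.exp_add, ← habc]
  push_cast
  ring_nf

theorem gaussianInterp_eq_conv_dilate_left [IsGaussian μ] [SFinite ν] {θ h : ℝ}
    (hμ : ∫ x, x ∂μ = 0) (hh : 0 ≤ h) (hθh : θ + h ≤ 1) :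
    gaussianInterp μ ν θ = (dilate √(1 - (θ + h)) μ ∗ dilate √θ ν) ∗ dilate √h μ := by
  have hsplit : √(1 - (θ + h)) ^ 2 + √h ^ 2 = √(1 - θ) ^ 2 := by
    rw [Real.sq_sqrt (by linarith), Real.sq_sqrt hh, Real.sq_sqrt (by linarith)]
    ring
  rw [gaussianInterp, ← dilate_conv_dilate hμ hsplit, Measure.conv_assoc,
    Measure.conv_comm (dilate √h μ), Measure.conv_assoc]

theorem gaussianInterp_add_eq_conv_dilate_right [IsGaussian ν] {θ h : ℝ}
    (hν : ∫ x, x ∂ν = 0) (hθ : 0 ≤ θ) (hh : 0 ≤ h) :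
    gaussianInterp μ ν (θ + h) = (dilate √(1 - (θ + h)) μ ∗ dilate √θ ν) ∗ dilate √h ν := by
  have hsplit : √θ ^ 2 + √h ^ 2 = √(θ + h) ^ 2 := by
    rw [Real.sq_sqrt hθ, Real.sq_sqrt hh, Real.sq_sqrt (by linarith)]
  rw [gaussianInterp, ← dilate_conv_dilate hν hsplit, Measure.conv_assoc]

end GaussianStability

section Comparison

theorem le_of_forall_le_add_mul_sqrt_pow_three {g : ℝ → ℝ} {C : ℝ}
    (hg : ∀ θ h, 0 ≤ θ → 0 ≤ h → θ + h ≤ 1 → g θ ≤ g (θ + h) + C * √h ^ 3) : g 0 ≤ g 1 := by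
  have htelescope (N : ℕ) (hN : 0 < N) : g 0 ≤ g 1 + C * √(1 / N) := by
    have hpartial (k : ℕ) (hk : k ≤ N) : g 0 ≤ g (k / N) + k * (C * √(1 / N) ^ 3) := by
      induction k with
      | zero => simp
      | succ k ih =>
        have hsum : (k / N + 1 / N : ℝ) = (k + 1 : ℕ) / N := by push_cast; ring
        have hstep := hg (k / N) (1 / N) (by positivity) (by positivity) (by
          rw [hsum]
          exact div_le_one_of_le₀ (by exact_mod_cast hk) N.cast_nonneg)
        rw [hsum] at hstep
        push_cast at hstep ⊢
        linarith [ih (by lia)]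
    have hN' : (N : ℝ) ≠ 0 := by positivity
    have hlast := hpartial N le_rfl
    have hcube : N * (C * √(1 / N) ^ 3) = C * √(1 / N) := by
      rw [pow_succ, Real.sq_sqrt (by positivity)]
      field_simp
    rwa [div_self hN', hcube] at hlast
  have hlim : Tendsto (fun N : ℕ ↦ g 1 + C * √(1 / N)) atTop (𝓝 (g 1)) := by
    simpa using (tendsto_one_div_atTop_nhds_zero_nat (𝕜 := ℝ)).sqrt.const_mul C |>.const_add (g 1)
  exact ge_of_tendsto hlim ((eventually_gt_atTop 0).mono htelescope)

theorem integral_le_integral_of_forall_integral_fderiv_fderiv_le {E : Type*}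
    [NormedAddCommGroup E] [NormedSpace ℝ E] [MeasurableSpace E] [BorelSpace E]
    [SecondCountableTopology E] [CompleteSpace E] {μ ν : Measure E} [IsGaussian μ] [IsGaussian ν]
    {f : E → ℝ} (hμ : ∫ x, x ∂μ = 0) (hν : ∫ x, x ∂ν = 0) (hf : HasBoundedDerivs 3 f)
    (hhess : ∀ x, ∫ y, fderiv ℝ (fderiv ℝ f) x y y ∂μ ≤ ∫ y, fderiv ℝ (fderiv ℝ f) x y y ∂ν) :
    ∫ x, f x ∂μ ≤ ∫ x, f x ∂ν := by
  obtain ⟨K, hK⟩ := hf.exists_norm_le 3 le_rfl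
  suffices h : ∫ x, f x ∂(gaussianInterp μ ν 0) ≤ ∫ x, f x ∂(gaussianInterp μ ν 1) by
    rwa [gaussianInterp_zero, gaussianInterp_one] at h
  refine le_of_forall_le_add_mul_sqrt_pow_three (g := fun θ ↦ ∫ x, f x ∂(gaussianInterp μ ν θ))
    (C := K * (∫ y, ‖y‖ ^ 3 ∂μ + ∫ y, ‖y‖ ^ 3 ∂ν)) fun θ h hθ hh hθh ↦ ?_
  rw [gaussianInterp_eq_conv_dilate_left hμ hh hθh,
    gaussianInterp_add_eq_conv_dilate_right hν hθ hh]
  have hswap := integral_conv_le_integral_conv_add (γ := dilate √(1 - (θ + h)) μ ∗ dilate √θ ν)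
    (IsGaussian.memLp_id (dilate √h μ) 3 (by simp)) (IsGaussian.memLp_id (dilate √h ν) 3 (by simp))
    (by rw [integral_id_dilate, hμ, smul_zero]) (by rw [integral_id_dilate, hν, smul_zero]) hf hK
    fun x ↦ by
      simp_rw [integral_clm_apply_self_dilate]
      exact mul_le_mul_of_nonneg_left (hhess x) (sq_nonneg _)
  simp_rw [integral_norm_pow_dilate, abs_of_nonneg (Real.sqrt_nonneg h)] at hswap
  exact hswap.trans_eq (by ring)

end Comparison

section Orthant

variable {ι : Type*} [Fintype ι] {μ ν : Measure (ι → ℝ)}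

theorem clm_apply_apply_eq_sum_single [DecidableEq ι] (B : (ι → ℝ) →L[ℝ] (ι → ℝ) →L[ℝ] ℝ)
    (x y : ι → ℝ) : B x y = ∑ i, ∑ j, x i * y j * B (Pi.single i 1) (Pi.single j 1) := by
  conv_lhs => rw [pi_eq_sum_univ' x, pi_eq_sum_univ' y]
  simp only [map_sum, map_smul, sum_apply, smul_apply, smul_eq_mul, Finset.mul_sum, mul_assoc]
  rw [Finset.sum_comm]
  exact Finset.sum_congr rfl fun i _ ↦ Finset.sum_congr rfl fun j _ ↦ mul_left_comm _ _ _

theorem integral_clm_apply_self_le_of_integral_mul_le [DecidableEq ι]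
    {B : (ι → ℝ) →L[ℝ] (ι → ℝ) →L[ℝ] ℝ} (hμ : MemLp id 2 μ) (hν : MemLp id 2 ν)
    (hdiag : ∀ i, ∫ x, x i ^ 2 ∂μ = ∫ x, x i ^ 2 ∂ν)
    (hoff : ∀ i j, i ≠ j → ∫ x, x i * x j ∂μ ≤ ∫ x, x i * x j ∂ν)
    (hB : ∀ i j, i ≠ j → 0 ≤ B (Pi.single i 1) (Pi.single j 1)) :
    ∫ x, B x x ∂μ ≤ ∫ x, B x x ∂ν := by
  have hcoord {ρ : Measure (ι → ℝ)} (hρ : MemLp id 2 ρ) (i : ι) : MemLp (fun x ↦ x i) 2 ρ :=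
    (ContinuousLinearMap.proj (R := ℝ) (φ := fun _ : ι ↦ ℝ) i).comp_memLp' hρ
  have hexpand {ρ : Measure (ι → ℝ)} (hρ : MemLp id 2 ρ) : ∫ x, B x x ∂ρ
      = ∑ i, ∑ j, (∫ x, x i * x j ∂ρ) * B (Pi.single i 1) (Pi.single j 1) := by
    have hint (i j : ι) : Integrable (fun x ↦ x i * x j * B (Pi.single i 1) (Pi.single j 1)) ρ :=
      ((hcoord hρ i).integrable_mul (hcoord hρ j)).mul_const _
    rw [integral_congr_ae (ae_of_all _ fun x ↦ clm_apply_apply_eq_sum_single B x x),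
      integral_finsetSum _ fun i _ ↦ integrable_finsetSum _ fun j _ ↦ hint i j]
    refine Finset.sum_congr rfl fun i _ ↦ ?_
    rw [integral_finsetSum _ fun j _ ↦ hint i j]
    simp_rw [integral_mul_const]
  rw [hexpand hμ, hexpand hν]
  refine Finset.sum_le_sum fun i _ ↦ Finset.sum_le_sum fun j _ ↦ ?_
  rcases eq_or_ne i j with rfl | hij
  · simp_rw [← pow_two, hdiag, le_refl]
  · exact mul_le_mul_of_nonneg_right (hoff i j hij) (hB i j hij)

theorem fderiv_prod_apply_single [DecidableEq ι] {φ : ι → ℝ → ℝ}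
    (hφ : ∀ i, Differentiable ℝ (φ i)) (x : ι → ℝ) (j : ι) :
    fderiv ℝ (fun x : ι → ℝ ↦ ∏ i, φ i (x i)) x (Pi.single j 1)
      = (∏ k ∈ Finset.univ.erase j, φ k (x k)) * deriv (φ j) (x j) := by
  have hfactor (i : ι) : HasFDerivAt (fun x : ι → ℝ ↦ φ i (x i))
      (deriv (φ i) (x i) • ContinuousLinearMap.proj (R := ℝ) (φ := fun _ : ι ↦ ℝ) i) x :=
    (hφ i (x i)).hasDerivAt.comp_hasFDerivAt x (hasFDerivAt_apply i x)
  rw [(HasFDerivAt.finsetProd fun i _ ↦ hfactor i).fderiv]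
  simp only [sum_apply, smul_apply, ContinuousLinearMap.proj_apply, smul_eq_mul, Pi.single_apply,
    mul_ite, mul_one, mul_zero, Finset.sum_ite_eq', Finset.mem_univ, if_true]

theorem fderiv_fderiv_prod_single_nonneg [DecidableEq ι] {φ : ι → ℝ → ℝ}
    (hφ : ∀ i, ContDiff ℝ 2 (φ i)) (hφ_nonneg : ∀ i y, 0 ≤ φ i y) (hφ_anti : ∀ i, Antitone (φ i))
    (x : ι → ℝ) {i j : ι} (hij : i ≠ j) :
    0 ≤ fderiv ℝ (fderiv ℝ fun x : ι → ℝ ↦ ∏ i, φ i (x i)) x (Pi.single i 1) (Pi.single j 1) := by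
  set f : (ι → ℝ) → ℝ := fun x ↦ ∏ i, φ i (x i) with hf
  have hf_contDiff : ContDiff ℝ 2 f :=
    contDiff_prod fun i _ ↦ (hφ i).comp (contDiff_apply ℝ ℝ i)
  have hfderiv_diff : Differentiable ℝ (fderiv ℝ f) :=
    (hf_contDiff.fderiv_right (m := 1) le_rfl).differentiable one_ne_zero
  have hmono : Monotone fun s : ℝ ↦ fderiv ℝ f (x + s • Pi.single i 1) (Pi.single j 1) := by
    intro s s' hss'
    simp only [hf, fderiv_prod_apply_single fun i ↦ (hφ i).differentiable two_ne_zero]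
    have hj (s : ℝ) : (x + s • Pi.single i 1 : ι → ℝ) j = x j := by simp [hij.symm]
    simp only [hj]
    refine mul_le_mul_of_nonpos_right (Finset.prod_le_prod (fun k _ ↦ hφ_nonneg k _) fun k _ ↦
      hφ_anti k ?_) (hφ_anti j).deriv_nonpos
    have : (0 : ι → ℝ) ≤ Pi.single i 1 := Pi.single_nonneg.mpr zero_le_one
    exact add_le_add_right (smul_le_smul_of_nonneg_right hss' this) x k
  have hderiv : HasDerivAt (fun s : ℝ ↦ fderiv ℝ f (x + s • Pi.single i 1) (Pi.single j 1))
      (fderiv ℝ (fderiv ℝ f) x (Pi.single i 1) (Pi.single j 1)) 0 := by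
    have hline := (hfderiv_diff x).hasFDerivAt.hasLineDerivAt (Pi.single i 1)
    simpa using HasDerivAt.clm_apply hline (hasDerivAt_const 0 (Pi.single j 1))
  exact hderiv.deriv ▸ hmono.deriv_nonneg

end Orthant

section SmoothOrthant

/-- A smooth antitone approximation of the indicator of `Iic t`, equal to `1` on `Iic t` and to `0`
on `Ici (t + c⁻¹)` when `0 < c`. -/
noncomputable def smoothIic (t c y : ℝ) : ℝ := Real.smoothTransition (1 - c * (y - t))

theorem smoothIic_nonneg (t c y : ℝ) : 0 ≤ smoothIic t c y := Real.smoothTransition.nonneg _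

theorem smoothIic_le_one (t c y : ℝ) : smoothIic t c y ≤ 1 := Real.smoothTransition.le_one _

theorem contDiff_smoothIic (t c : ℝ) {n : ℕ∞} : ContDiff ℝ n (smoothIic t c) :=
  Real.smoothTransition.contDiff.comp (by fun_prop)

theorem antitone_smoothIic (t : ℝ) {c : ℝ} (hc : 0 ≤ c) : Antitone (smoothIic t c) := by
  intro y z hyz
  refine Real.smoothTransition.monotone (sub_le_sub_left ?_ 1)
  gcongr

theorem hasBoundedDerivs_smoothIic (t c : ℝ) (n : ℕ) : HasBoundedDerivs n (smoothIic t c) := by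
  have hcomp : smoothIic t c = fun y ↦ Real.smoothTransition
      (((-c) • ContinuousLinearMap.id ℝ ℝ) y - -(1 + c * t)) := by
    ext y
    simp only [smoothIic, smul_apply, ContinuousLinearMap.id_apply, smul_eq_mul]
    ring_nf
  rw [hcomp]
  exact (hasBoundedDerivs_smoothTransition.comp_sub_const _).comp_continuousLinearMap _

theorem tendsto_smoothIic (t y : ℝ) :
    Tendsto (fun n : ℕ ↦ smoothIic t n y) atTop (𝓝 (if y ≤ t then 1 else 0)) := by
  refine tendsto_const_nhds.congr' ?_
  split_ifs with hy
  · refine .of_forall fun n ↦ (Real.smoothTransition.one_of_one_le ?_).symm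
    linarith [mul_nonneg n.cast_nonneg (sub_nonneg.mpr hy)]
  · have hgap : 0 < y - t := sub_pos.mpr (not_le.mp hy)
    filter_upwards [(tendsto_natCast_atTop_atTop.atTop_mul_const hgap).eventually_ge_atTop 1]
      with n hn
    exact (Real.smoothTransition.zero_of_nonpos (by linarith)).symm

variable {ι : Type*} [Fintype ι]

theorem hasBoundedDerivs_prod_smoothIic (t : ι → ℝ) (c : ℝ) (n : ℕ) :
    HasBoundedDerivs n fun x : ι → ℝ ↦ ∏ i, smoothIic (t i) c (x i) :=
  .prod _ fun i ↦ (hasBoundedDerivs_smoothIic (t i) c n).comp_continuousLinearMap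
    (ContinuousLinearMap.proj (R := ℝ) (φ := fun _ : ι ↦ ℝ) i)

theorem tendsto_integral_prod_smoothIic (μ : Measure (ι → ℝ)) [IsFiniteMeasure μ] (t : ι → ℝ) :
    Tendsto (fun n : ℕ ↦ ∫ x, ∏ i, smoothIic (t i) n (x i) ∂μ) atTop (𝓝 (μ.real (Iic t))) := by
  rw [← integral_indicator_one measurableSet_Iic]
  refine tendsto_integral_of_dominated_convergence (fun _ ↦ 1)
    (fun n ↦ (hasBoundedDerivs_prod_smoothIic t n 0).contDiff.continuous.aestronglyMeasurable)
    (integrable_const 1) (fun n ↦ ae_of_all _ fun x ↦ ?_) (ae_of_all _ fun x ↦ ?_)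
  · rw [Real.norm_of_nonneg (Finset.prod_nonneg fun i _ ↦ smoothIic_nonneg _ _ _)]
    exact Finset.prod_le_one (fun i _ ↦ smoothIic_nonneg _ _ _) fun i _ ↦ smoothIic_le_one _ _ _
  · have hprod := tendsto_finsetProd Finset.univ fun i _ ↦ tendsto_smoothIic (t i) (x i)
    by_cases hx : x ∈ Iic t
    · simpa only [indicator_of_mem hx, Pi.one_apply, Finset.prod_boole, Finset.mem_univ,
        true_imp_iff, if_pos (Pi.le_def.mp hx)] using hprod
    · simpa only [indicator_of_notMem hx, Finset.prod_boole, Finset.mem_univ, true_imp_iff,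
        if_neg (mt Pi.le_def.mpr hx)] using hprod

end SmoothOrthant

section Slepian

variable {ι : Type*}

theorem measure_Iic_le_of_integral_mul_le [Fintype ι] {μ ν : Measure (ι → ℝ)} [IsGaussian μ]
    [IsGaussian ν] (hμ : ∫ x, x ∂μ = 0) (hν : ∫ x, x ∂ν = 0)
    (hdiag : ∀ i, ∫ x, x i ^ 2 ∂μ = ∫ x, x i ^ 2 ∂ν)
    (hoff : ∀ i j, i ≠ j → ∫ x, x i * x j ∂μ ≤ ∫ x, x i * x j ∂ν) (t : ι → ℝ) :
    μ (Iic t) ≤ ν (Iic t) := by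
  classical
  rw [← ENNReal.toReal_le_toReal (measure_ne_top _ _) (measure_ne_top _ _)]
  refine le_of_tendsto_of_tendsto' (tendsto_integral_prod_smoothIic μ t)
    (tendsto_integral_prod_smoothIic ν t) fun n ↦ ?_
  refine integral_le_integral_of_forall_integral_fderiv_fderiv_le hμ hν
    (hasBoundedDerivs_prod_smoothIic t n 3) fun x ↦ ?_
  refine integral_clm_apply_self_le_of_integral_mul_le (IsGaussian.memLp_id μ 2 (by simp))
    (IsGaussian.memLp_id ν 2 (by simp)) hdiag hoff fun i j hij ↦ ?_
  exact fderiv_fderiv_prod_single_nonneg (fun i ↦ contDiff_smoothIic (t i) n)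
    (fun i y ↦ smoothIic_nonneg (t i) n y) (fun i ↦ antitone_smoothIic (t i) n.cast_nonneg) x hij

variable {Ω Ω' : Type*} [MeasurableSpace Ω] [MeasurableSpace Ω'] {P : Measure Ω} {P' : Measure Ω'}

theorem integral_id_map_eq_zero [Fintype ι] {X : ι → Ω → ℝ}
    (hX : HasGaussianLaw (fun ω i ↦ X i ω) P) (hX_mean : ∀ i, ∫ ω, X i ω ∂P = 0) :
    ∫ x, x ∂(P.map fun ω i ↦ X i ω) = 0 := by
  rw [integral_map hX.aemeasurable (by fun_prop)]
  ext i
  rw [eval_integral fun i ↦ (hX.eval i).integrable, hX_mean, Pi.zero_apply]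

theorem measure_forall_le_le_of_integral_eq_zero [Finite ι] {X : ι → Ω → ℝ} {Y : ι → Ω' → ℝ}
    (hX : HasGaussianLaw (fun ω i ↦ X i ω) P) (hY : HasGaussianLaw (fun ω i ↦ Y i ω) P')
    (hX_mean : ∀ i, ∫ ω, X i ω ∂P = 0) (hY_mean : ∀ i, ∫ ω, Y i ω ∂P' = 0)
    (hdiag : ∀ i, ∫ ω, X i ω ^ 2 ∂P = ∫ ω, Y i ω ^ 2 ∂P')
    (hoff : ∀ i j, i ≠ j → ∫ ω, X i ω * X j ω ∂P ≤ ∫ ω, Y i ω * Y j ω ∂P') (t : ι → ℝ) :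
    P {ω | ∀ i, X i ω ≤ t i} ≤ P' {ω | ∀ i, Y i ω ≤ t i} := by
  have := Fintype.ofFinite ι
  have := hX.isGaussian_map
  have := hY.isGaussian_map
  have hX_ae := hX.aemeasurable
  have hY_ae := hY.aemeasurable
  have hIic := measure_Iic_le_of_integral_mul_le (μ := P.map fun ω i ↦ X i ω)
    (ν := P'.map fun ω i ↦ Y i ω)
    (integral_id_map_eq_zero hX hX_mean) (integral_id_map_eq_zero hY hY_mean)
    (fun i ↦ by
      have hsq : Continuous fun x : ι → ℝ ↦ x i ^ 2 := by fun_prop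
      rw [integral_map hX_ae hsq.aestronglyMeasurable, integral_map hY_ae hsq.aestronglyMeasurable]
      exact hdiag i)
    (fun i j hij ↦ by
      rw [integral_map hX_ae (by fun_prop), integral_map hY_ae (by fun_prop)]
      exact hoff i j hij) t
  rwa [Measure.map_apply_of_aemeasurable hX_ae measurableSet_Iic,
    Measure.map_apply_of_aemeasurable hY_ae measurableSet_Iic] at hIic

theorem hasGaussianLaw_sub_const {E : Type*} [NormedAddCommGroup E] [NormedSpace ℝ E]
    [MeasurableSpace E] [BorelSpace E] {X : Ω → E} (hX : HasGaussianLaw X P) (c : E) :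
    HasGaussianLaw (fun ω ↦ X ω - c) P where
  isGaussian_map := by
    have := hX.isGaussian_map
    have hmap : (P.map X).map (fun x ↦ x - c) = P.map fun ω ↦ X ω - c :=
      AEMeasurable.map_map_of_aemeasurable (by fun_prop) hX.aemeasurable
    rw [← hmap]
    infer_instance

theorem integral_sub_integral_self [IsProbabilityMeasure P] (Z : Ω → ℝ) :
    ∫ ω, (Z ω - P[Z]) ∂P = 0 := by
  simpa only [average_eq_integral] using integral_sub_average P Z

theorem slepian_lemma_general [Finite ι] {X : ι → Ω → ℝ} {Y : ι → Ω' → ℝ}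
    (hX : HasGaussianLaw (fun ω i ↦ X i ω) P) (hY : HasGaussianLaw (fun ω i ↦ Y i ω) P')
    (hmean : ∀ i, P'[Y i] ≤ P[X i]) (hvar : ∀ i, Var[X i; P] = Var[Y i; P'])
    (hcov : ∀ i j, i ≠ j → cov[X i, X j; P] ≤ cov[Y i, Y j; P']) (t : ι → ℝ) :
    P {ω | ∀ i, X i ω ≤ t i} ≤ P' {ω | ∀ i, Y i ω ≤ t i} := by
  have := Fintype.ofFinite ι
  have := hX.isProbabilityMeasure
  have := hY.isProbabilityMeasure
  have hvarX (i : ι) : Var[X i; P] = ∫ ω, (X i ω - P[X i]) ^ 2 ∂P :=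
    variance_eq_integral (hX.eval i).aemeasurable
  have hvarY (i : ι) : Var[Y i; P'] = ∫ ω, (Y i ω - P'[Y i]) ^ 2 ∂P' :=
    variance_eq_integral (hY.eval i).aemeasurable
  have hcentered := measure_forall_le_le_of_integral_eq_zero
    (X := fun i ω ↦ X i ω - P[X i]) (Y := fun i ω ↦ Y i ω - P'[Y i])
    (hasGaussianLaw_sub_const hX fun i ↦ P[X i]) (hasGaussianLaw_sub_const hY fun i ↦ P'[Y i])
    (fun i ↦ integral_sub_integral_self (X i)) (fun i ↦ integral_sub_integral_self (Y i))
    (fun i ↦ by rw [← hvarX, ← hvarY, hvar])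
    (fun i j hij ↦ by simpa only [covariance] using hcov i j hij) fun i ↦ t i - P[X i]
  simp_rw [sub_le_sub_iff_right] at hcentered
  refine hcentered.trans (measure_mono fun ω hω i ↦ ?_)
  linarith [hω i, hmean i]

end Slepian

namespace IsCenteredGaussianVec

variable {Ω : Type*} [MeasurableSpace Ω] {P : Measure Ω} {n : ℕ} {X : Fin n → Ω → ℝ}

theorem map_eval_eq_gaussianReal (hX : IsCenteredGaussianVec P X) (i : Fin n) :
    P.map (X i) = gaussianReal 0 (∫ ω, X i ω ^ 2 ∂P).toNNReal := by
  simpa only [Pi.single_apply, ite_mul, one_mul, zero_mul, Finset.sum_ite_eq', Finset.mem_univ,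
    if_true] using hX (Pi.single i 1)

theorem hasGaussianLaw_eval (hX : IsCenteredGaussianVec P X) (i : Fin n) :
    HasGaussianLaw (X i) P where
  isGaussian_map := by
    rw [hX.map_eval_eq_gaussianReal i]
    infer_instance

theorem hasGaussianLaw (hX : IsCenteredGaussianVec P X) :
    HasGaussianLaw (fun ω i ↦ X i ω) P where
  isGaussian_map := by
    have hX_ae : AEMeasurable (fun ω i ↦ X i ω) P :=
      aemeasurable_pi_lambda _ fun i ↦ (hX.hasGaussianLaw_eval i).aemeasurable
    refine isGaussian_of_map_eq_gaussianReal fun L ↦ ?_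
    have hL : L ∘ (fun ω i ↦ X i ω) = fun ω ↦ ∑ i, L (Pi.single i 1) * X i ω := by
      ext ω
      rw [Function.comp_apply, pi_eq_sum_univ' (fun i ↦ X i ω), map_sum]
      simp_rw [map_smul, smul_eq_mul, mul_comm]
    rw [AEMeasurable.map_map_of_aemeasurable (by fun_prop) hX_ae, hL]
    exact ⟨0, _, hX _⟩

theorem integral_eq_zero (hX : IsCenteredGaussianVec P X) (i : Fin n) : P[X i] = 0 := by
  have hmean := integral_map (hX.hasGaussianLaw_eval i).aemeasurable
    (aestronglyMeasurable_id (α := ℝ))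
  simpa only [id_eq, hX.map_eval_eq_gaussianReal i, integral_id_gaussianReal] using hmean.symm

theorem variance_eq (hX : IsCenteredGaussianVec P X) (i : Fin n) :
    Var[X i; P] = ∫ ω, X i ω ^ 2 ∂P :=
  variance_of_integral_eq_zero (hX.hasGaussianLaw_eval i).aemeasurable (hX.integral_eq_zero i)

theorem covariance_eq (hX : IsCenteredGaussianVec P X) (i j : Fin n) :
    cov[X i, X j; P] = ∫ ω, X i ω * X j ω ∂P := by
  simp_rw [covariance, hX.integral_eq_zero, sub_zero]

end IsCenteredGaussianVec

/-- Slepian's lemma: if `X`, `Y` are centered Gaussian vectors with equal variances and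
`Cov(X_i,X_j) ≤ Cov(Y_i,Y_j)` for all `i, j`, then for every `t_1,…,t_n`,
`P(∀ i, X_i ≤ t_i) ≤ P(∀ i, Y_i ≤ t_i)`; in particular
`P(max_i X_i ≤ t) ≤ P(max_i Y_i ≤ t)` for all `t`. -/
theorem slepian_lemma {Ω : Type*} [MeasurableSpace Ω] (P : Measure Ω)
    [IsProbabilityMeasure P] (n : ℕ) (X Y : Fin n → Ω → ℝ)
    (hXm : ∀ i, Measurable (X i)) (hYm : ∀ i, Measurable (Y i))
    (hX : IsCenteredGaussianVec P X) (hY : IsCenteredGaussianVec P Y)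
    (hvar : ∀ i, ∫ ω, (X i ω) ^ 2 ∂P = ∫ ω, (Y i ω) ^ 2 ∂P)
    (hcov : ∀ i j, ∫ ω, X i ω * X j ω ∂P ≤ ∫ ω, Y i ω * Y j ω ∂P) :
    (∀ t : Fin n → ℝ, P {ω | ∀ i, X i ω ≤ t i} ≤ P {ω | ∀ i, Y i ω ≤ t i}) ∧
    (∀ t : ℝ, P {ω | ∀ i, X i ω ≤ t} ≤ P {ω | ∀ i, Y i ω ≤ t}) := by
  have horthant (t : Fin n → ℝ) : P {ω | ∀ i, X i ω ≤ t i} ≤ P {ω | ∀ i, Y i ω ≤ t i} :=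
    slepian_lemma_general hX.hasGaussianLaw hY.hasGaussianLaw
      (fun i ↦ (hY.integral_eq_zero i).trans_le (hX.integral_eq_zero i).ge)
      (fun i ↦ by rw [hX.variance_eq, hY.variance_eq, hvar])
      (fun i j _ ↦ by rw [hX.covariance_eq, hY.covariance_eq]; exact hcov i j) t
  exact ⟨horthant, fun t ↦ horthant fun _ ↦ t⟩
end
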